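/- arXiv:math/0101161 — 8 statements merged into one kernel-verified Lean document; each statement's English description precedes it below -/
import Mathlib

section
/- The set of lattice points α in the D₄ root lattice M = {α ∈ ℤ⁴ : α₁+α₂+α₃+α₄ is even} satisfying ⟨τ,α⟩ ≥ −1 for every τ ∈ S and ⟨τ,α⟩ ≥ −2 for every τ ∈ R is exactly {0} ∪ D₄, where D₄ = {±e_i ± e_j : 1 ≤ i < j ≤ 4}; in particular this set has exactly 25 elements. -/
/-!
Statement 0: The set of lattice points α in the D₄ root lattice
M = {α ∈ ℤ⁴ : α₁+α₂+α₃+α₄ even} satisfying ⟨τ,α⟩ ≥ −1 for all τ ∈ S and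
⟨τ,α⟩ ≥ −2 for all τ ∈ R is exactly {0} ∪ D₄, and has 25 elements.
-/

noncomputable section

namespace Stmt0

/-- The standard inner product on ℚ⁴. -/
def inn (x y : Fin 4 → ℚ) : ℚ := ∑ i, x i * y i

/-- The standard basis vectors of ℚ⁴. -/
def e (i : Fin 4) : Fin 4 → ℚ := Pi.single i 1

/-- The 24 roots of `D₄`: `±e_i ± e_j` with `i < j`. -/
def D4 : Set (Fin 4 → ℚ) :=
  {τ | ∃ i j : Fin 4, i < j ∧
    (τ = e i + e j ∨ τ = e i - e j ∨ τ = -e i + e j ∨ τ = -e i - e j)}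

/-- The set `S`: the vectors `±e_i` together with `(±e₁±e₂±e₃±e₄)/2`. -/
def S : Set (Fin 4 → ℚ) :=
  {τ | (∃ i, τ = e i ∨ τ = -e i) ∨
    ∃ s : Fin 4 → Bool, τ = (1/2 : ℚ) • ∑ i, (if s i then (1:ℚ) else -1) • e i}

/-- The set `R`: the vectors `±e_i ± e_j`, `i < j`. -/
def R : Set (Fin 4 → ℚ) := D4

/-- The root lattice of `D₄`: integral vectors with even coordinate sum. -/
def M : Set (Fin 4 → ℚ) :=
  {α | (∀ i, ∃ n : ℤ, α i = n) ∧ ∃ m : ℤ, (∑ i, α i) = 2 * m}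

/-!
The inequalities from `S` say that `|αᵢ| ≤ 1` for every `i` and, choosing the signs opposite to
those of `α`, that `∑ |αᵢ| ≤ 2`; those from `R` then follow, since each vector of `R` is a sum of
two vectors `±eᵢ`. For an integral `α` the sum `∑ |αᵢ|` has the parity of `∑ αᵢ`, so on the
lattice it is `0` or `2`: either `α = 0`, or exactly two coordinates are `±1` and the others vanish.
-/

section AbsoluteSums

variable {ι : Type*} [Fintype ι]

lemma forall_neg_le_sum_sign_mul_iff {K : Type*} [Ring K] [LinearOrder K]
    [IsOrderedAddMonoid K] (x : ι → K) (c : K) :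
    (∀ s : ι → Bool, -c ≤ ∑ i, (if s i then 1 else -1) * x i) ↔ ∑ i, |x i| ≤ c := by
  constructor
  · intro h
    have hopposite (i : ι) : (if decide (x i < 0) then 1 else -1) * x i = -|x i| := by
      by_cases hi : x i < 0
      · simp [hi, abs_of_neg hi]
      · simp [hi, abs_of_nonneg (not_lt.mp hi)]
    have hneg := h fun i => decide (x i < 0)
    simp only [hopposite, Finset.sum_neg_distrib] at hneg
    exact neg_le_neg_iff.mp hneg
  · intro h s
    calc
      -c ≤ -∑ i, |x i| := neg_le_neg h
      _ = ∑ i, -|x i| := Finset.sum_neg_distrib _ |>.symm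
      _ ≤ ∑ i, (if s i then 1 else -1) * x i := Finset.sum_le_sum fun i _ => by
        cases s i
        · simpa using le_abs_self (x i)
        · simpa using neg_abs_le (x i)

lemma sum_abs_eq_ncard_support {n : ι → ℤ} (hn : ∀ i, |n i| ≤ 1) :
    ∑ i, |n i| = (Function.support n).ncard := by
  have habs (i : ι) : |n i| = if n i ≠ 0 then 1 else 0 := by
    by_cases hi : n i = 0
    · simp [hi]
    · simpa [hi] using (hn i).antisymm (Int.one_le_abs hi)
  have hsupport : Function.support n = (Finset.univ.filter (n · ≠ 0) : Finset ι) := by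
    ext; simp
  rw [hsupport, Set.ncard_coe_finset, ← Finset.sum_boole]
  exact Finset.sum_congr rfl fun i _ => habs i

lemma even_sum_abs_iff (n : ι → ℤ) : Even (∑ i, |n i|) ↔ Even (∑ i, n i) := by
  rw [← Int.even_sub, ← Finset.sum_sub_distrib]
  exact Finset.even_sum _ fun i _ => Int.even_sub.mpr even_abs

end AbsoluteSums

section IntCastVec

variable {ι : Type*}

/-- The coordinatewise inclusion of `ℤ^ι` into `ℚ^ι`, which carries integral vectors to the ambient
space of `M` and `D4`. -/
def intCastVec (n : ι → ℤ) : ι → ℚ := fun i => n i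

lemma intCastVec_zero : intCastVec (0 : ι → ℤ) = 0 := by
  ext; simp [intCastVec]

lemma intCastVec_injective : Function.Injective (intCastVec : (ι → ℤ) → ι → ℚ) :=
  Int.cast_injective.comp_left

lemma intCastVec_coord_bounds_iff [Fintype ι] (n : ι → ℤ) :
    (∀ i, |intCastVec n i| ≤ 1) ∧ ∑ i, |intCastVec n i| ≤ 2 ↔
      (∀ i, |n i| ≤ 1) ∧ ∑ i, |n i| ≤ 2 := by
  simp only [intCastVec]
  norm_cast

end IntCastVec

section DRoots

variable {ι : Type*}

/-- The parameters of a root `±eᵢ ± eⱼ` of type `D`: the positions `i < j` and the two signs.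
Ordering the positions makes the parametrization `dRoot` injective. -/
abbrev DRootIndex (ι : Type*) [LT ι] : Type _ :=
  {p : ι × ι // p.1 < p.2} × ℤˣ × ℤˣ

variable [LinearOrder ι]

/-- The root `±eᵢ ± eⱼ` of type `D` with the given positions and signs, as an integral vector. -/
def dRoot (r : DRootIndex ι) : ι → ℤ :=
  Pi.single r.1.1.1 (r.2.1 : ℤ) + Pi.single r.1.1.2 (r.2.2 : ℤ)

lemma dRoot_apply_fst (r : DRootIndex ι) : dRoot r r.1.1.1 = r.2.1 := by
  simp [dRoot, r.1.2.ne]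

lemma dRoot_apply_snd (r : DRootIndex ι) : dRoot r r.1.1.2 = r.2.2 := by
  simp [dRoot, r.1.2.ne']

lemma dRoot_apply_of_ne (r : DRootIndex ι) {k : ι} (hfst : k ≠ r.1.1.1) (hsnd : k ≠ r.1.1.2) :
    dRoot r k = 0 := by
  simp [dRoot, hfst, hsnd]

lemma support_dRoot (r : DRootIndex ι) : Function.support (dRoot r) = {r.1.1.1, r.1.1.2} := by
  ext k
  constructor
  · contrapose!
    intro hk
    simp only [Set.mem_insert_iff, Set.mem_singleton_iff, not_or] at hk
    simpa using dRoot_apply_of_ne r hk.1 hk.2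
  · rintro (rfl | rfl)
    · simp [dRoot_apply_fst]
    · simp [dRoot_apply_snd]

lemma dRoot_injective : Function.Injective (dRoot : DRootIndex ι → ι → ℤ) := by
  intro r r' h
  have hpositions : r.1 = r'.1 := by
    have hsupport : ({r.1.1.1, r.1.1.2} : Set ι) = {r'.1.1.1, r'.1.1.2} := by
      rw [← support_dRoot, ← support_dRoot, h]
    rcases Set.pair_eq_pair_iff.mp hsupport with ⟨hfst, hsnd⟩ | ⟨hfst, hsnd⟩
    · exact Subtype.ext (Prod.ext hfst hsnd)
    · exact absurd (hsnd ▸ hfst ▸ r.1.2) r'.1.2.asymm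
  have hfst : r.2.1 = r'.2.1 := by
    rw [Units.ext_iff, ← dRoot_apply_fst, ← dRoot_apply_fst, h, hpositions]
  have hsnd : r.2.2 = r'.2.2 := by
    rw [Units.ext_iff, ← dRoot_apply_snd, ← dRoot_apply_snd, h, hpositions]
  exact Prod.ext hpositions (Prod.ext hfst hsnd)

lemma zero_notMem_range_dRoot : (0 : ι → ℤ) ∉ Set.range dRoot := by
  rintro ⟨r, hr⟩
  have hfst : dRoot r r.1.1.1 = 0 := congrFun hr _
  exact r.2.1.ne_zero (dRoot_apply_fst r ▸ hfst)

lemma abs_dRoot_apply_le_one (r : DRootIndex ι) (k : ι) : |dRoot r k| ≤ 1 := by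
  by_cases hfst : k = r.1.1.1
  · rw [hfst, dRoot_apply_fst, Int.isUnit_iff_abs_eq.mp r.2.1.isUnit]
  by_cases hsnd : k = r.1.1.2
  · rw [hsnd, dRoot_apply_snd, Int.isUnit_iff_abs_eq.mp r.2.2.isUnit]
  simp [dRoot_apply_of_ne r hfst hsnd]

lemma mem_range_dRoot_of_support_eq_pair {n : ι → ℤ} (hn : ∀ i, |n i| ≤ 1) {i j : ι} (hij : i < j)
    (hsupport : Function.support n = {i, j}) : n ∈ Set.range dRoot := by
  have isUnit_of_mem {k : ι} (hk : k ∈ Function.support n) : IsUnit (n k) :=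
    Int.isUnit_iff_abs_eq.mpr ((hn k).antisymm (Int.one_le_abs hk))
  obtain ⟨s, hs⟩ := isUnit_of_mem (k := i) (by simp [hsupport])
  obtain ⟨t, ht⟩ := isUnit_of_mem (k := j) (by simp [hsupport])
  refine ⟨(⟨(i, j), hij⟩, s, t), funext fun k => ?_⟩
  by_cases hk : k ∈ Function.support n
  · rcases hsupport ▸ hk with rfl | rfl
    · exact (dRoot_apply_fst _).trans hs
    · exact (dRoot_apply_snd _).trans ht
  · have hne : k ≠ i ∧ k ≠ j := by simpa [hsupport] using hk
    rw [dRoot_apply_of_ne _ hne.1 hne.2, Function.notMem_support.mp hk]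

variable [Fintype ι]

lemma sum_abs_dRoot (r : DRootIndex ι) : ∑ k, |dRoot r k| = 2 := by
  rw [Fintype.sum_eq_add _ _ r.1.2.ne fun k hk => by rw [dRoot_apply_of_ne r hk.1 hk.2, abs_zero],
    dRoot_apply_fst, dRoot_apply_snd, Int.isUnit_iff_abs_eq.mp r.2.1.isUnit,
    Int.isUnit_iff_abs_eq.mp r.2.2.isUnit]
  norm_num

lemma mem_range_dRoot_iff (n : ι → ℤ) :
    n ∈ Set.range dRoot ↔ (∀ i, |n i| ≤ 1) ∧ ∑ i, |n i| = 2 := by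
  constructor
  · rintro ⟨r, rfl⟩
    exact ⟨abs_dRoot_apply_le_one r, sum_abs_dRoot r⟩
  · rintro ⟨hle, hsum⟩
    rw [sum_abs_eq_ncard_support hle] at hsum
    obtain ⟨i, j, hne, hsupport⟩ := Set.ncard_eq_two.mp (by exact_mod_cast hsum)
    rcases hne.lt_or_gt with hij | hji
    · exact mem_range_dRoot_of_support_eq_pair hle hij hsupport
    · exact mem_range_dRoot_of_support_eq_pair hle hji (hsupport.trans (Set.pair_comm i j))

lemma eq_zero_or_mem_range_dRoot_iff (n : ι → ℤ) :
    n = 0 ∨ n ∈ Set.range dRoot ↔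
      Even (∑ i, n i) ∧ (∀ i, |n i| ≤ 1) ∧ ∑ i, |n i| ≤ 2 := by
  rw [mem_range_dRoot_iff, ← even_sum_abs_iff]
  constructor
  · rintro (rfl | ⟨hle, hsum⟩)
    · simp
    · exact ⟨hsum ▸ even_two, hle, hsum.le⟩
  · rintro ⟨heven, hle, hsum⟩
    have hnonneg : 0 ≤ ∑ i, |n i| := Finset.sum_nonneg fun i _ => abs_nonneg (n i)
    obtain hzero | htwo : ∑ i, |n i| = 0 ∨ ∑ i, |n i| = 2 := by grind
    · left
      simpa [Finset.sum_eq_zero_iff_of_nonneg, funext_iff] using hzero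
    · exact .inr ⟨hle, htwo⟩

end DRoots

lemma inn_eq_dotProduct (x y : Fin 4 → ℚ) : inn x y = x ⬝ᵥ y := rfl

lemma inn_e (i : Fin 4) (α : Fin 4 → ℚ) : inn (e i) α = α i :=
  single_one_dotProduct i α

lemma inn_neg_e (i : Fin 4) (α : Fin 4 → ℚ) : inn (-e i) α = -α i := by
  rw [inn_eq_dotProduct, neg_dotProduct, ← inn_eq_dotProduct, inn_e]

lemma inn_half_smul_sum (c α : Fin 4 → ℚ) :
    inn ((1 / 2 : ℚ) • ∑ i, c i • e i) α = (∑ i, c i * α i) / 2 := by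
  simp only [inn_eq_dotProduct, smul_dotProduct, sum_dotProduct, e, single_one_dotProduct,
    smul_eq_mul]
  ring

lemma forall_mem_S_neg_one_le_inn_iff (α : Fin 4 → ℚ) :
    (∀ τ ∈ S, -1 ≤ inn τ α) ↔ (∀ i, |α i| ≤ 1) ∧ ∑ i, |α i| ≤ 2 := by
  rw [← forall_neg_le_sum_sign_mul_iff]
  constructor
  · refine fun h => ⟨fun i => abs_le.mpr ⟨?_, ?_⟩, fun s => ?_⟩
    · simpa only [inn_e] using h (e i) (.inl ⟨i, .inl rfl⟩)
    · simpa only [inn_neg_e, neg_le_neg_iff] using h (-e i) (.inl ⟨i, .inr rfl⟩)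
    · have hs := h _ (.inr ⟨s, rfl⟩)
      rw [inn_half_smul_sum] at hs
      linarith
  · rintro ⟨hcoord, hsign⟩ τ (⟨i, rfl | rfl⟩ | ⟨s, rfl⟩)
    · rw [inn_e]
      exact (abs_le.mp (hcoord i)).1
    · rw [inn_neg_e]
      exact neg_le_neg (abs_le.mp (hcoord i)).2
    · rw [inn_half_smul_sum]
      linarith [hsign s]

lemma neg_two_le_inn_of_mem_R {α τ : Fin 4 → ℚ} (hα : ∀ i, |α i| ≤ 1) (hτ : τ ∈ R) :
    -2 ≤ inn τ α := by
  obtain ⟨i, j, -, hτ⟩ := hτ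
  obtain ⟨hi, hi'⟩ := abs_le.mp (hα i)
  obtain ⟨hj, hj'⟩ := abs_le.mp (hα j)
  rcases hτ with rfl | rfl | rfl | rfl <;>
    simp only [inn_eq_dotProduct, add_dotProduct, sub_dotProduct, neg_dotProduct, e,
      single_one_dotProduct] <;>
    linarith

lemma M_eq_image_intCastVec : M = intCastVec '' {n : Fin 4 → ℤ | Even (∑ i, n i)} := by
  ext α
  constructor
  · rintro ⟨hint, m, hm⟩
    choose n hn using hint
    refine ⟨n, even_iff_two_dvd.mpr ⟨m, ?_⟩, (funext hn).symm⟩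
    simp only [hn] at hm
    exact_mod_cast hm
  · rintro ⟨n, heven, rfl⟩
    obtain ⟨m, hm⟩ := even_iff_two_dvd.mp heven
    refine ⟨fun i => ⟨n i, rfl⟩, m, ?_⟩
    simp only [intCastVec]
    exact_mod_cast hm

lemma intCastVec_dRoot (r : DRootIndex (Fin 4)) :
    intCastVec (dRoot r) = ((r.2.1 : ℤ) : ℚ) • e r.1.1.1 + ((r.2.2 : ℤ) : ℚ) • e r.1.1.2 := by
  ext k
  simp [intCastVec, dRoot, e, Pi.single_apply]

lemma D4_eq_image_range_dRoot : D4 = intCastVec '' Set.range dRoot := by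
  rw [← Set.range_comp]
  ext α
  constructor
  · rintro ⟨i, j, hij, rfl | rfl | rfl | rfl⟩
    · exact ⟨(⟨(i, j), hij⟩, 1, 1), by simp [intCastVec_dRoot]⟩
    · exact ⟨(⟨(i, j), hij⟩, 1, -1), by simp [intCastVec_dRoot, sub_eq_add_neg]⟩
    · exact ⟨(⟨(i, j), hij⟩, -1, 1), by simp [intCastVec_dRoot]⟩
    · exact ⟨(⟨(i, j), hij⟩, -1, -1), by simp [intCastVec_dRoot, sub_eq_add_neg]⟩
  · rintro ⟨⟨⟨⟨i, j⟩, hij⟩, s, t⟩, rfl⟩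
    refine ⟨i, j, hij, ?_⟩
    rcases Int.units_eq_one_or s with rfl | rfl <;> rcases Int.units_eq_one_or t with rfl | rfl <;>
      simp [intCastVec_dRoot, sub_eq_add_neg]

lemma insert_zero_D4_eq_image :
    insert 0 D4 = intCastVec '' insert 0 (Set.range (dRoot : DRootIndex (Fin 4) → Fin 4 → ℤ)) := by
  rw [Set.image_insert_eq, intCastVec_zero, D4_eq_image_range_dRoot]

lemma ncard_insert_zero_D4 : (insert 0 D4).ncard = 25 := by
  have hcard : Nat.card (DRootIndex (Fin 4)) = 24 := by
    rw [Nat.card_eq_fintype_card]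
    decide
  rw [insert_zero_D4_eq_image, Set.ncard_image_of_injective _ intCastVec_injective,
    Set.ncard_insert_of_notMem zero_notMem_range_dRoot (Set.finite_range dRoot),
    Set.ncard_range_of_injective dRoot_injective, hcard]

lemma forall_mem_S_and_forall_mem_R_iff (α : Fin 4 → ℚ) :
    ((∀ τ ∈ S, -1 ≤ inn τ α) ∧ ∀ τ ∈ R, -2 ≤ inn τ α) ↔ (∀ i, |α i| ≤ 1) ∧ ∑ i, |α i| ≤ 2 := by
  rw [forall_mem_S_neg_one_le_inn_iff]
  exact and_iff_left_of_imp fun hα _ hτ => neg_two_le_inn_of_mem_R hα.1 hτ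

theorem statement0 :
    {α ∈ M | (∀ τ ∈ S, -1 ≤ inn τ α) ∧ ∀ τ ∈ R, -2 ≤ inn τ α} = insert 0 D4 ∧
    Set.ncard {α ∈ M | (∀ τ ∈ S, -1 ≤ inn τ α) ∧ ∀ τ ∈ R, -2 ≤ inn τ α} = 25 := by
  have hset : {α ∈ M | (∀ τ ∈ S, -1 ≤ inn τ α) ∧ ∀ τ ∈ R, -2 ≤ inn τ α} = insert 0 D4 := by
    rw [insert_zero_D4_eq_image, M_eq_image_intCastVec]
    ext α
    constructor
    · rintro ⟨⟨n, heven, rfl⟩, hn⟩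
      rw [forall_mem_S_and_forall_mem_R_iff, intCastVec_coord_bounds_iff] at hn
      exact Set.mem_image_of_mem _ ((eq_zero_or_mem_range_dRoot_iff n).mpr ⟨heven, hn⟩)
    · rintro ⟨n, hn, rfl⟩
      obtain ⟨heven, hbounds⟩ := (eq_zero_or_mem_range_dRoot_iff n).mp hn
      refine ⟨Set.mem_image_of_mem _ heven, ?_⟩
      rwa [forall_mem_S_and_forall_mem_R_iff, intCastVec_coord_bounds_iff]
  exact ⟨hset, hset ▸ ncard_insert_zero_D4⟩

end Stmt0
end
end

section
/- The subspace U ∩ 𝔪³ of the polynomial ring ℂ[λ,μ,ν,ρ], consisting of those ℂ-linear combinations of the 25 monomials λμνρ²·f_α (α ∈ D₄ ∪ {0}) that vanish to order at least 3 at the point e = (1,1,1,1) (i.e., lie in the cube of the maximal ideal of e), has dimension exactly 10 over ℂ. -/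
/-!
Statement 1: The subspace `U ∩ 𝔪³` of `ℂ[λ,μ,ν,ρ]`, consisting of linear
combinations of the 25 monomials `λμνρ²·f_α` (α ∈ D₄ ∪ {0}) vanishing to
order ≥ 3 at `e = (1,1,1,1)`, has dimension exactly 10 over ℂ.
-/

noncomputable section

namespace Stmt1

open MvPolynomial

/-- The polynomial ring `ℂ[λ,μ,ν,ρ]` with `λ = X 0`, `μ = X 1`, `ν = X 2`, `ρ = X 3`. -/
abbrev P4 : Type := MvPolynomial (Fin 4) ℂ

/-- `α` is a root of `D₄`, i.e. of the form `±e_i ± e_j` with `i < j`. -/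
def IsD4Root (α : Fin 4 → ℤ) : Prop :=
  ∃ i j : Fin 4, i < j ∧
    (α = Pi.single i 1 + Pi.single j 1 ∨ α = Pi.single i 1 - Pi.single j 1 ∨
     α = -Pi.single i 1 + Pi.single j 1 ∨ α = -Pi.single i 1 - Pi.single j 1)

/-- The lattice vector `α = a(e₁−e₂) + b(e₃+e₄) + c(e₃−e₄) + d(e₂−e₃)`. -/
def toRoot (a b c d : ℤ) : Fin 4 → ℤ := ![a, -a + d, b + c - d, b - c]

/-- The monomial `λμνρ² · f_α = λ^(a+1) μ^(b+1) ν^(c+1) ρ^(d+2)` where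
`f_α = λᵃμᵇνᶜρᵈ` for `α = a(e₁−e₂) + b(e₃+e₄) + c(e₃−e₄) + d(e₂−e₃)`. -/
def mono (a b c d : ℤ) : P4 :=
  X 0 ^ (a + 1).toNat * X 1 ^ (b + 1).toNat * X 2 ^ (c + 1).toNat * X 3 ^ (d + 2).toNat

/-- `U`: the ℂ-linear span of the 25 monomials `λμνρ²·f_α`, `α ∈ D₄ ∪ {0}`. -/
def U : Submodule ℂ P4 :=
  Submodule.span ℂ
    {p | ∃ a b c d : ℤ, (toRoot a b c d = 0 ∨ IsD4Root (toRoot a b c d)) ∧ p = mono a b c d}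

/-- The maximal ideal `𝔪` of the point `e = (1,1,1,1)`. -/
def mIdeal : Ideal P4 := Ideal.span {X 0 - 1, X 1 - 1, X 2 - 1, X 3 - 1}

/-!
`U ∩ 𝔪³` is the kernel of `U → P/𝔪³`, where `dim U = 25` and `dim P/𝔪³ = C(6,2) = 15`, so the
claim is that `U` surjects onto the 2-jets at `e`. Modulo `𝔪³` the variables are exponentials of
nilpotent elements, and `λμνρ²·f_α` becomes `g · exp(∑ αᵢ yᵢ)` with `g` a unit and `y₁, …, y₄`
generating the jet algebra. For a root `α`, the odd and even parts of `exp(∑ αᵢ yᵢ)` show that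
`∑ αᵢ yᵢ` and its square lie in the image of `U` divided by `g`. The linear forms `yᵢ ± yⱼ` give
every `yᵢ`; their squares give `yᵢyⱼ` and `yᵢ² + yⱼ²`, and comparing three distinct indices
separates the `yᵢ²`. Together with `1` these span all 2-jets.
-/

section LinearAlgebra

theorem finrank_inf_ker_add_finrank_map {K V W : Type*} [DivisionRing K] [AddCommGroup V]
    [Module K V] [AddCommGroup W] [Module K W] (f : V →ₗ[K] W) (S : Submodule K V)
    [FiniteDimensional K S] :
    Module.finrank K ↥(S ⊓ LinearMap.ker f) + Module.finrank K (S.map f) = Module.finrank K S := by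
  have rank_nullity := LinearMap.finrank_range_add_finrank_ker (f.domRestrict S)
  rwa [LinearMap.range_domRestrict, LinearMap.ker_domRestrict, add_comm,
    ← Submodule.finrank_map_subtype_eq, Submodule.map_comap_subtype] at rank_nullity

variable {K M : Type*} [Ring K] [Algebra ℚ K] [AddCommGroup M] [Module K M] [Module ℚ M]
  {V : Submodule K M}

theorem mem_of_add_mem_of_sub_mem {a b : M} (hadd : a + b ∈ V) (hsub : a - b ∈ V) : a ∈ V := by
  convert V.smul_of_tower_mem (2⁻¹ : ℚ) (V.add_mem hadd hsub) using 1
  module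

theorem mem_of_pairwise_add_mem {a b c : M} (hab : a + b ∈ V) (hac : a + c ∈ V)
    (hbc : b + c ∈ V) : a ∈ V :=
  mem_of_add_mem_of_sub_mem hab (by simpa using V.sub_mem hac hbc)

end LinearAlgebra

section JetDimension

variable {σ : Type*}

theorem ncard_degree_eq [Fintype σ] (n : ℕ) :
    {e : σ →₀ ℕ | e.degree = n}.ncard = (Fintype.card σ).multichoose n := by
  classical
  have coe_antidiag :
      {e : σ →₀ ℕ | e.degree = n} = (Finset.univ.finsuppAntidiag n : Finset (σ →₀ ℕ)) := by
    ext e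
    simp [Finsupp.degree_eq_sum]
  rw [coe_antidiag, Set.ncard_coe_finset, Finset.card_finsuppAntidiag_nat_eq_multichoose,
    Finset.card_univ]

theorem ncard_degree_le [Fintype σ] (n : ℕ) :
    {e : σ →₀ ℕ | e.degree ≤ n}.ncard = (Fintype.card σ + n).choose n := by
  induction n with
  | zero => simp [ncard_degree_eq]
  | succ n ih =>
    have split : {e : σ →₀ ℕ | e.degree ≤ n + 1} = {e | e.degree ≤ n} ∪ {e | e.degree = n + 1} := by
      ext e
      exact Nat.le_succ_iff
    have disjoint : Disjoint {e : σ →₀ ℕ | e.degree ≤ n} {e | e.degree = n + 1} :=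
      Set.disjoint_left.mpr fun e (hle : e.degree ≤ n) (heq : e.degree = n + 1) => by omega
    rw [split, Set.ncard_union_eq disjoint (Finsupp.finite_of_degree_le n)
      (Finsupp.finite_of_degree_eq (n + 1)), ih, ncard_degree_eq, Nat.multichoose_eq,
      ← add_assoc, Nat.add_sub_cancel, Nat.choose_succ_succ]

variable {K : Type*} [CommRing K]

theorem finrank_restrictSupport [Nontrivial K] (s : Set (σ →₀ ℕ)) :
    Module.finrank K (restrictSupport K s) = s.ncard :=
  Module.finrank_eq_nat_card_basis (basisRestrictSupport K s)

theorem isCompl_restrictSupport {s t : Set (σ →₀ ℕ)} (h : IsCompl s t) :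
    IsCompl (restrictSupport K s) (restrictSupport K t) := by
  rw [restrictSupport_eq_span, restrictSupport_eq_span]
  have := (basisMonomials σ K).linearIndependent.isCompl_span_image
    (basisMonomials σ K).span_eq h
  simpa using this

theorem finrank_quotient_pow_idealOfVars [Nontrivial K] [Fintype σ] (n : ℕ) :
    Module.finrank K (MvPolynomial σ K ⧸ idealOfVars σ K ^ (n + 1)) =
      (Fintype.card σ + n).choose n := by
  have compl : IsCompl {e : σ →₀ ℕ | n + 1 ≤ e.degree} {e | e.degree ≤ n} := by
    rw [show {e : σ →₀ ℕ | e.degree ≤ n} = {e | n + 1 ≤ e.degree}ᶜ by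
      ext e; exact Nat.lt_succ_iff.symm.trans not_le.symm]
    exact isCompl_compl
  have pow_eq : (idealOfVars σ K ^ (n + 1)).restrictScalars K =
      restrictSupport K {e | n + 1 ≤ e.degree} := by
    rw [pow_idealOfVars, restrictScalars_restrictSupportIdeal]
    rfl
  rw [← (Submodule.Quotient.restrictScalarsEquiv K (idealOfVars σ K ^ (n + 1))).finrank_eq, pow_eq,
    (Submodule.quotientEquivOfIsCompl _ _ (isCompl_restrictSupport compl)).finrank_eq,
    finrank_restrictSupport, ncard_degree_le]

/-- The substitution `X i ↦ X i + C (a i)`, which moves the point `a` to the origin. -/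
def translate (a : σ → K) : MvPolynomial σ K ≃ₐ[K] MvPolynomial σ K :=
  AlgEquiv.ofAlgHom (aeval fun i => X i + C (a i)) (aeval fun i => X i - C (a i))
    (by ext i; simp) (by ext i; simp)

theorem translate_X_sub_C (a : σ → K) (i : σ) : translate a (X i - C (a i)) = X i := by
  simp [translate]

/-- The ideal of polynomials vanishing at the point `a`, given by its standard generators. -/
def pointIdeal (a : σ → K) : Ideal (MvPolynomial σ K) :=
  Ideal.span (Set.range fun i => X i - C (a i))

theorem map_translate_pointIdeal (a : σ → K) :
    (pointIdeal a).map (translate a : MvPolynomial σ K →+* MvPolynomial σ K) =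
      idealOfVars σ K := by
  rw [pointIdeal, Ideal.map_span, ← Set.range_comp]
  congr 2
  exact funext (translate_X_sub_C a)

theorem finrank_quotient_pow_pointIdeal [Nontrivial K] [Fintype σ] (a : σ → K) (n : ℕ) :
    Module.finrank K (MvPolynomial σ K ⧸ pointIdeal a ^ (n + 1)) =
      (Fintype.card σ + n).choose n := by
  rw [← finrank_quotient_pow_idealOfVars (K := K) n]
  refine (Ideal.quotientEquivAlg _ _ (translate a) ?_).toLinearEquiv.finrank_eq
  rw [← map_translate_pointIdeal a, ← Ideal.map_pow]

end JetDimension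

section NilpotentExp

open IsNilpotent

variable {R : Type*} [CommRing R] [Algebra ℚ R]

theorem exp_eq_of_pow_three_eq_zero {x : R} (hx : x ^ 3 = 0) :
    exp x = 1 + x + (2⁻¹ : ℚ) • x ^ 2 := by
  simp [exp_eq_sum hx, Finset.sum_range_succ]

theorem exp_sub_half_sq {t : R} (ht : t ^ 3 = 0) :
    exp (t - (2⁻¹ : ℚ) • t ^ 2) = 1 + t := by
  have hlog : (t - (2⁻¹ : ℚ) • t ^ 2) ^ 3 = 0 := by
    rw [show t - (2⁻¹ : ℚ) • t ^ 2 = t * (1 - (2⁻¹ : ℚ) • t) by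
      rw [mul_sub, mul_one, mul_smul_comm, sq], mul_pow, ht, zero_mul]
  have hsq : (t - (2⁻¹ : ℚ) • t ^ 2) ^ 2 = t ^ 2 := by
    simp only [Algebra.smul_def]
    linear_combination
      (-2 * algebraMap ℚ R 2⁻¹ + algebraMap ℚ R 2⁻¹ ^ 2 * t) * ht
  rw [exp_eq_of_pow_three_eq_zero hlog, hsq]
  abel

theorem exp_sum {ι : Type*} (s : Finset ι) {x : ι → R} (hx : ∀ i, IsNilpotent (x i)) :
    exp (∑ i ∈ s, x i) = ∏ i ∈ s, exp (x i) := by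
  classical
  induction s using Finset.induction_on with
  | empty => simp
  | insert i s hi ih =>
    rw [Finset.sum_insert hi, Finset.prod_insert hi, ← ih]
    exact exp_add_of_commute (Commute.all _ _) (hx i) (isNilpotent_sum fun j _ => hx j)

theorem exp_nsmul {x : R} (hx : IsNilpotent x) (n : ℕ) : exp (n • x) = exp x ^ n := by
  simpa using exp_sum (Finset.range n) (x := fun _ => x) fun _ => hx

end NilpotentExp

section RootSpan

open IsNilpotent

variable {K R : Type*} [CommRing K] [CommRing R] [Algebra K R] {V : Submodule K R}

theorem eq_top_of_quadratic_mem {ι : Type*} {y : ι → R} (hy : ∀ i j k, y i * y j * y k = 0)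
    (hgen : Algebra.adjoin K (Set.range y) = ⊤) (one_mem : 1 ∈ V) (mem : ∀ i, y i ∈ V)
    (mul_mem : ∀ i j, y i * y j ∈ V) : V = ⊤ := by
  rw [eq_top_iff, ← Algebra.top_toSubmodule, ← hgen, Algebra.adjoin_eq_span, Submodule.span_le]
  intro z hz
  suffices z ∈ V ∧ (∀ i, z * y i ∈ V) ∧ ∀ i j, z * y i * y j ∈ V from this.1
  induction hz using Submonoid.closure_induction_right with
  | one => simpa using ⟨one_mem, mem, mul_mem⟩
  | mul_right z _ w hw ih =>
    obtain ⟨k, rfl⟩ := hw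
    refine ⟨ih.2.1 k, ih.2.2 k, fun i j => ?_⟩
    rw [mul_assoc z, mul_assoc z, hy, mul_zero]
    exact V.zero_mem

variable [Algebra ℚ K] [Algebra ℚ R]

theorem mem_and_sq_mem_of_exp_mem {x : R} (hx : x ^ 3 = 0) (one_mem : 1 ∈ V)
    (exp_mem : exp x ∈ V) (exp_neg_mem : exp (-x) ∈ V) : x ∈ V ∧ x ^ 2 ∈ V := by
  have hneg : (-x) ^ 3 = 0 := by rw [Odd.neg_pow (by decide), hx, neg_zero]
  rw [exp_eq_of_pow_three_eq_zero hx] at exp_mem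
  rw [exp_eq_of_pow_three_eq_zero hneg, neg_sq] at exp_neg_mem
  constructor
  · convert V.smul_of_tower_mem (2⁻¹ : ℚ) (V.sub_mem exp_mem exp_neg_mem) using 1
    module
  · convert V.sub_mem (V.add_mem exp_mem exp_neg_mem) (V.smul_of_tower_mem (2 : ℚ) one_mem) using 1
    module

theorem mul_mem_of_sq_mem {a b : R} (hadd : (a + b) ^ 2 ∈ V) (hsub : (a - b) ^ 2 ∈ V) :
    a * b ∈ V := by
  convert V.smul_of_tower_mem (4⁻¹ : ℚ) (V.sub_mem hadd hsub) using 1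
  rw [add_sq, sub_sq, mul_assoc, two_mul]
  module

theorem sq_add_sq_mem_of_sq_mem {a b : R} (hadd : (a + b) ^ 2 ∈ V) (hsub : (a - b) ^ 2 ∈ V) :
    a ^ 2 + b ^ 2 ∈ V := by
  convert V.smul_of_tower_mem (2⁻¹ : ℚ) (V.add_mem hadd hsub) using 1
  rw [add_sq, sub_sq]
  module

theorem eq_top_of_exp_root_mem {ι : Type*} (hι : 3 ≤ ENat.card ι) {y : ι → R}
    (hy : ∀ i j k, y i * y j * y k = 0) (hgen : Algebra.adjoin K (Set.range y) = ⊤)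
    (one_mem : 1 ∈ V)
    (exp_mem : ∀ i j, i ≠ j → ∀ ε δ : ℤˣ, exp (ε • y i + δ • y j) ∈ V) : V = ⊤ := by
  have cube_zero (ε δ : ℤˣ) (i j : ι) : (ε • y i + δ • y j) ^ 3 = 0 := by
    simp only [Units.smul_def, zsmul_eq_mul]
    linear_combination (ε ^ 3 : R) * hy i i i + 3 * (ε ^ 2 * δ : R) * hy i i j +
      3 * (ε * δ ^ 2 : R) * hy i j j + (δ ^ 3 : R) * hy j j j
  have root_mem {i j : ι} (hij : i ≠ j) (δ : ℤˣ) :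
      y i + δ • y j ∈ V ∧ (y i + δ • y j) ^ 2 ∈ V := by
    refine mem_and_sq_mem_of_exp_mem (by simpa using cube_zero 1 δ i j) one_mem
      (by simpa using exp_mem i j hij 1 δ) ?_
    rw [neg_add]
    simpa using exp_mem i j hij (-1) (-δ)
  have add_mem {i j : ι} (hij : i ≠ j) : y i + y j ∈ V ∧ (y i + y j) ^ 2 ∈ V := by
    simpa using root_mem hij 1
  have sub_mem {i j : ι} (hij : i ≠ j) : y i - y j ∈ V ∧ (y i - y j) ^ 2 ∈ V := by
    simpa [sub_eq_add_neg] using root_mem hij (-1)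
  have sq_add_sq_mem {i j : ι} (hij : i ≠ j) : y i ^ 2 + y j ^ 2 ∈ V :=
    sq_add_sq_mem_of_sq_mem (add_mem hij).2 (sub_mem hij).2
  refine eq_top_of_quadratic_mem hy hgen one_mem (fun i => ?_) fun i j => ?_
  · obtain ⟨j, hji, -⟩ := ENat.exists_ne_ne_of_three_le hι i i
    exact mem_of_add_mem_of_sub_mem (add_mem hji.symm).1 (sub_mem hji.symm).1
  · obtain rfl | hij := eq_or_ne i j
    · obtain ⟨j, hji, -⟩ := ENat.exists_ne_ne_of_three_le hι i i
      obtain ⟨k, hki, hkj⟩ := ENat.exists_ne_ne_of_three_le hι i j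
      rw [← sq]
      exact mem_of_pairwise_add_mem (sq_add_sq_mem hji.symm) (sq_add_sq_mem hki.symm)
        (sq_add_sq_mem hkj.symm)
    · exact mul_mem_of_sq_mem (add_mem hij).2 (sub_mem hij).2

end RootSpan

section RootLattice

instance : DecidablePred IsD4Root := fun _ => by
  unfold IsD4Root
  infer_instance

theorem isD4Root_single_add_single {i j : Fin 4} (hij : i ≠ j) (ε δ : ℤˣ) :
    IsD4Root (Pi.single i (ε : ℤ) + Pi.single j (δ : ℤ)) := by
  revert i j ε δ
  decide +kernel

theorem IsD4Root.abs_apply_le {α : Fin 4 → ℤ} (hα : IsD4Root α) (i : Fin 4) : |α i| ≤ 1 := by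
  obtain ⟨j, k, hjk, rfl | rfl | rfl | rfl⟩ := hα <;> revert i j k <;> decide

theorem IsD4Root.sum_abs_eq {α : Fin 4 → ℤ} (hα : IsD4Root α) : ∑ i, |α i| = 2 := by
  obtain ⟨j, k, hjk, rfl | rfl | rfl | rfl⟩ := hα <;> revert j k <;> decide

theorem IsD4Root.even_sum {α : Fin 4 → ℤ} (hα : IsD4Root α) : Even (∑ i, α i) := by
  obtain ⟨j, k, hjk, rfl | rfl | rfl | rfl⟩ := hα <;> revert j k <;> decide

theorem exists_toRoot_eq {α : Fin 4 → ℤ} (hα : α = 0 ∨ IsD4Root α) :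
    ∃ a b c d : ℤ, toRoot a b c d = α := by
  have even_sum : Even (∑ i, α i) := by
    rcases hα with rfl | hα
    · simp
    · exact hα.even_sum
  obtain ⟨b, hb⟩ := even_sum
  rw [Fin.sum_univ_four] at hb
  have apply_two : b + (b - α 3) - (α 0 + α 1) = α 2 := by lia
  refine ⟨α 0, b, b - α 3, α 0 + α 1, ?_⟩
  ext i
  fin_cases i <;> simp [toRoot, apply_two]

/-- The quadruples `(a, b, c, d)` for which `toRoot a b c d` lies in `D₄ ∪ {0}`. They are cut out
of a box large enough to contain all of them, so that they can be counted. -/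
def rootCoords : Finset (ℤ × ℤ × ℤ × ℤ) :=
  {x ∈ Finset.Icc (-1) 1 ×ˢ Finset.Icc (-1) 1 ×ˢ Finset.Icc (-1) 1 ×ˢ Finset.Icc (-2) 2 |
    toRoot x.1 x.2.1 x.2.2.1 x.2.2.2 = 0 ∨ IsD4Root (toRoot x.1 x.2.1 x.2.2.1 x.2.2.2)}

theorem card_rootCoords : rootCoords.card = 25 := by
  decide +kernel

theorem abs_le_of_toRoot {a b c d : ℤ} (h : toRoot a b c d = 0 ∨ IsD4Root (toRoot a b c d)) :
    |a| ≤ 1 ∧ |b| ≤ 1 ∧ |c| ≤ 1 ∧ |d| ≤ 2 := by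
  have apply_le : |toRoot a b c d 0| ≤ 1 := by
    rcases h with h | h
    · simp [h]
    · exact h.abs_apply_le 0
  have sum_le : ∑ i, |toRoot a b c d i| ≤ 2 := by
    rcases h with h | h
    · simp [h]
    · exact h.sum_abs_eq.le
  simp only [toRoot, Fin.isValue, Matrix.cons_val_zero, Fin.sum_univ_four, Matrix.cons_val_one,
    Matrix.cons_val] at apply_le sum_le
  grind

theorem mem_rootCoords {a b c d : ℤ} :
    (a, b, c, d) ∈ rootCoords ↔ toRoot a b c d = 0 ∨ IsD4Root (toRoot a b c d) := by
  simp only [rootCoords, Finset.mem_filter, Finset.mem_product, Finset.mem_Icc, ← abs_le]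
  exact ⟨And.right, fun h => ⟨abs_le_of_toRoot h, h⟩⟩

/-- The exponent vector of `mono a b c d`. -/
def monoExponent (x : ℤ × ℤ × ℤ × ℤ) : Fin 4 →₀ ℕ :=
  Finsupp.equivFunOnFinite.symm
    ![(x.1 + 1).toNat, (x.2.1 + 1).toNat, (x.2.2.1 + 1).toNat, (x.2.2.2 + 2).toNat]

theorem mono_eq_monomial (a b c d : ℤ) : mono a b c d = monomial (monoExponent (a, b, c, d)) 1 := by
  rw [monomial_eq, Finsupp.prod_fintype _ _ (by simp)]
  simp [mono, monoExponent, Fin.prod_univ_four]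

theorem injOn_monoExponent : Set.InjOn monoExponent rootCoords := by
  rintro ⟨a, b, c, d⟩ h ⟨a', b', c', d'⟩ h' heq
  simp only [rootCoords, Int.reduceNeg, Finset.coe_filter, Finset.mem_product, Finset.mem_Icc,
    Set.mem_ofPred_eq] at h h'
  simp only [monoExponent, EmbeddingLike.apply_eq_iff_eq, Matrix.vecCons_inj, and_true] at heq
  grind

theorem U_eq_restrictSupport : U = restrictSupport ℂ (monoExponent '' rootCoords) := by
  rw [U, restrictSupport_eq_span, Set.image_image]
  congr 1
  ext p
  simp [mem_rootCoords, mono_eq_monomial, eq_comm]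

theorem finrank_U : Module.finrank ℂ U = 25 := by
  rw [U_eq_restrictSupport, finrank_restrictSupport, injOn_monoExponent.ncard_image,
    Set.ncard_coe_finset, card_rootCoords]

end RootLattice

section Jets

open IsNilpotent (exp exp_add_of_commute isUnit_exp)

variable {R : Type*} [CommRing R] [Algebra ℚ R]

/-- Given values `L` on the simple roots `e₁ - e₂`, `e₃ + e₄`, `e₃ - e₄`, `e₂ - e₃`, the values on
`e₁`, `e₂`, `e₃`, `e₄` of the linear map extending them. -/
def orthoCoords (L : Fin 4 → R) : Fin 4 → R :=
  ![L 0 + L 3 + (2⁻¹ : ℚ) • (L 1 + L 2), L 3 + (2⁻¹ : ℚ) • (L 1 + L 2),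
    (2⁻¹ : ℚ) • (L 1 + L 2), (2⁻¹ : ℚ) • (L 1 - L 2)]

theorem sum_toRoot_smul_orthoCoords (L : Fin 4 → R) (a b c d : ℤ) :
    ∑ i, toRoot a b c d i • orthoCoords L i = a • L 0 + b • L 1 + c • L 2 + d • L 3 := by
  simp only [Fin.sum_univ_four, toRoot, orthoCoords, Matrix.cons_val]
  module

theorem orthoCoords_mem {I : Ideal R} {L : Fin 4 → R} (hL : ∀ i, L i ∈ I) (i : Fin 4) :
    orthoCoords L i ∈ I := by
  have half_mem {x : R} (hx : x ∈ I) : (2⁻¹ : ℚ) • x ∈ I := Submodule.smul_of_tower_mem I _ hx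
  have half_add_mem := half_mem (I.add_mem (hL 1) (hL 2))
  fin_cases i
  · exact I.add_mem (I.add_mem (hL 0) (hL 3)) half_add_mem
  · exact I.add_mem (hL 3) half_add_mem
  · exact half_add_mem
  · exact half_mem (I.sub_mem (hL 1) (hL 2))

theorem mem_adjoin_orthoCoords {K : Type*} [CommRing K] [Algebra K R] (L : Fin 4 → R) (i : Fin 4) :
    L i ∈ Algebra.adjoin K (Set.range (orthoCoords L)) := by
  have coord_mem (j : Fin 4) : orthoCoords L j ∈ Algebra.adjoin K (Set.range (orthoCoords L)) :=
    Algebra.subset_adjoin (Set.mem_range_self j)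
  have comb_mem (a b c d : ℤ) : a • L 0 + b • L 1 + c • L 2 + d • L 3 ∈
      Algebra.adjoin K (Set.range (orthoCoords L)) := by
    rw [← sum_toRoot_smul_orthoCoords]
    exact sum_mem fun j _ => zsmul_mem (coord_mem j) _
  fin_cases i
  · simpa using comb_mem 1 0 0 0
  · simpa using comb_mem 0 1 0 0
  · simpa using comb_mem 0 0 1 0
  · simpa using comb_mem 0 0 0 1

theorem adjoin_orthoCoords_eq_top {K : Type*} [CommRing K] [Algebra ℚ K] [Algebra K R]
    {L : Fin 4 → R} (hL : ∀ i, L i ^ 3 = 0)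
    (hgen : Algebra.adjoin K (Set.range fun i => exp (L i)) = ⊤) :
    Algebra.adjoin K (Set.range (orthoCoords L)) = ⊤ := by
  rw [eq_top_iff, ← hgen, Algebra.adjoin_le_iff]
  rintro _ ⟨i, rfl⟩
  have mem := mem_adjoin_orthoCoords (K := K) L i
  have half_sq_mem := (Algebra.adjoin K (Set.range (orthoCoords L))).toSubmodule.smul_of_tower_mem
    (2⁻¹ : ℚ) (pow_mem mem 2)
  simp only [exp_eq_of_pow_three_eq_zero (hL i)]
  exact add_mem (add_mem (one_mem _) mem) half_sq_mem

variable [Algebra ℂ R]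

theorem aeval_exp_mono {L : Fin 4 → R} (hL : ∀ i, IsNilpotent (L i)) {a b c d : ℤ}
    (ha : -1 ≤ a) (hb : -1 ≤ b) (hc : -1 ≤ c) (hd : -2 ≤ d) :
    aeval (fun i => exp (L i)) (mono a b c d) =
      exp (L 0 + L 1 + L 2 + 2 • L 3) * exp (a • L 0 + b • L 1 + c • L 2 + d • L 3) := by
  let n : Fin 4 → ℕ := ![(a + 1).toNat, (b + 1).toNat, (c + 1).toNat, (d + 2).toNat]
  have n_smul (i : Fin 4) :
      n i • L i = (![1, 1, 1, 2] i : ℤ) • L i + (![a, b, c, d] i : ℤ) • L i := by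
    rw [← natCast_zsmul, ← add_smul]
    congr 1
    fin_cases i <;> simp [n] <;> lia
  have nilpotent (m : Fin 4 → ℤ) : IsNilpotent (∑ i, m i • L i) :=
    isNilpotent_sum fun i _ => (hL i).smul (m i)
  calc aeval (fun i => exp (L i)) (mono a b c d)
      = ∏ i, exp (L i) ^ n i := by simp [mono, n, Fin.prod_univ_four]
    _ = exp (∑ i, n i • L i) := by
        simp only [exp_sum _ fun i => (hL i).smul (n i), exp_nsmul (hL _)]
    _ = exp (∑ i, (![1, 1, 1, 2] i : ℤ) • L i) * exp (∑ i, (![a, b, c, d] i : ℤ) • L i) := by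
        simp only [n_smul, Finset.sum_add_distrib]
        exact exp_add_of_commute (Commute.all _ _) (nilpotent _) (nilpotent _)
    _ = _ := by simp [Fin.sum_univ_four]

theorem exp_mul_exp_root_mem_map_U {L : Fin 4 → R} (hL : ∀ i, IsNilpotent (L i)) {α : Fin 4 → ℤ}
    (hα : α = 0 ∨ IsD4Root α) :
    exp (L 0 + L 1 + L 2 + 2 • L 3) * exp (∑ i, α i • orthoCoords L i) ∈
      U.map (aeval fun i => exp (L i)).toLinearMap := by
  obtain ⟨a, b, c, d, rfl⟩ := exists_toRoot_eq hα
  obtain ⟨ha, hb, hc, hd⟩ := abs_le_of_toRoot hα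
  rw [sum_toRoot_smul_orthoCoords, ← aeval_exp_mono hL (abs_le.mp ha).1 (abs_le.mp hb).1
    (abs_le.mp hc).1 (abs_le.mp hd).1]
  exact Submodule.mem_map_of_mem (Submodule.subset_span ⟨a, b, c, d, hα, rfl⟩)

theorem map_aeval_exp_U_eq_top {I : Ideal R} (hI : I ^ 3 = ⊥) {L : Fin 4 → R}
    (hL : ∀ i, L i ∈ I) (hgen : Algebra.adjoin ℂ (Set.range fun i => exp (L i)) = ⊤) :
    U.map (aeval fun i => exp (L i)).toLinearMap = ⊤ := by
  have mul_eq_zero (i j k : Fin 4) : orthoCoords L i * orthoCoords L j * orthoCoords L k = 0 := by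
    rw [← Ideal.mem_bot, ← hI, pow_succ, sq]
    exact Ideal.mul_mem_mul (Ideal.mul_mem_mul (orthoCoords_mem hL i) (orthoCoords_mem hL j))
      (orthoCoords_mem hL k)
  have cube_zero {x : R} (hx : x ∈ I) : x ^ 3 = 0 := by
    simpa [hI] using Ideal.pow_mem_pow hx 3
  have mem_map {α : Fin 4 → ℤ} (hα : α = 0 ∨ IsD4Root α) :=
    exp_mul_exp_root_mem_map_U (fun i => ⟨3, cube_zero (hL i)⟩) hα
  set g := exp (L 0 + L 1 + L 2 + 2 • L 3)
  have g_unit : IsUnit g := isUnit_exp ⟨3, cube_zero <| I.add_mem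
    (I.add_mem (I.add_mem (hL 0) (hL 1)) (hL 2)) (I.nsmul_mem (hL 3) 2)⟩
  have comap_eq_top :
      (U.map (aeval fun i => exp (L i)).toLinearMap).comap (LinearMap.mulLeft ℂ g) = ⊤ := by
    refine eq_top_of_exp_root_mem (by simp; norm_num) mul_eq_zero
      (adjoin_orthoCoords_eq_top (fun i => cube_zero (hL i)) hgen) ?_ fun i j hij ε δ => ?_
    · simpa using mem_map (.inl rfl)
    · simpa [add_smul, Finset.sum_add_distrib, Pi.single_apply, Units.smul_def] using
        mem_map (.inr (isD4Root_single_add_single hij ε δ))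
  refine eq_top_iff.mpr fun r _ => ?_
  obtain ⟨s, rfl⟩ := g_unit.dvd (a := r)
  exact (comap_eq_top ▸ Submodule.mem_top :
    s ∈ (U.map (aeval fun i => exp (L i)).toLinearMap).comap (LinearMap.mulLeft ℂ g))

end Jets

theorem mIdeal_eq_pointIdeal : mIdeal = pointIdeal 1 := by
  rw [mIdeal, pointIdeal]
  congr 1
  ext p
  simp [Fin.exists_fin_succ, eq_comm]

theorem X_sub_one_mem_mIdeal (i : Fin 4) : X i - 1 ∈ mIdeal := by
  rw [mIdeal_eq_pointIdeal]
  exact Ideal.subset_span ⟨i, by simp⟩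

theorem finrank_quotient_mIdeal_cube : Module.finrank ℂ (P4 ⧸ mIdeal ^ 3) = 15 := by
  rw [mIdeal_eq_pointIdeal, finrank_quotient_pow_pointIdeal]
  rfl

theorem map_mk_U_eq_top : U.map (Ideal.Quotient.mkₐ ℂ (mIdeal ^ 3)).toLinearMap = ⊤ := by
  let π := Ideal.Quotient.mkₐ ℂ (mIdeal ^ 3)
  let I := mIdeal.map π
  have cube_eq_bot : I ^ 3 = ⊥ := by
    rw [← Ideal.map_pow]
    exact Ideal.map_quotient_self _
  have mem_I (i : Fin 4) : π (X i) - 1 ∈ I := by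
    simpa using Ideal.mem_map_of_mem π (X_sub_one_mem_mIdeal i)
  let L (i : Fin 4) := π (X i) - 1 - (2⁻¹ : ℚ) • (π (X i) - 1) ^ 2
  have L_mem (i : Fin 4) : L i ∈ I := I.sub_mem (mem_I i)
    (Submodule.smul_of_tower_mem I _ (I.pow_mem_of_mem (mem_I i) 2 two_pos))
  have exp_L : (fun i => IsNilpotent.exp (L i)) = fun i => π (X i) := by
    funext i
    have cube_zero : (π (X i) - 1) ^ 3 = 0 := by
      rw [← Ideal.mem_bot, ← cube_eq_bot]
      exact Ideal.pow_mem_pow (mem_I i) 3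
    rw [exp_sub_half_sq cube_zero, add_sub_cancel]
  have aeval_eq : aeval (fun i => IsNilpotent.exp (L i)) = π := by
    rw [exp_L]
    exact (aeval_unique π).symm
  have adjoin_eq_top : Algebra.adjoin ℂ (Set.range fun i => IsNilpotent.exp (L i)) = ⊤ := by
    rw [Algebra.adjoin_range_eq_range_aeval, aeval_eq]
    exact (AlgHom.range_eq_top π).mpr (Ideal.Quotient.mkₐ_surjective ℂ _)
  simpa only [aeval_eq] using map_aeval_exp_U_eq_top cube_eq_bot L_mem adjoin_eq_top

theorem statement1 :
    Module.finrank ℂ ↥(U ⊓ Submodule.restrictScalars ℂ (mIdeal ^ 3)) = 10 := by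
  have : FiniteDimensional ℂ U := Module.finite_of_finrank_pos (by rw [finrank_U]; norm_num)
  have rank_nullity :=
    finrank_inf_ker_add_finrank_map (Ideal.Quotient.mkₐ ℂ (mIdeal ^ 3)).toLinearMap U
  have ker_eq : LinearMap.ker (Ideal.Quotient.mkₐ ℂ (mIdeal ^ 3)).toLinearMap =
      Submodule.restrictScalars ℂ (mIdeal ^ 3) := by
    ext p
    exact Ideal.Quotient.eq_zero_iff_mem
  rw [map_mk_U_eq_top, finrank_top, finrank_quotient_mIdeal_cube, finrank_U, ker_eq] at rank_nullity
  omega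

end Stmt1
end
end

section
/- The ten polynomials f₁, g₁, f₂, g₂, f₃, g₃, f₄, g₄, f₅, g₅ all lie in U ∩ 𝔪³ (each is a ℂ-linear combination of the 25 monomials λμνρ²·f_α with α ∈ D₄ ∪ {0}, and each vanishes to order at least 3 at e = (1,1,1,1)), and they are linearly independent over ℂ; hence they form a basis of the 10-dimensional space U ∩ 𝔪³. -/
/-!
Statement 2: The ten polynomials f₁, g₁, …, f₅, g₅ all lie in `U ∩ 𝔪³`, and
they are linearly independent over ℂ; hence they form a basis of the
10-dimensional space `U ∩ 𝔪³`.
-/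

noncomputable section

namespace Stmt2

open MvPolynomial

/-- The polynomial ring `ℂ[λ,μ,ν,ρ]`. -/
abbrev P4 : Type := MvPolynomial (Fin 4) ℂ

/-- `λ`. -/ def l : P4 := X 0
/-- `μ`. -/ def m : P4 := X 1
/-- `ν`. -/ def n : P4 := X 2
/-- `ρ`. -/ def r : P4 := X 3

/-- `α` is a root of `D₄`, i.e. of the form `±e_i ± e_j` with `i < j`. -/
def IsD4Root (α : Fin 4 → ℤ) : Prop :=
  ∃ i j : Fin 4, i < j ∧
    (α = Pi.single i 1 + Pi.single j 1 ∨ α = Pi.single i 1 - Pi.single j 1 ∨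
     α = -Pi.single i 1 + Pi.single j 1 ∨ α = -Pi.single i 1 - Pi.single j 1)

/-- The lattice vector `α = a(e₁−e₂) + b(e₃+e₄) + c(e₃−e₄) + d(e₂−e₃)`. -/
def toRoot (a b c d : ℤ) : Fin 4 → ℤ := ![a, -a + d, b + c - d, b - c]

/-- The monomial `λμνρ² · f_α` where `f_α = λᵃμᵇνᶜρᵈ`. -/
def mono (a b c d : ℤ) : P4 :=
  X 0 ^ (a + 1).toNat * X 1 ^ (b + 1).toNat * X 2 ^ (c + 1).toNat * X 3 ^ (d + 2).toNat

/-- `U`: the ℂ-linear span of the 25 monomials `λμνρ²·f_α`, `α ∈ D₄ ∪ {0}`. -/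
def U : Submodule ℂ P4 :=
  Submodule.span ℂ
    {p | ∃ a b c d : ℤ, (toRoot a b c d = 0 ∨ IsD4Root (toRoot a b c d)) ∧ p = mono a b c d}

/-- The maximal ideal `𝔪` of the point `e = (1,1,1,1)`. -/
def mIdeal : Ideal P4 := Ideal.span {X 0 - 1, X 1 - 1, X 2 - 1, X 3 - 1}

def f1 : P4 := (l * r - 1) * (m * r - 1) * (n * r - 1) * (l * m * n * r - 1)
def g1 : P4 := (r - 1) * (l * m * r - 1) * (l * n * r - 1) * (m * n * r - 1)
def f2 : P4 := (m * r - 1) * (n * r - 1) * (1 - l ^ 2 * m * n * r ^ 2)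
def g2 : P4 := (r - 1) * (m * n * r - 1) * (1 - l ^ 2 * m * n * r ^ 2)
def f3 : P4 := (l * r - 1) * (m * r - 1) * (1 - l * m * n ^ 2 * r ^ 2)
def g3 : P4 := (r - 1) * (l * m * r - 1) * (1 - l * m * n ^ 2 * r ^ 2)
def f4 : P4 := r * (m * r - 1) *
  (l + n - l * n - l * n * r - l * m * n * r + l ^ 2 * m * n ^ 2 * r ^ 2)
def g4 : P4 := r * (m - 1) *
  (l + n - l * n - l * n * r - l * m * n * r + l ^ 2 * m * n ^ 2 * r ^ 2)
def f5 : P4 := (l * m * r - 1) * (m * n * r - 1) * (1 - l * n * r ^ 2)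
def g5 : P4 := (m * r - 1) * (l * m * n * r - 1) * (1 - l * n * r ^ 2)

/-- The ten polynomials of the table. -/
def funcs : Fin 10 → P4 := ![f1, g1, f2, g2, f3, g3, f4, g4, f5, g5]

/-!
The ten polynomials are separated by their values at ten points, so all that is needed besides
membership is the bound `dim (U ∩ 𝔪³) ≤ 10`, which is dual to a statement about quadrics.

Write `y(α) = (1, α) ∈ ℂ⁵`. There are differential operators `E₀, …, E₄` of order at most one with
`Eᵢ (λμνρ² f_α) = yᵢ(α) λμνρ² f_α`. Each lowers the order of vanishing at `e` by at most one, so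
`∑ c_α λμνρ² f_α ∈ 𝔪³` implies `∑ c_α yᵢ(α) yⱼ(α) = 0` for all `i`, `j`. The matrix of this linear
system is square of size `25`, so its solution space has the dimension of its left kernel, the space
of bilinear forms `B` on `ℂ⁵` with `B(y(α), y(α)) = 0` for all `α ∈ D₄ ∪ {0}`. No nonzero polynomial
of degree at most two vanishes on `D₄ ∪ {0}`: changing signs in `±eᵢ ± eⱼ` isolates the linear
terms, the mixed terms and the sums of two diagonal coefficients, and comparing three indices
separates the latter. Hence these `B` are alternating and form a space of dimension `10`.
-/

theorem derivation_apply_mem_pow {R A : Type*} [CommSemiring R] [CommSemiring A] [Algebra R A]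
    (D : Derivation R A A) {I : Ideal A} {k : ℕ} {x : A} (hx : x ∈ I ^ (k + 1)) :
    D x ∈ I ^ k := by
  induction k generalizing x with
  | zero => simp
  | succ k ih =>
    rw [pow_succ] at hx
    refine Submodule.mul_induction_on hx (fun a ha b hb => ?_) fun a b ha hb => ?_
    · rw [Derivation.leibniz, smul_eq_mul, smul_eq_mul]
      refine add_mem (Ideal.mul_mem_right _ _ ha) ?_
      rw [pow_succ']
      exact Ideal.mul_mem_mul hb (ih ha)
    · rw [map_add]
      exact add_mem ha hb

theorem mul_mul_mem_pow_three {A : Type*} [CommSemiring A] {I : Ideal A} {x y z : A}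
    (hx : x ∈ I) (hy : y ∈ I) (hz : z ∈ I) : x * y * z ∈ I ^ 3 := by
  rw [pow_three']
  exact Ideal.mul_mem_mul (Ideal.mul_mem_mul hx hy) hz

theorem finrank_ker_mulVecLin_add_card {K m n : Type*} [Field K] [Fintype m] [Fintype n]
    (A : Matrix m n K) :
    Module.finrank K A.mulVecLin.ker + Fintype.card m =
      Module.finrank K A.transpose.mulVecLin.ker + Fintype.card n := by
  have hA : A.rank + Module.finrank K A.mulVecLin.ker = Fintype.card n := by
    simpa [Matrix.rank] using A.mulVecLin.finrank_range_add_finrank_ker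
  have hAt : A.rank + Module.finrank K A.transpose.mulVecLin.ker = Fintype.card m := by
    rw [← A.rank_transpose]
    simpa [Matrix.rank] using A.transpose.mulVecLin.finrank_range_add_finrank_ker
  lia

theorem span_range_eq_of_linearIndependent {K V ι : Type*} [DivisionRing K] [AddCommGroup V]
    [Module K V] [Fintype ι] {W : Submodule K V} [FiniteDimensional K W] {v : ι → V}
    (hv : LinearIndependent K v) (hmem : ∀ i, v i ∈ W) (hW : Module.finrank K W ≤ Fintype.card ι) :
    Submodule.span K (Set.range v) = W := by
  refine Submodule.eq_of_le_of_finrank_le (Submodule.span_le.2 (Set.range_subset_iff.2 hmem)) ?_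
  rwa [finrank_span_eq_card hv]

section Euler

variable {R σ : Type*} [CommSemiring R]

/-- The Euler vector field `∑ⱼ wⱼ Xⱼ ∂/∂Xⱼ`, for which every monomial is an eigenvector. -/
def weightedEuler (w : σ → R) :
    Derivation R (MvPolynomial σ R) (MvPolynomial σ R) :=
  mkDerivation R fun j => w j • X j

theorem weightedEuler_monomial [Fintype σ] (w : σ → R) (e : σ →₀ ℕ) (t : R) :
    weightedEuler w (monomial e t) = (∑ j, w j * e j) • monomial e t := by
  rw [← mul_one t, ← smul_eq_mul, ← smul_monomial, Derivation.map_smul, smul_comm _ t,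
    weightedEuler, mkDerivation_monomial, Finsupp.sum_fintype _ _ (by simp), one_smul,
    Finset.sum_smul]
  refine congrArg _ (Finset.sum_congr rfl fun j _ => ?_)
  have hj := X_mul_pderiv_monomial (i := j) (m := e) (r := (1 : R))
  rw [pderiv_monomial, one_mul] at hj
  rw [smul_eq_mul, mul_smul_comm, mul_comm, hj, mul_smul, Nat.cast_smul_eq_nsmul]

end Euler

section Quadrics

variable {R V ι : Type*} [CommRing R] [NoZeroDivisors R] [NeZero (2 : R)] [AddCommGroup V]
  [Module R V] {B : LinearMap.BilinForm R V} {o : V}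

theorem polar_eq_zero_of_forall_signs {u v : V} (ho : B o o = 0)
    (h : ∀ σ τ : ℤˣ, B (o + (((σ : ℤ) : R) • u + ((τ : ℤ) : R) • v))
      (o + (((σ : ℤ) : R) • u + ((τ : ℤ) : R) • v)) = 0) :
    B o u + B u o = 0 ∧ B u v + B v u = 0 ∧ B u u + B v v = 0 := by
  have four_ne_zero : (4 : R) ≠ 0 := by
    rw [show (4 : R) = 2 * 2 by norm_num]
    exact mul_ne_zero two_ne_zero two_ne_zero
  have hpp := h 1 1
  have hpm := h 1 (-1)
  have hmp := h (-1) 1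
  have hmm := h (-1) (-1)
  simp only [Units.val_one, Units.val_neg, Int.cast_one, Int.cast_neg, one_smul, neg_smul, map_add,
    map_neg, LinearMap.add_apply, LinearMap.neg_apply, ho] at hpp hpm hmp hmm
  refine ⟨?_, ?_, ?_⟩ <;> apply mul_left_cancel₀ four_ne_zero
  · linear_combination hpp + hpm - hmp - hmm
  · linear_combination hpp - hpm - hmp + hmm
  · linear_combination hpp + hpm + hmp + hmm

theorem apply_add_apply_swap_eq_zero_of_forall_signs {e : ι → V} (ho : B o o = 0)
    (h : ∀ i j, i ≠ j → ∀ σ τ : ℤˣ, B (o + (((σ : ℤ) : R) • e i + ((τ : ℤ) : R) • e j))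
      (o + (((σ : ℤ) : R) • e i + ((τ : ℤ) : R) • e j)) = 0)
    (three_indices : ∀ i : ι, ∃ j k, i ≠ j ∧ i ≠ k ∧ j ≠ k) :
    (∀ i, B o (e i) + B (e i) o = 0) ∧ ∀ i j, B (e i) (e j) + B (e j) (e i) = 0 := by
  have polar (i j : ι) (hij : i ≠ j) := polar_eq_zero_of_forall_signs ho (h i j hij)
  refine ⟨fun i => ?_, fun i j => ?_⟩
  · obtain ⟨j, -, hij, -⟩ := three_indices i
    exact (polar i j hij).1
  · obtain rfl | hij := eq_or_ne i j
    · obtain ⟨j, k, hij, hik, hjk⟩ := three_indices i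
      linear_combination (polar i j hij).2.2 + (polar i k hik).2.2 - (polar j k hjk).2.2
    · exact (polar i j hij).2.1

end Quadrics

theorem mem_mIdeal_iff {p : P4} : p ∈ mIdeal ↔ eval 1 p = 0 := by
  have sub_C_eval_mem (q : P4) : q - C (eval 1 q) ∈ mIdeal := by
    induction q using MvPolynomial.induction_on with
    | C a => simp
    | add p q hp hq =>
      rw [map_add, C_add, add_sub_add_comm]
      exact add_mem hp hq
    | mul_X p i hp =>
      have hX : (X i - 1 : P4) ∈ mIdeal :=
        Ideal.subset_span (by fin_cases i <;> simp)
      have : p * X i - C (eval 1 (p * X i)) = p * (X i - 1) + (p - C (eval 1 p)) := by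
        simp only [map_mul, eval_X, Pi.one_apply, map_one]
        ring
      rw [this]
      exact add_mem (Ideal.mul_mem_left _ _ hX) hp
  refine ⟨fun hp => ?_, fun hp => by simpa [hp] using sub_C_eval_mem p⟩
  have : mIdeal ≤ RingHom.ker (eval (1 : Fin 4 → ℂ)) := by
    simp [mIdeal, Ideal.span_le, Set.insert_subset_iff, RingHom.mem_ker]
  exact this hp

/-- The monomial `λ^(e 0) μ^(e 1) ν^(e 2) ρ^(e 3)`. -/
def expMonomial (e : Fin 4 → ℕ) : P4 := monomial (Finsupp.equivFunOnFinite.symm e) 1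

theorem expMonomial_eq_prod (e : Fin 4 → ℕ) : expMonomial e = ∏ i, X i ^ e i := by
  simp [expMonomial, monomial_eq, Finsupp.prod_fintype]

theorem expMonomial_mul (e e' : Fin 4 → ℕ) :
    expMonomial e * expMonomial e' = expMonomial (e + e') := by
  simp only [expMonomial_eq_prod, Pi.add_apply, pow_add, Finset.prod_mul_distrib]

theorem mono_eq_expMonomial (a b c d : ℤ) :
    mono a b c d = expMonomial ![(a + 1).toNat, (b + 1).toNat, (c + 1).toNat, (d + 2).toNat] := by
  simp [expMonomial_eq_prod, mono, Fin.prod_univ_four]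

instance : DecidablePred IsD4Root := fun α => by unfold IsD4Root; infer_instance

theorem expMonomial_mem_U {e : Fin 4 → ℕ}
    (h : toRoot (e 0 - 1) (e 1 - 1) (e 2 - 1) (e 3 - 2) = 0 ∨
      IsD4Root (toRoot (e 0 - 1) (e 1 - 1) (e 2 - 1) (e 3 - 2))) : expMonomial e ∈ U :=
  Submodule.subset_span
    ⟨_, _, _, _, h, by simp [expMonomial_eq_prod, mono, Fin.prod_univ_four]⟩

theorem funcs_mem_U (k : Fin 10) : funcs k ∈ U := by
  have hl : l = expMonomial ![1, 0, 0, 0] := by simp [l, expMonomial_eq_prod, Fin.prod_univ_four]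
  have hm : m = expMonomial ![0, 1, 0, 0] := by simp [m, expMonomial_eq_prod, Fin.prod_univ_four]
  have hn : n = expMonomial ![0, 0, 1, 0] := by simp [n, expMonomial_eq_prod, Fin.prod_univ_four]
  have hr : r = expMonomial ![0, 0, 0, 1] := by simp [r, expMonomial_eq_prod, Fin.prod_univ_four]
  have hone : (1 : P4) = expMonomial 0 := by simp [expMonomial_eq_prod]
  fin_cases k <;>
    simp only [funcs, f1, g1, f2, g2, f3, g3, f4, g4, f5, g5, hl, hm, hn, hr, hone, sq, mul_sub,
      sub_mul, mul_add, expMonomial_mul, Fin.mk_zero, Fin.mk_one, Matrix.cons_val,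
      Fin.reduceFinMk] <;>
    repeat' first
      | exact expMonomial_mem_U (by decide)
      | apply sub_mem
      | apply add_mem

theorem common_factor_f4_g4_mem_sq :
    l + n - l * n - l * n * r - l * m * n * r + l ^ 2 * m * n ^ 2 * r ^ 2 ∈ mIdeal ^ 2 := by
  have factored : l + n - l * n - l * n * r - l * m * n * r + l ^ 2 * m * n ^ 2 * r ^ 2 =
      (l * n * r - 1) * (l * m * n * r - 1) - (l - 1) * (n - 1) := by ring
  rw [factored, sq]
  refine sub_mem (Ideal.mul_mem_mul ?_ ?_) (Ideal.mul_mem_mul ?_ ?_) <;>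
    simp [mem_mIdeal_iff, l, m, n, r]

theorem funcs_mem_pow_three (k : Fin 10) : funcs k ∈ mIdeal ^ 3 := by
  match k with
  | 0 | 1 =>
    refine Ideal.mul_mem_right _ _ (mul_mul_mem_pow_three ?_ ?_ ?_) <;>
      simp [mem_mIdeal_iff, l, m, n, r]
  | 6 | 7 =>
    refine pow_succ' mIdeal 2 ▸ Ideal.mul_mem_mul ?_ common_factor_f4_g4_mem_sq
    simp [mem_mIdeal_iff, m, r]
  | 2 | 3 | 4 | 5 | 8 | 9 =>
    refine mul_mul_mem_pow_three ?_ ?_ ?_ <;> simp [mem_mIdeal_iff, l, m, n, r]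

theorem sum_mul_eval_funcs_eq_zero {c : Fin 10 → ℂ} (hc : ∑ k, c k • funcs k = 0) (x : Fin 4 → ℂ) :
    c 0 * eval x f1 + c 1 * eval x g1 + c 2 * eval x f2 + c 3 * eval x g2 + c 4 * eval x f3
      + c 5 * eval x g3 + c 6 * eval x f4 + c 7 * eval x g4 + c 8 * eval x f5
      + c 9 * eval x g5 = 0 := by
  simpa [Fin.sum_univ_succ, funcs, add_assoc, smul_eval] using congrArg (eval x) hc

theorem linearIndependent_funcs : LinearIndependent ℂ funcs := by
  rw [Fintype.linearIndependent_iff]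
  intro c hc
  -- The points are chosen so that most of the ten polynomials vanish at each of them.
  have eval_at (x y z w : ℂ) := sum_mul_eval_funcs_eq_zero hc ![x, y, z, w]
  simp only [f1, g1, f2, g2, f3, g3, f4, g4, f5, g5, l, m, n, r, map_mul, map_sub, map_add, map_pow,
    map_one, eval_X, Matrix.cons_val] at eval_at
  have hf5 : c 8 = 0 := by linear_combination eval_at 0 1 0 1
  have hg3 : c 5 = -c 7 := by linear_combination eval_at 0 (-1) 1 (-1) / 2
  have hg2 : c 3 = -c 7 := by linear_combination eval_at 1 (-1) 0 (-1) / 2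
  have hg1 : c 1 = c 7 / 2 := by linear_combination eval_at (-1) (-1) (-1) (-1) / 16
  have hg4 : c 7 = 0 := by
    linear_combination (2 * hg1 + 2 * hg2 + 2 * hg3 + hf5 - eval_at 0 (-1) 0 (-1)) / 3
  simp only [hg4, neg_zero, zero_div] at hg1 hg2 hg3
  have hf1 : c 0 = -c 6 / 2 := by linear_combination eval_at 1 1 1 (-1) / 16 - hg1
  have hf3 : c 4 = c 6 - c 9 := by linear_combination eval_at 0 1 (-1) (-1) / 2 - hg3
  have hf2 : c 2 = c 6 - c 9 := by linear_combination eval_at (-1) 1 0 (-1) / 2 - hg2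
  have hg5 : c 9 = 3 / 2 * c 6 := by
    linear_combination hf1 + hf2 + hf3 + hf5 - eval_at 0 0 0 1
  have hf4 : c 6 = 0 := by
    linear_combination (hf1 + hg1 - hf2 - hg2 - hf3 - hg3 + 2 * hg4 - 3 * hf5 - hg5
      - eval_at 1 0 1 2) / 2
  simp only [hf4, mul_zero, neg_zero, zero_div] at hf1 hg5
  simp only [hf4, hg5, sub_zero] at hf2 hf3
  intro k
  fin_cases k <;> assumption

/-- Labels for `D₄ ∪ {0}`: `none` stands for `0`, and `some (⟨(i, j), _⟩, σ, τ)` for `σ eᵢ + τ eⱼ`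
with `i < j`. -/
abbrev D4Index : Type := Option ({p : Fin 4 × Fin 4 // p.1 < p.2} × ℤˣ × ℤˣ)

/-- The element of `D₄ ∪ {0}` with a given label. -/
def d4Vector : D4Index → Fin 4 → ℤ
  | none => 0
  | some (p, σ, τ) => σ • Pi.single p.1.1 1 + τ • Pi.single p.1.2 1

theorem mem_range_d4Vector {α : Fin 4 → ℤ} : α ∈ Set.range d4Vector ↔ α = 0 ∨ IsD4Root α := by
  constructor
  · rintro ⟨_ | ⟨⟨⟨i, j⟩, hij⟩, σ, τ⟩, rfl⟩
    · exact Or.inl rfl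
    · refine Or.inr ⟨i, j, hij, ?_⟩
      rcases Int.units_eq_one_or σ with rfl | rfl <;>
        rcases Int.units_eq_one_or τ with rfl | rfl <;>
        simp [d4Vector, sub_eq_add_neg]
  · rintro (rfl | ⟨i, j, hij, rfl | rfl | rfl | rfl⟩)
    · exact ⟨none, rfl⟩
    · exact ⟨some (⟨(i, j), hij⟩, 1, 1), by simp [d4Vector]⟩
    · exact ⟨some (⟨(i, j), hij⟩, 1, -1), by simp [d4Vector, sub_eq_add_neg]⟩
    · exact ⟨some (⟨(i, j), hij⟩, -1, 1), by simp [d4Vector]⟩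
    · exact ⟨some (⟨(i, j), hij⟩, -1, -1), by simp [d4Vector, sub_eq_add_neg]⟩

theorem exists_toRoot_eq_d4Vector (s : D4Index) :
    ∃ a b c d : ℤ, (-1 ≤ a ∧ -1 ≤ b ∧ -1 ≤ c ∧ -2 ≤ d) ∧ toRoot a b c d = d4Vector s := by
  refine ⟨d4Vector s 0, (d4Vector s 0 + d4Vector s 1 + d4Vector s 2 + d4Vector s 3) / 2,
    (d4Vector s 0 + d4Vector s 1 + d4Vector s 2 - d4Vector s 3) / 2,
    d4Vector s 0 + d4Vector s 1, ?_⟩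
  revert s
  decide

/-- The monomial `λμνρ² · f_α` as a function of `α`. The exponents of `f_α` are recovered from the
coordinates of `α`; the divisions by `2` are exact on the `D₄` root lattice and round outside it. -/
def latticeMono (α : Fin 4 → ℤ) : P4 :=
  mono (α 0) ((α 0 + α 1 + α 2 + α 3) / 2) ((α 0 + α 1 + α 2 - α 3) / 2) (α 0 + α 1)

theorem latticeMono_toRoot (a b c d : ℤ) : latticeMono (toRoot a b c d) = mono a b c d := by
  simp only [latticeMono, toRoot, Matrix.cons_val]
  congr 1 <;> lia

theorem eval_one_latticeMono (α : Fin 4 → ℤ) : eval 1 (latticeMono α) = 1 := by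
  simp [latticeMono, mono]

theorem U_eq_span_range :
    U = Submodule.span ℂ (Set.range fun s : D4Index => latticeMono (d4Vector s)) := by
  refine congrArg (Submodule.span ℂ) (Set.ext fun p => ⟨?_, ?_⟩)
  · rintro ⟨a, b, c, d, hα, rfl⟩
    obtain ⟨s, hs⟩ := mem_range_d4Vector.2 hα
    exact ⟨s, by simp only [hs, latticeMono_toRoot]⟩
  · rintro ⟨s, rfl⟩
    obtain ⟨a, b, c, d, -, hs⟩ := exists_toRoot_eq_d4Vector s
    exact ⟨a, b, c, d, hs ▸ mem_range_d4Vector.1 ⟨s, rfl⟩, by simp only [← hs, latticeMono_toRoot]⟩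

/-- Homogeneous coordinates `(1, α₁, α₂, α₃, α₄)` of `α`, so that quadratic forms in five variables
restrict to polynomials of degree at most two in `α`. -/
def homCoord (α : Fin 4 → ℤ) : Fin 5 → ℂ := Fin.cons 1 fun i => (α i : ℂ)

theorem homCoord_d4Vector_none : homCoord (d4Vector none) = Pi.single 0 1 := by
  funext i
  refine Fin.cases ?_ (fun i => ?_) i <;> simp [homCoord, d4Vector]

theorem homCoord_d4Vector_some (p : {p : Fin 4 × Fin 4 // p.1 < p.2}) (σ τ : ℤˣ) :
    homCoord (d4Vector (some (p, σ, τ))) =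
      Pi.single 0 1 +
        (((σ : ℤ) : ℂ) • Pi.single p.1.1.succ 1 + ((τ : ℤ) : ℂ) • Pi.single p.1.2.succ 1) := by
  funext i
  refine Fin.cases ?_ (fun i => ?_) i
  · simp [homCoord, d4Vector, Units.smul_def]
  · simp [homCoord, d4Vector, Units.smul_def, Pi.single_apply]

/-- The matrix of `toRoot`, taking `(a, b, c, d)` to the coordinates of `α`. -/
def rootCoordMatrix : Matrix (Fin 4) (Fin 4) ℂ :=
  !![1, 0, 0, 0; -1, 0, 0, 1; 0, 1, 1, -1; 0, 1, -1, 0]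

/-- The differential operator of order one which multiplies `λμνρ² · f_α` by `αᵢ`; the subtracted
constant accounts for the factor `λμνρ²`. -/
def shiftedEuler (i : Fin 4) : P4 →ₗ[ℂ] P4 :=
  (weightedEuler (rootCoordMatrix i) : P4 →ₗ[ℂ] P4) -
    (rootCoordMatrix i ⬝ᵥ ![1, 1, 1, 2]) • LinearMap.id

/-- The five operators which multiply `λμνρ² · f_α` by the homogeneous coordinates of `α`. -/
def coordOp : Fin 5 → P4 →ₗ[ℂ] P4 := Fin.cons LinearMap.id shiftedEuler

theorem shiftedEuler_mono (i : Fin 4) {a b c d : ℤ} (ha : -1 ≤ a) (hb : -1 ≤ b) (hc : -1 ≤ c)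
    (hd : -2 ≤ d) :
    shiftedEuler i (mono a b c d) = (toRoot a b c d i : ℂ) • mono a b c d := by
  obtain ⟨a, rfl⟩ : ∃ k : ℕ, a = k - 1 := ⟨(a + 1).toNat, by lia⟩
  obtain ⟨b, rfl⟩ : ∃ k : ℕ, b = k - 1 := ⟨(b + 1).toNat, by lia⟩
  obtain ⟨c, rfl⟩ : ∃ k : ℕ, c = k - 1 := ⟨(c + 1).toNat, by lia⟩
  obtain ⟨d, rfl⟩ : ∃ k : ℕ, d = k - 2 := ⟨(d + 2).toNat, by lia⟩
  simp only [shiftedEuler, mono_eq_expMonomial, expMonomial, LinearMap.sub_apply,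
    LinearMap.smul_apply, LinearMap.id_apply, Derivation.coeFn_coe, weightedEuler_monomial,
    ← sub_smul, dotProduct, sub_add_cancel, Int.toNat_natCast]
  congr 1
  fin_cases i <;> simp [toRoot, rootCoordMatrix, Fin.sum_univ_four] <;> ring

theorem coordOp_latticeMono (i : Fin 5) (s : D4Index) :
    coordOp i (latticeMono (d4Vector s)) = homCoord (d4Vector s) i • latticeMono (d4Vector s) := by
  cases i using Fin.cases with
  | zero => simp [coordOp, homCoord]
  | succ i =>
    obtain ⟨a, b, c, d, ⟨ha, hb, hc, hd⟩, hs⟩ := exists_toRoot_eq_d4Vector s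
    simp only [coordOp, homCoord, Fin.cons_succ, ← hs, latticeMono_toRoot,
      shiftedEuler_mono i ha hb hc hd]

theorem coordOp_mem_pow (i : Fin 5) {k : ℕ} {p : P4} (hp : p ∈ mIdeal ^ (k + 1)) :
    coordOp i p ∈ mIdeal ^ k := by
  have hp' : p ∈ mIdeal ^ k := Ideal.pow_le_pow_right k.le_succ hp
  cases i using Fin.cases with
  | zero => exact hp'
  | succ i =>
    exact sub_mem (derivation_apply_mem_pow _ hp)
      (Submodule.smul_of_tower_mem _ (rootCoordMatrix i ⬝ᵥ ![1, 1, 1, 2]) hp')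

/-- The matrix of products `yᵢ yⱼ` of homogeneous coordinates of the points `α ∈ D₄ ∪ {0}`. Its rows
are the linear conditions which `𝔪³` imposes on the coefficients of an element of `U`. -/
def jetMatrix : Matrix (Fin 5 × Fin 5) D4Index ℂ :=
  .of fun ij s => homCoord (d4Vector s) ij.1 * homCoord (d4Vector s) ij.2

theorem jetMatrix_mulVec_eq_zero {c : D4Index → ℂ}
    (hc : ∑ s, c s • latticeMono (d4Vector s) ∈ mIdeal ^ 3) : jetMatrix.mulVec c = 0 := by
  funext ⟨i, j⟩
  have hmem : coordOp i (coordOp j (∑ s, c s • latticeMono (d4Vector s))) ∈ mIdeal := by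
    simpa using coordOp_mem_pow i (coordOp_mem_pow j hc)
  rw [mem_mIdeal_iff] at hmem
  simp only [map_sum, map_smul, coordOp_latticeMono, smul_eval, eval_one_latticeMono] at hmem
  rw [Pi.zero_apply, ← hmem, Matrix.mulVec, dotProduct]
  refine Finset.sum_congr rfl fun s _ => ?_
  simp only [jetMatrix, Matrix.of_apply]
  ring

theorem bilinForm_single_add_swap_eq_zero {B : LinearMap.BilinForm ℂ (Fin 5 → ℂ)}
    (hB : ∀ s, B (homCoord (d4Vector s)) (homCoord (d4Vector s)) = 0) (i j : Fin 5) :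
    B (Pi.single i 1) (Pi.single j 1) + B (Pi.single j 1) (Pi.single i 1) = 0 := by
  have origin : B (Pi.single 0 1) (Pi.single 0 1) = 0 := by
    simpa only [homCoord_d4Vector_none] using hB none
  have roots (i j : Fin 4) (hij : i ≠ j) (σ τ : ℤˣ) :
      B (Pi.single 0 1 + (((σ : ℤ) : ℂ) • Pi.single i.succ 1 + ((τ : ℤ) : ℂ) • Pi.single j.succ 1))
        (Pi.single 0 1 + (((σ : ℤ) : ℂ) • Pi.single i.succ 1 + ((τ : ℤ) : ℂ) • Pi.single j.succ 1))
        = 0 := by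
    obtain hij | hij := hij.lt_or_gt
    · simpa only [homCoord_d4Vector_some] using hB (some (⟨(i, j), hij⟩, σ, τ))
    · simpa only [homCoord_d4Vector_some, add_comm (((τ : ℤ) : ℂ) • _)] using
        hB (some (⟨(j, i), hij⟩, τ, σ))
  have three_indices : ∀ i : Fin 4, ∃ j k, i ≠ j ∧ i ≠ k ∧ j ≠ k := by decide
  obtain ⟨mixed, spatial⟩ := apply_add_apply_swap_eq_zero_of_forall_signs
    (e := fun i : Fin 4 => (Pi.single i.succ 1 : Fin 5 → ℂ)) origin roots three_indices
  cases i using Fin.cases <;> cases j using Fin.cases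
  · rw [origin, add_zero]
  · exact mixed _
  · rw [add_comm]
    exact mixed _
  · exact spatial _ _

theorem apply_add_apply_swap_eq_zero_of_transpose_mulVec {a : Fin 5 × Fin 5 → ℂ}
    (ha : jetMatrix.transpose.mulVec a = 0) (i j : Fin 5) : a (i, j) + a (j, i) = 0 := by
  let A : Matrix (Fin 5) (Fin 5) ℂ := .of fun i j => a (i, j)
  have hA (s : D4Index) :
      Matrix.toBilin' A (homCoord (d4Vector s)) (homCoord (d4Vector s)) = 0 := by
    refine Eq.trans ?_ (congrFun ha s)
    simp only [A, Matrix.toBilin'_apply, Matrix.mulVec, dotProduct, jetMatrix,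
      Matrix.transpose_apply, Matrix.of_apply, Fintype.sum_prod_type]
    exact Finset.sum_congr rfl fun i _ => Finset.sum_congr rfl fun j _ => by ring
  simpa only [Matrix.toBilin'_single, A, Matrix.of_apply] using
    bilinForm_single_add_swap_eq_zero hA i j

theorem finrank_ker_jetMatrix_transpose_le :
    Module.finrank ℂ jetMatrix.transpose.mulVecLin.ker ≤ 10 := by
  let upper : jetMatrix.transpose.mulVecLin.ker →ₗ[ℂ] {p : Fin 5 × Fin 5 // p.1 < p.2} → ℂ :=
    LinearMap.funLeft ℂ ℂ Subtype.val ∘ₗ Submodule.subtype _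
  have upper_injective : Function.Injective upper := by
    refine (injective_iff_map_eq_zero upper).2 fun ⟨a, ha⟩ hupper => Subtype.ext (funext ?_)
    have skew := apply_add_apply_swap_eq_zero_of_transpose_mulVec ha
    have above (i j : Fin 5) (hij : i < j) : a (i, j) = 0 := congrFun hupper ⟨(i, j), hij⟩
    rintro ⟨i, j⟩
    obtain hij | rfl | hij := lt_trichotomy i j
    · exact above i j hij
    · exact self_eq_neg.1 (eq_neg_of_add_eq_zero_left (skew i i))
    · simpa [above j i hij] using skew i j
  refine (LinearMap.finrank_le_finrank_of_injective upper_injective).trans ?_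
  rw [Module.finrank_fintype_fun_eq_card]
  decide

theorem finrank_ker_jetMatrix_le : Module.finrank ℂ jetMatrix.mulVecLin.ker ≤ 10 := by
  have hker := finrank_ker_mulVecLin_add_card jetMatrix
  have hrows : Fintype.card (Fin 5 × Fin 5) = 25 := rfl
  have hcols : Fintype.card D4Index = 25 := rfl
  have hleft := finrank_ker_jetMatrix_transpose_le
  lia

theorem U_inf_mIdeal_pow_three_le_map_ker_jetMatrix :
    U ⊓ Submodule.restrictScalars ℂ (mIdeal ^ 3) ≤
      jetMatrix.mulVecLin.ker.map
        (Fintype.linearCombination ℂ fun s : D4Index => latticeMono (d4Vector s)) := by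
  rintro p ⟨hpU, hp⟩
  rw [U_eq_span_range, SetLike.mem_coe, Submodule.mem_span_range_iff_exists_fun] at hpU
  obtain ⟨c, rfl⟩ := hpU
  exact ⟨c, jetMatrix_mulVec_eq_zero hp, rfl⟩

theorem finrank_U_inf_mIdeal_pow_three_le :
    Module.finrank ℂ ↥(U ⊓ Submodule.restrictScalars ℂ (mIdeal ^ 3)) ≤ 10 :=
  (Submodule.finrank_mono U_inf_mIdeal_pow_three_le_map_ker_jetMatrix).trans
    ((Submodule.finrank_map_le _ _).trans finrank_ker_jetMatrix_le)

theorem statement2 :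
    (∀ k : Fin 10, funcs k ∈ U ⊓ Submodule.restrictScalars ℂ (mIdeal ^ 3)) ∧
    LinearIndependent ℂ funcs ∧
    Submodule.span ℂ (Set.range funcs) = U ⊓ Submodule.restrictScalars ℂ (mIdeal ^ 3) := by
  have funcs_mem (k : Fin 10) : funcs k ∈ U ⊓ Submodule.restrictScalars ℂ (mIdeal ^ 3) :=
    ⟨funcs_mem_U k, funcs_mem_pow_three k⟩
  have : FiniteDimensional ℂ ↥(U ⊓ Submodule.restrictScalars ℂ (mIdeal ^ 3)) :=
    Submodule.finiteDimensional_of_le U_inf_mIdeal_pow_three_le_map_ker_jetMatrix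
  exact ⟨funcs_mem, linearIndependent_funcs,
    span_range_eq_of_linearIndependent linearIndependent_funcs funcs_mem
      (by simpa using finrank_U_inf_mIdeal_pow_three_le)⟩

end Stmt2
end
end

section
/- The vector space of homogeneous cubic forms in ℂ[y₁,y₂,y₃,y₄] vanishing at all 12 points has dimension exactly 8; equivalently, the 12 points impose independent conditions on the 20-dimensional space of cubic forms in four variables. -/
/-!
Statement 3: the space of homogeneous cubics in 4 variables vanishing at the
12 points (coordinate points and `(1:±1:±1:±1)`) has dimension exactly 8;
equivalently the 12 points impose independent conditions on the
20-dimensional space of cubic forms.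
-/

noncomputable section

namespace Stmt3

open MvPolynomial

/-- Representative vectors of the 12 points: the four coordinate points
together with the eight points `(1:±1:±1:±1)`. -/
def pts : Set (Fin 4 → ℂ) :=
  {x | (∃ i, x = Pi.single i 1) ∨
       (∃ ε : Fin 3 → Bool, x = Fin.cons 1 fun i => if ε i then -1 else 1)}

/-- Polynomials vanishing at all 12 points. -/
def vanishing : Submodule ℂ (MvPolynomial (Fin 4) ℂ) :=
  ⨅ p ∈ pts, LinearMap.ker (aeval (R := ℂ) p).toLinearMap

/-!
Evaluation at the points is a linear map from forms of degree `d` to functions on the points, so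
by rank-nullity it suffices to exhibit forms interpolating every Kronecker delta. For a sign point
`(1 : s₁ : ⋯ : sₙ)` the form `y₀ ^ (d - n) * ∏ (y₀ + sᵢ yᵢ)` vanishes at all other sign points, and
at all coordinate points except `(1 : 0 : ⋯ : 0)`. For the `i`-th coordinate point the form
`yᵢ ^ (d - 2) * (yᵢ² - yⱼ²)` vanishes at all the other points, and it also corrects the value
of the product form at `(1 : 0 : ⋯ : 0)`.
-/

lemma surjective_pi_of_dual_family {R M ι : Type*} [CommSemiring R] [AddCommMonoid M] [Module R M]
    [Finite ι] [DecidableEq ι] (φ : ι → Module.Dual R M) (w : ι → M)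
    (hw : ∀ i j, φ j (w i) = if i = j then 1 else 0) :
    Function.Surjective (LinearMap.pi φ) := by
  intro v
  have := Fintype.ofFinite ι
  refine ⟨∑ i, v i • w i, funext fun j => ?_⟩
  simp [hw]

lemma finrank_inf_iInf_ker_add_card {K V ι : Type*} [Field K] [AddCommGroup V] [Module K V]
    [Fintype ι] [DecidableEq ι] (W : Submodule K V) [Module.Finite K W]
    (φ : ι → Module.Dual K V) (w : ι → V) (hwW : ∀ i, w i ∈ W)
    (hw : ∀ i j, φ j (w i) = if i = j then 1 else 0) :
    Module.finrank K ↥(W ⊓ ⨅ i, LinearMap.ker (φ i)) + Fintype.card ι = Module.finrank K W := by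
  let ev : W →ₗ[K] ι → K := LinearMap.pi fun i => φ i ∘ₗ W.subtype
  have ev_surjective : Function.Surjective ev :=
    surjective_pi_of_dual_family _ (fun i => ⟨w i, hwW i⟩) hw
  have map_ker_ev : (LinearMap.ker ev).map W.subtype = W ⊓ ⨅ i, LinearMap.ker (φ i) := by
    simp only [ev, LinearMap.ker_pi, LinearMap.ker_comp, ← Submodule.comap_iInf,
      Submodule.map_comap_subtype]
  have rank_nullity := ev.finrank_range_add_finrank_ker
  rw [LinearMap.range_eq_top.mpr ev_surjective, finrank_top, Module.finrank_fintype_fun_eq_card]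
    at rank_nullity
  rw [← map_ker_ev, Submodule.finrank_map_subtype_eq, add_comm, rank_nullity]

lemma finrank_homogeneousSubmodule (σ R : Type*) [Fintype σ] [CommSemiring R]
    [StrongRankCondition R] (d : ℕ) :
    Module.finrank R (homogeneousSubmodule σ R d) = (Fintype.card σ).multichoose d := by
  classical
  have setOf_degree_eq : {m : σ →₀ ℕ | m.degree = d} =
      ((Finset.univ : Finset σ).finsuppAntidiag d : Set (σ →₀ ℕ)) := by
    ext m
    simp [Finset.mem_finsuppAntidiag, Finsupp.degree_eq_sum]
  rw [homogeneousSubmodule_eq_finsupp_supported, setOf_degree_eq]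
  refine (Module.finrank_eq_card_basis (basisRestrictSupport R _)).trans ?_
  simp [Finset.card_finsuppAntidiag_nat_eq_multichoose]

lemma restrictScalars_vanishingIdeal (K : Type*) {σ : Type*} [Field K] (S : Set (σ → K)) :
    (vanishingIdeal K S).restrictScalars K =
      ⨅ p ∈ S, LinearMap.ker (aeval (R := K) p).toLinearMap := by
  ext f
  simp [mem_vanishingIdeal_iff]

lemma finrank_homogeneousSubmodule_inf_vanishingIdeal_add_card {K σ ι : Type*} [Field K]
    [Finite σ] [Fintype ι] [DecidableEq ι] {d : ℕ} (p : ι → σ → K) (f : ι → MvPolynomial σ K)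
    (hf : ∀ i, (f i).IsHomogeneous d)
    (hfp : ∀ i j, eval (p j) (f i) = if i = j then 1 else 0) :
    Module.finrank K ↥(homogeneousSubmodule σ K d ⊓
        (vanishingIdeal K (Set.range p)).restrictScalars K) + Fintype.card ι =
      Module.finrank K (homogeneousSubmodule σ K d) := by
  have : Module.Finite K (homogeneousSubmodule σ K d) :=
    Module.Finite.iff_fg.mpr (homogeneousSubmodule_fg σ K d)
  rw [restrictScalars_vanishingIdeal, iInf_range]
  exact finrank_inf_iInf_ker_add_card _ (fun i => (aeval (p i)).toLinearMap) f hf hfp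

section CoordForm

variable {R σ : Type*} [CommRing R] {d : ℕ} {i j : σ}

/-- For `d ≥ 3` and `i ≠ j`, a form of degree `d` separating the `i`-th coordinate point from the
other coordinate points and from all points with `xᵢ² = xⱼ²`. -/
def coordForm (R : Type*) {σ : Type*} [CommRing R] (d : ℕ) (i j : σ) : MvPolynomial σ R :=
  X i ^ (d - 2) * (X i ^ 2 - X j ^ 2)

lemma isHomogeneous_coordForm (hd : 2 ≤ d) : (coordForm R d i j).IsHomogeneous d := by
  have h := (isHomogeneous_X_pow (R := R) i (d - 2)).mul
    ((isHomogeneous_X_pow i 2).sub (isHomogeneous_X_pow j 2))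
  rwa [Nat.sub_add_cancel hd] at h

lemma eval_coordForm_of_sq_eq {x : σ → R} (hx : x i ^ 2 = x j ^ 2) :
    eval x (coordForm R d i j) = 0 := by
  simp [coordForm, hx]

lemma eval_single_coordForm [DecidableEq σ] (hd : 3 ≤ d) (hij : i ≠ j) (k : σ) :
    eval (Pi.single k 1) (coordForm R d i j) = if i = k then 1 else 0 := by
  have hd2 : d - 2 ≠ 0 := by omega
  obtain rfl | hik := eq_or_ne i k
  · simp [coordForm, hij.symm]
  · simp [coordForm, hik, hd2]

end CoordForm

section SignPoint

variable {R : Type*} [CommRing R] {n : ℕ}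

/-- The vector `(1, ±1, …, ±1)` whose `i`-th sign after the leading `1` is negative exactly when
`ε i` is `true`. -/
def signPoint (R : Type*) [CommRing R] {n : ℕ} (ε : Fin n → Bool) : Fin (n + 1) → R :=
  Fin.cons 1 fun i => if ε i then -1 else 1

lemma signPoint_zero (ε : Fin n → Bool) : signPoint R ε 0 = 1 := rfl

lemma signPoint_sq (ε : Fin n → Bool) (i : Fin (n + 1)) : signPoint R ε i ^ 2 = 1 := by
  cases i using Fin.cases with
  | zero => simp [signPoint]
  | succ i => cases h : ε i <;> simp [signPoint, h]

lemma eval_signPoint_coordForm (d : ℕ) (i j : Fin (n + 1)) (ε : Fin n → Bool) :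
    eval (signPoint R ε) (coordForm R d i j) = 0 :=
  eval_coordForm_of_sq_eq (by rw [signPoint_sq, signPoint_sq])

lemma one_add_signPoint_mul_signPoint (ε δ : Fin n → Bool) (i : Fin n) :
    1 + signPoint R ε i.succ * signPoint R δ i.succ = if ε i = δ i then 2 else 0 := by
  cases hε : ε i <;> cases hδ : δ i <;> simp [signPoint, hε, hδ, one_add_one_eq_two]

/-- For `d ≥ n`, a product of `d` linear forms separating the sign point of `ε` from the other
sign points. -/
def signProduct (R : Type*) [CommRing R] {n : ℕ} (d : ℕ) (ε : Fin n → Bool) :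
    MvPolynomial (Fin (n + 1)) R :=
  X 0 ^ (d - n) * ∏ i : Fin n, (X 0 + C (signPoint R ε i.succ) * X i.succ)

variable {d : ℕ}

lemma isHomogeneous_signProduct (hnd : n ≤ d) (ε : Fin n → Bool) :
    (signProduct R d ε).IsHomogeneous d := by
  have factor (i : Fin n) : (X 0 + C (signPoint R ε i.succ) * X i.succ).IsHomogeneous 1 :=
    (isHomogeneous_X R 0).add (isHomogeneous_C_mul_X _ _)
  have h := (isHomogeneous_X_pow 0 (d - n)).mul
    (IsHomogeneous.prod Finset.univ _ _ fun i _ => factor i)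
  simpa [signProduct, Nat.sub_add_cancel hnd] using h

lemma eval_signPoint_signProduct (ε δ : Fin n → Bool) :
    eval (signPoint R δ) (signProduct R d ε) = if ε = δ then 2 ^ n else 0 := by
  simp [signProduct, signPoint_zero, one_add_signPoint_mul_signPoint, Finset.prod_ite_zero,
    funext_iff]

lemma eval_single_signProduct (hnd : n ≤ d) (hd : 2 ≤ d) (ε : Fin n → Bool) (k : Fin (n + 1)) :
    eval (Pi.single k 1) (signProduct R d ε) = if 0 = k then 1 else 0 := by
  cases k using Fin.cases with
  | zero => simp [signProduct]
  | succ k =>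
    obtain hlt | rfl := hnd.lt_or_eq
    · simp [signProduct, (Nat.sub_pos_of_lt hlt).ne', (Fin.succ_ne_zero k).symm]
    · have : Nontrivial (Fin n) := Fin.nontrivial_iff_two_le.mpr hd
      obtain ⟨i, hik⟩ := exists_ne k
      have factor_eq_zero :
          eval (Pi.single k.succ (1 : R)) (X 0 + C (signPoint R ε i.succ) * X i.succ) = 0 := by
        simp [hik]
      rw [signProduct, map_mul, map_prod, Finset.prod_eq_zero (Finset.mem_univ i) factor_eq_zero]
      simp [(Fin.succ_ne_zero k).symm]

end SignPoint

section CoordSignPoints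

variable {K : Type*} [Field K] {n d : ℕ}

/-- The coordinate points and the sign points of projective `n`-space, as one family of
representative vectors. -/
def coordSignPoint (R : Type*) [CommRing R] (n : ℕ) :
    Fin (n + 1) ⊕ (Fin n → Bool) → Fin (n + 1) → R :=
  Sum.elim (fun i => Pi.single i 1) (signPoint R)

/-- The forms of degree `d` dual to the points `coordSignPoint K n`, for `1 ≤ n ≤ d`, `3 ≤ d` and
`2 ≠ 0` in `K`. -/
def dualForm (K : Type*) [Field K] (n d : ℕ) :
    Fin (n + 1) ⊕ (Fin n → Bool) → MvPolynomial (Fin (n + 1)) K :=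
  Sum.elim (fun i => coordForm K d i (i + 1))
    fun ε => C (2 ^ n)⁻¹ * (signProduct K d ε - coordForm K d 0 1)

lemma isHomogeneous_dualForm (hnd : n ≤ d) (hd : 2 ≤ d) :
    ∀ k, (dualForm K n d k).IsHomogeneous d
  | .inl _ => isHomogeneous_coordForm hd
  | .inr ε => ((isHomogeneous_signProduct hnd ε).sub (isHomogeneous_coordForm hd)).C_mul _

lemma eval_coordSignPoint_dualForm [NeZero (2 : K)] (hn : n ≠ 0) (hnd : n ≤ d) (hd : 3 ≤ d)
    (k l : Fin (n + 1) ⊕ (Fin n → Bool)) :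
    eval (coordSignPoint K n l) (dualForm K n d k) = if k = l then 1 else 0 := by
  have two_pow_ne_zero : (2 : K) ^ n ≠ 0 := pow_ne_zero n two_ne_zero
  have ne_add_one (i : Fin (n + 1)) : i ≠ i + 1 := by simp [hn]
  have zero_ne_one : (0 : Fin (n + 1)) ≠ 1 := by simp [hn]
  rcases k with i | ε <;> rcases l with j | δ
  · simp [coordSignPoint, dualForm, eval_single_coordForm hd (ne_add_one i)]
  · simp [coordSignPoint, dualForm, eval_signPoint_coordForm]
  · simp [coordSignPoint, dualForm, eval_single_coordForm hd zero_ne_one,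
      eval_single_signProduct hnd (by omega)]
  · simp [coordSignPoint, dualForm, eval_signPoint_coordForm, eval_signPoint_signProduct,
      two_pow_ne_zero]

theorem statement3_general (K : Type*) [Field K] [NeZero (2 : K)] {n d : ℕ} (hn : n ≠ 0)
    (hnd : n ≤ d) (hd : 3 ≤ d) :
    Module.finrank K ↥(homogeneousSubmodule (Fin (n + 1)) K d ⊓
        (vanishingIdeal K (Set.range (coordSignPoint K n))).restrictScalars K) + (n + 1 + 2 ^ n) =
      (n + d).choose d ∧
    Module.finrank K ↥(homogeneousSubmodule (Fin (n + 1)) K d) = (n + d).choose d := by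
  have finrank_forms :
      Module.finrank K ↥(homogeneousSubmodule (Fin (n + 1)) K d) = (n + d).choose d := by
    rw [finrank_homogeneousSubmodule, Fintype.card_fin, Nat.multichoose_eq, add_right_comm,
      Nat.add_sub_cancel]
  have independent_conditions := finrank_homogeneousSubmodule_inf_vanishingIdeal_add_card
    (coordSignPoint K n) (dualForm K n d) (isHomogeneous_dualForm hnd (by omega))
    (eval_coordSignPoint_dualForm hn hnd hd)
  have card_points : Fintype.card (Fin (n + 1) ⊕ (Fin n → Bool)) = n + 1 + 2 ^ n := by simp
  rw [card_points, finrank_forms] at independent_conditions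
  exact ⟨independent_conditions, finrank_forms⟩

end CoordSignPoints

lemma pts_eq_range : pts = Set.range (coordSignPoint ℂ 3) := by
  ext x
  simp only [pts, coordSignPoint, Set.Sum.elim_range, Set.mem_union, Set.mem_range,
    Set.mem_ofPred_eq, signPoint, eq_comm (a := x)]

lemma vanishing_eq_restrictScalars_vanishingIdeal :
    vanishing = (vanishingIdeal ℂ (Set.range (coordSignPoint ℂ 3))).restrictScalars ℂ := by
  rw [restrictScalars_vanishingIdeal, ← pts_eq_range, vanishing]

theorem statement3 :
    Module.finrank ℂ ↥(homogeneousSubmodule (Fin 4) ℂ 3 ⊓ vanishing) = 8 ∧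
    Module.finrank ℂ ↥(homogeneousSubmodule (Fin 4) ℂ 3) = 20 := by
  rw [vanishing_eq_restrictScalars_vanishingIdeal]
  exact (statement3_general ℂ three_ne_zero le_rfl le_rfl).imp_left Nat.add_right_cancel

end Stmt3
end
end

section
/- Among the 12 points, exactly 16 of the 3-element subsets are collinear (i.e., representative vectors in ℂ⁴ span a subspace of dimension at most 2), no 4 of the 12 points are collinear, and each collinear triple contains exactly one coordinate point, exactly one point (1:±1:±1:±1) with an even number of minus signs, and exactly one point (1:±1:±1:±1) with an odd number of minus signs. -/
/-!
Statement 4: among the 12 points, exactly 16 of the 3-element subsets are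
collinear, no 4 points are collinear, and each collinear triple contains
exactly one coordinate point, one even-sign point `(1:±1:±1:±1)` and one
odd-sign point.
-/

noncomputable section

namespace Stmt4

/-- The four coordinate points. -/
def coordSet : Set (Fin 4 → ℂ) := {x | ∃ i, x = Pi.single i 1}

/-- The point `(1:±1:±1:±1)` with signs given by `ε` (`true` = minus sign). -/
def signPt (ε : Fin 3 → Bool) : Fin 4 → ℂ :=
  Fin.cons 1 fun i => if ε i then -1 else 1

/-- The points `(1:±1:±1:±1)` with an even number of minus signs. -/
def evenSet : Set (Fin 4 → ℂ) :=
  {x | ∃ ε : Fin 3 → Bool,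
    x = signPt ε ∧ Even (Finset.univ.filter (fun i => ε i = true)).card}

/-- The points `(1:±1:±1:±1)` with an odd number of minus signs. -/
def oddSet : Set (Fin 4 → ℂ) :=
  {x | ∃ ε : Fin 3 → Bool,
    x = signPt ε ∧ Odd (Finset.univ.filter (fun i => ε i = true)).card}

/-- The 12 points. -/
def pts : Set (Fin 4 → ℂ) := coordSet ∪ evenSet ∪ oddSet

/-- A set of points of ℙ³ (given by representative vectors) is collinear if
the representatives span a subspace of dimension at most 2. -/
def Collinear' (T : Set (Fin 4 → ℂ)) : Prop :=
  Module.finrank ℂ ↥(Submodule.span ℂ T) ≤ 2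

/-!
The twelve points and sixteen lines form the Reye configuration. Call a pair of points ordinary if
the line through it contains no third point of the configuration. Two coordinate points are
ordinary because a vector in their span has at most two nonzero entries. Two sign points of equal
parity differ in exactly two of the four coordinates; hence after deleting any coordinate they are
still linearly independent, so no coordinate point lies on their line, and comparing entries shows
that no third sign point does either. A line with at least three of the points therefore meets
each of the three classes at most once, hence exactly once. Conversely, the line through a
coordinate point `eᵢ` and an even point contains the odd point obtained by flipping the `i`-th
sign, so the collinear triples correspond to the `4 * 4` pairs (coordinate point, even point).
-/

section LinearAlgebra

open Module Submodule

variable {K V ι : Type*} [Field K] [AddCommGroup V] [Module K V]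

lemma finrank_span_pair_le_two (x y : V) : finrank K (span K {x, y}) ≤ 2 := by
  classical
  have h := (finrank_span_finset_le_card (R := K) ({x, y} : Finset V)).trans Finset.card_le_two
  rwa [Finset.coe_pair] at h

lemma mem_span_pair_of_finrank_span_le_two [FiniteDimensional K V] {T : Set V}
    (hT : finrank K (span K T) ≤ 2) {x y z : V} (hx : x ∈ T) (hy : y ∈ T) (hz : z ∈ T)
    (hxy : LinearIndependent K ![x, y]) : z ∈ span K {x, y} := by
  have hle : span K {x, y} ≤ span K T := span_mono (Set.pair_subset hx hy)
  have hfin : finrank K (span K {x, y}) = 2 := by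
    rw [← Matrix.range_cons_cons_empty x y ![], finrank_span_eq_card hxy, Fintype.card_fin]
  rw [eq_of_le_of_finrank_le hle (hfin ▸ hT)]
  exact subset_span hz

variable (K) in
/-- The pair `x, y` spans an ordinary line of the point set `P`, in the sense of Sylvester and
Gallai: `x` and `y` represent distinct points of projective space, and the line joining them
contains no third point of `P`. -/
def SpansOrdinaryLine (P : Set V) (x y : V) : Prop :=
  LinearIndependent K ![x, y] ∧ ∀ z ∈ P, z ∈ span K {x, y} → z = x ∨ z = y

lemma subsingleton_inter_of_pairwise_spansOrdinaryLine [FiniteDimensional K V] {P C T : Set V}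
    (hC : C.Pairwise (SpansOrdinaryLine K P)) (hTP : T ⊆ P) (hcard : 3 ≤ T.ncard)
    (hT : finrank K (span K T) ≤ 2) : (T ∩ C).Subsingleton := by
  rintro x ⟨hxT, hxC⟩ y ⟨hyT, hyC⟩
  by_contra hxy
  obtain ⟨hind, hord⟩ := hC hxC hyC hxy
  obtain ⟨z, hzT, hz⟩ : ∃ z ∈ T, z ∉ ({x, y} : Set V) :=
    Set.exists_mem_notMem_of_ncard_lt_ncard (by rw [Set.ncard_pair hxy]; exact hcard)
  exact hz (hord z (hTP hzT) (mem_span_pair_of_finrank_span_le_two hT hxT hyT hzT hind))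

lemma eq_zero_of_minor_ne {x y : ι → K} {c d : ι} (hxy : x c * y d ≠ x d * y c) {a b : K}
    (hc : a * x c + b * y c = 0) (hd : a * x d + b * y d = 0) : a = 0 ∧ b = 0 := by
  have hminor : x c * y d - x d * y c ≠ 0 := sub_ne_zero.mpr hxy
  constructor <;> apply (mul_eq_zero_iff_left hminor).mp
  · linear_combination y d * hc - y c * hd
  · linear_combination x c * hd - x d * hc

lemma linearIndependent_pair_of_minor_ne {x y : ι → K} {c d : ι}
    (hxy : x c * y d ≠ x d * y c) : LinearIndependent K ![x, y] :=
  LinearIndependent.pair_iff.mpr fun _ _ h ↦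
    eq_zero_of_minor_ne hxy (congrFun h c) (congrFun h d)

lemma eq_zero_of_mem_span_pair_of_minor_ne {x y z : ι → K} {c d : ι}
    (hxy : x c * y d ≠ x d * y c) (hz : z ∈ span K {x, y}) (hc : z c = 0) (hd : z d = 0) :
    z = 0 := by
  obtain ⟨a, b, rfl⟩ := mem_span_pair.mp hz
  obtain ⟨rfl, rfl⟩ := eq_zero_of_minor_ne hxy hc hd
  simp only [zero_smul, add_zero]

lemma apply_eq_zero_of_mem_span_single_pair [DecidableEq ι] {i j c : ι} {z : ι → K}
    (hz : z ∈ span K {Pi.single i 1, Pi.single j 1}) (hi : c ≠ i) (hj : c ≠ j) : z c = 0 := by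
  obtain ⟨a, b, rfl⟩ := mem_span_pair.mp hz
  simp [hi, hj]

end LinearAlgebra

open Submodule

/-- The sign pattern of `signPt ε` on all four coordinates, with `true` for a minus sign. -/
def signs (ε : Fin 3 → Bool) : Fin 4 → Bool := Fin.cons false ε

/-- The number of minus signs of `signPt ε`; its parity separates `evenSet` from `oddSet`. -/
def negCount (ε : Fin 3 → Bool) : ℕ := (Finset.univ.filter fun i ↦ ε i = true).card

lemma signPt_apply (ε : Fin 3 → Bool) (c : Fin 4) :
    signPt ε c = if signs ε c then -1 else 1 := by
  cases c using Fin.cases <;> simp [signPt, signs]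

lemma signPt_apply_ne_zero (ε : Fin 3 → Bool) (c : Fin 4) : signPt ε c ≠ 0 := by
  rw [signPt_apply]
  split <;> simp

lemma signPt_apply_eq_iff {ε δ : Fin 3 → Bool} {c : Fin 4} :
    signPt ε c = signPt δ c ↔ signs ε c = signs δ c := by
  rw [signPt_apply, signPt_apply]
  cases signs ε c <;> cases signs δ c <;> norm_num

lemma signs_injective : Function.Injective signs :=
  Fin.cons_right_injective (α := fun _ ↦ Bool) false

lemma signPt_injective : Function.Injective signPt := fun _ _ h ↦
  signs_injective (funext fun c ↦ signPt_apply_eq_iff.mp (congrFun h c))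

lemma signPt_minor_ne {ε δ : Fin 3 → Bool} {c d : Fin 4} (hc : signs ε c = signs δ c)
    (hd : signs ε d ≠ signs δ d) :
    signPt ε c * signPt δ d ≠ signPt ε d * signPt δ c := by
  rw [signPt_apply_eq_iff.mpr hc, mul_comm (signPt ε d)]
  intro h
  exact hd (signPt_apply_eq_iff.mp (mul_left_cancel₀ (signPt_apply_ne_zero δ c) h).symm)

lemma single_ne_signPt (i : Fin 4) (ε : Fin 3 → Bool) : Pi.single i 1 ≠ signPt ε := by
  obtain ⟨c, hc⟩ := exists_ne i
  intro h
  exact signPt_apply_ne_zero ε c (by rw [← h, Pi.single_eq_of_ne hc])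

lemma linearIndependent_single_signPt (i : Fin 4) (ε : Fin 3 → Bool) :
    LinearIndependent ℂ ![Pi.single i 1, signPt ε] := by
  obtain ⟨c, hc⟩ := exists_ne i
  apply linearIndependent_pair_of_minor_ne (c := i) (d := c)
  simpa [hc] using signPt_apply_ne_zero ε c

lemma linearIndependent_signPt_pair {ε δ : Fin 3 → Bool} (h : ε ≠ δ) :
    LinearIndependent ℂ ![signPt ε, signPt δ] := by
  obtain ⟨d, hd⟩ := Function.ne_iff.mp (signs_injective.ne h)
  exact linearIndependent_pair_of_minor_ne (signPt_minor_ne (c := 0) rfl hd)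

lemma eq_or_eq_of_signPt_mem_span_pair {ε δ ζ : Fin 3 → Bool}
    (h : signPt ζ ∈ span ℂ {signPt ε, signPt δ}) : ζ = ε ∨ ζ = δ := by
  obtain ⟨a, b, hab⟩ := mem_span_pair.mp h
  have hcoord (c : Fin 4) : a * signPt ε c + b * signPt δ c = signPt ζ c := congrFun hab c
  have hsum : a + b = 1 := by simpa [signPt] using hcoord 0
  by_contra! hne
  obtain ⟨c, hc⟩ := Function.ne_iff.mp (signs_injective.ne hne.1)
  obtain ⟨d, hd⟩ := Function.ne_iff.mp (signs_injective.ne hne.2)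
  -- An entry of `ζ` differing from that of `ε` forces `a = 0`; likewise `b = 0` for `δ`.
  have ha : a = 0 := by
    have := hcoord c
    simp only [signPt_apply] at this
    grind
  have hb : b = 0 := by
    have := hcoord d
    simp only [signPt_apply] at this
    grind
  simp [ha, hb] at hsum

lemma exists_ne_signs_eq_and_exists_ne_signs_ne : ∀ {ε δ : Fin 3 → Bool}, ε ≠ δ →
    (Even (negCount ε) ↔ Even (negCount δ)) → ∀ k : Fin 4,
    (∃ c ≠ k, signs ε c = signs δ c) ∧ ∃ d ≠ k, signs ε d ≠ signs δ d := by
  decide +kernel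

lemma single_notMem_span_signPt_pair {ε δ : Fin 3 → Bool} (hne : ε ≠ δ)
    (hpar : Even (negCount ε) ↔ Even (negCount δ)) (k : Fin 4) :
    Pi.single k 1 ∉ span ℂ {signPt ε, signPt δ} := by
  obtain ⟨⟨c, hck, hc⟩, d, hdk, hd⟩ := exists_ne_signs_eq_and_exists_ne_signs_ne hne hpar k
  intro hmem
  have hzero : (Pi.single k 1 : Fin 4 → ℂ) = 0 :=
    eq_zero_of_mem_span_pair_of_minor_ne (signPt_minor_ne hc hd) hmem
      (Pi.single_eq_of_ne hck 1) (Pi.single_eq_of_ne hdk 1)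
  exact one_ne_zero (Pi.single_eq_zero_iff.mp hzero)

lemma evenSet_eq_image : evenSet = signPt '' {ε | Even (negCount ε)} := by
  ext x
  exact ⟨fun ⟨ε, hx, hε⟩ ↦ ⟨ε, hε, hx.symm⟩, fun ⟨ε, hε, hx⟩ ↦ ⟨ε, hx.symm, hε⟩⟩

lemma coordSet_eq_range : coordSet = Set.range fun i ↦ Pi.single i 1 := by
  ext x
  exact exists_congr fun _ ↦ eq_comm

lemma coordSet_subset_pts : coordSet ⊆ pts := fun _ hx ↦ .inl (.inl hx)

lemma evenSet_subset_pts : evenSet ⊆ pts := fun _ hx ↦ .inl (.inr hx)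

lemma pts_cases {x : Fin 4 → ℂ} (hx : x ∈ pts) :
    (∃ i, x = Pi.single i 1) ∨ ∃ ε, x = signPt ε := by
  rcases hx with (hx | ⟨ε, rfl, -⟩) | ⟨ε, rfl, -⟩
  exacts [.inl hx, .inr ⟨ε, rfl⟩, .inr ⟨ε, rfl⟩]

lemma pts_finite : pts.Finite := by
  refine ((Set.finite_range fun i ↦ Pi.single i 1).union (Set.finite_range signPt)).subset ?_
  intro x hx
  rcases pts_cases hx with ⟨i, rfl⟩ | ⟨ε, rfl⟩
  exacts [.inl ⟨i, rfl⟩, .inr ⟨ε, rfl⟩]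

lemma disjoint_coordSet_evenSet : Disjoint coordSet evenSet :=
  Set.disjoint_left.mpr fun _ ⟨i, hi⟩ ⟨ε, hε, _⟩ ↦ single_ne_signPt i ε (hi.symm.trans hε)

lemma disjoint_coordSet_oddSet : Disjoint coordSet oddSet :=
  Set.disjoint_left.mpr fun _ ⟨i, hi⟩ ⟨ε, hε, _⟩ ↦ single_ne_signPt i ε (hi.symm.trans hε)

lemma disjoint_evenSet_oddSet : Disjoint evenSet oddSet := by
  rw [Set.disjoint_left]
  rintro _ ⟨ε, rfl, hε⟩ ⟨δ, hδ, hodd⟩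
  obtain rfl := signPt_injective hδ
  exact Nat.not_even_iff_odd.mpr hodd hε

lemma ncard_coordSet : coordSet.ncard = 4 := by
  rw [coordSet_eq_range, Set.ncard_range_of_injective
    (Pi.linearIndependent_single_one (Fin 4) ℂ).injective, Nat.card_fin]

lemma ncard_evenSet : evenSet.ncard = 4 := by
  have hcard : (Finset.univ.filter fun ε ↦ Even (negCount ε)).card = 4 := by decide +kernel
  rw [evenSet_eq_image, Set.ncard_image_of_injective _ signPt_injective, ← hcard,
    ← Set.ncard_coe_finset, Finset.coe_filter_univ]

lemma ncard_eq_sum_of_subset_pts {T : Set (Fin 4 → ℂ)} (hT : T ⊆ pts) :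
    T.ncard = (T ∩ coordSet).ncard + (T ∩ evenSet).ncard + (T ∩ oddSet).ncard := by
  have hfin : T.Finite := pts_finite.subset hT
  have hinter {C D : Set (Fin 4 → ℂ)} (hCD : Disjoint C D) :
      (T ∩ (C ∪ D)).ncard = (T ∩ C).ncard + (T ∩ D).ncard := by
    rw [Set.inter_union_distrib_left]
    exact Set.ncard_union_eq (hCD.mono Set.inter_subset_right Set.inter_subset_right)
      (hfin.inter_of_left C) (hfin.inter_of_left D)
  rw [← hinter disjoint_coordSet_evenSet,
    ← hinter (Set.disjoint_union_left.mpr ⟨disjoint_coordSet_oddSet, disjoint_evenSet_oddSet⟩)]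
  exact congrArg Set.ncard (Set.inter_eq_left.mpr hT).symm

lemma pairwise_spansOrdinaryLine_coordSet : coordSet.Pairwise (SpansOrdinaryLine ℂ pts) := by
  rintro _ ⟨i, rfl⟩ _ ⟨j, rfl⟩ hne
  have hij : i ≠ j := fun h ↦ hne (h ▸ rfl)
  refine ⟨linearIndependent_pair_of_minor_ne (c := i) (d := j) (by simp [hij]), ?_⟩
  intro z hz hspan
  rcases pts_cases hz with ⟨k, rfl⟩ | ⟨ε, rfl⟩
  · by_contra! hk
    have hki : k ≠ i := fun h ↦ hk.1 (h ▸ rfl)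
    have hkj : k ≠ j := fun h ↦ hk.2 (h ▸ rfl)
    simpa using apply_eq_zero_of_mem_span_single_pair hspan hki hkj
  · obtain ⟨c, hci, hcj⟩ : ∃ c, c ≠ i ∧ c ≠ j :=
      Fin.exists_ne_and_ne_of_two_lt i j (by norm_num)
    exact absurd (apply_eq_zero_of_mem_span_single_pair hspan hci hcj) (signPt_apply_ne_zero ε c)

lemma spansOrdinaryLine_signPt {ε δ : Fin 3 → Bool} (hne : ε ≠ δ)
    (hpar : Even (negCount ε) ↔ Even (negCount δ)) :
    SpansOrdinaryLine ℂ pts (signPt ε) (signPt δ) := by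
  refine ⟨linearIndependent_signPt_pair hne, fun z hz hspan ↦ ?_⟩
  rcases pts_cases hz with ⟨k, rfl⟩ | ⟨ζ, rfl⟩
  · exact absurd hspan (single_notMem_span_signPt_pair hne hpar k)
  · exact (eq_or_eq_of_signPt_mem_span_pair hspan).imp (congrArg signPt) (congrArg signPt)

lemma pairwise_spansOrdinaryLine_evenSet : evenSet.Pairwise (SpansOrdinaryLine ℂ pts) := by
  rintro _ ⟨ε, rfl, hε⟩ _ ⟨δ, rfl, hδ⟩ hne
  exact spansOrdinaryLine_signPt (ne_of_apply_ne signPt hne) (iff_of_true hε hδ)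

lemma pairwise_spansOrdinaryLine_oddSet : oddSet.Pairwise (SpansOrdinaryLine ℂ pts) := by
  rintro _ ⟨ε, rfl, hε⟩ _ ⟨δ, rfl, hδ⟩ hne
  exact spansOrdinaryLine_signPt (ne_of_apply_ne signPt hne)
    (iff_of_false (Nat.not_even_iff_odd.mpr hε) (Nat.not_even_iff_odd.mpr hδ))

lemma Collinear'.ncard_inter_eq_one {T : Set (Fin 4 → ℂ)} (hT : Collinear' T) (hsub : T ⊆ pts)
    (hcard : 3 ≤ T.ncard) :
    (T ∩ coordSet).ncard = 1 ∧ (T ∩ evenSet).ncard = 1 ∧ (T ∩ oddSet).ncard = 1 := by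
  have hle {C : Set (Fin 4 → ℂ)} (hC : C.Pairwise (SpansOrdinaryLine ℂ pts)) :
      (T ∩ C).ncard ≤ 1 := by
    have hss := subsingleton_inter_of_pairwise_spansOrdinaryLine hC hsub hcard hT
    exact (Set.ncard_le_one hss.finite).mpr hss
  have hcoord := hle pairwise_spansOrdinaryLine_coordSet
  have heven := hle pairwise_spansOrdinaryLine_evenSet
  have hodd := hle pairwise_spansOrdinaryLine_oddSet
  have hsum := ncard_eq_sum_of_subset_pts hsub
  omega

lemma Collinear'.ncard_le_three {T : Set (Fin 4 → ℂ)} (hT : Collinear' T) (hsub : T ⊆ pts) :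
    T.ncard ≤ 3 := by
  by_contra! hcard
  have hclasses := hT.ncard_inter_eq_one hsub (by omega)
  have hsum := ncard_eq_sum_of_subset_pts hsub
  omega

/-- The sign pattern obtained by changing the sign of the `i`-th coordinate. Since `signPt`
normalizes the leading coordinate to `1`, changing its sign amounts to changing the other three. -/
def flipSign (i : Fin 4) (ε : Fin 3 → Bool) : Fin 3 → Bool :=
  Fin.cases (fun j ↦ !ε j) (fun k ↦ Function.update ε k (!ε k)) i

lemma odd_negCount_flipSign : ∀ (i : Fin 4) {ε : Fin 3 → Bool}, Even (negCount ε) →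
    Odd (negCount (flipSign i ε)) := by
  decide +kernel

lemma signPt_flipSign_zero (ε : Fin 3 → Bool) :
    signPt (flipSign 0 ε) = (2 : ℂ) • Pi.single 0 1 + (-1 : ℂ) • signPt ε := by
  ext c
  cases c using Fin.cases with
  | zero => norm_num [signPt]
  | succ j => cases h : ε j <;> simp [signPt, flipSign, h]

lemma signPt_flipSign_succ (k : Fin 3) (ε : Fin 3 → Bool) :
    signPt (flipSign k.succ ε) =
      (-2 * signPt ε k.succ) • Pi.single k.succ 1 + (1 : ℂ) • signPt ε := by
  ext c
  simp only [Pi.add_apply, Pi.smul_apply, smul_eq_mul]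
  cases c using Fin.cases with
  | zero => simp [signPt]
  | succ j =>
    obtain rfl | hjk := eq_or_ne j k
    · cases h : ε j <;> norm_num [signPt, flipSign, h]
    · simp [signPt, flipSign, hjk]

lemma signPt_flipSign_mem_span (i : Fin 4) (ε : Fin 3 → Bool) :
    signPt (flipSign i ε) ∈ span ℂ {Pi.single i 1, signPt ε} := by
  rw [mem_span_pair]
  cases i using Fin.cases with
  | zero => exact ⟨_, _, (signPt_flipSign_zero ε).symm⟩
  | succ k => exact ⟨_, _, (signPt_flipSign_succ k ε).symm⟩

/-- The points of the configuration on the line through `p` and `q`. -/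
def lineThrough (p q : Fin 4 → ℂ) : Set (Fin 4 → ℂ) := pts ∩ span ℂ {p, q}

lemma collinear'_lineThrough (p q : Fin 4 → ℂ) : Collinear' (lineThrough p q) :=
  (finrank_mono (span_le.mpr Set.inter_subset_right)).trans (finrank_span_pair_le_two p q)

lemma mem_lineThrough_left {p : Fin 4 → ℂ} (hp : p ∈ pts) (q : Fin 4 → ℂ) :
    p ∈ lineThrough p q :=
  ⟨hp, subset_span (Set.mem_insert p _)⟩

lemma mem_lineThrough_right (p : Fin 4 → ℂ) {q : Fin 4 → ℂ} (hq : q ∈ pts) :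
    q ∈ lineThrough p q :=
  ⟨hq, subset_span (Set.mem_insert_of_mem p rfl)⟩

lemma lineThrough_inter_oddSet_nonempty {p q : Fin 4 → ℂ} (hp : p ∈ coordSet)
    (hq : q ∈ evenSet) : (lineThrough p q ∩ oddSet).Nonempty := by
  obtain ⟨i, rfl⟩ := hp
  obtain ⟨ε, rfl, hε⟩ := hq
  have hodd : signPt (flipSign i ε) ∈ oddSet := ⟨_, rfl, odd_negCount_flipSign i hε⟩
  exact ⟨_, ⟨.inr hodd, signPt_flipSign_mem_span i ε⟩, hodd⟩

lemma ncard_lineThrough {p q : Fin 4 → ℂ} (hp : p ∈ coordSet) (hq : q ∈ evenSet) :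
    (lineThrough p q).ncard = 3 := by
  have hsub : lineThrough p q ⊆ pts := Set.inter_subset_left
  have hpos {C : Set (Fin 4 → ℂ)} (hC : (lineThrough p q ∩ C).Nonempty) :
      0 < (lineThrough p q ∩ C).ncard :=
    (Set.ncard_pos ((pts_finite.subset hsub).inter_of_left C)).mpr hC
  have hcoord := hpos ⟨p, mem_lineThrough_left (coordSet_subset_pts hp) q, hp⟩
  have heven := hpos ⟨q, mem_lineThrough_right p (evenSet_subset_pts hq), hq⟩
  have hodd := hpos (lineThrough_inter_oddSet_nonempty hp hq)
  have hsum := ncard_eq_sum_of_subset_pts hsub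
  have hle := (collinear'_lineThrough p q).ncard_le_three hsub
  omega

lemma subsingleton_lineThrough_inter {p q : Fin 4 → ℂ} (hp : p ∈ coordSet) (hq : q ∈ evenSet)
    {C : Set (Fin 4 → ℂ)} (hC : C.Pairwise (SpansOrdinaryLine ℂ pts)) :
    (lineThrough p q ∩ C).Subsingleton :=
  subsingleton_inter_of_pairwise_spansOrdinaryLine hC Set.inter_subset_left
    (ncard_lineThrough hp hq).ge (collinear'_lineThrough p q)

lemma lineThrough_inter_coordSet {p q : Fin 4 → ℂ} (hp : p ∈ coordSet) (hq : q ∈ evenSet) :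
    lineThrough p q ∩ coordSet = {p} :=
  (subsingleton_lineThrough_inter hp hq pairwise_spansOrdinaryLine_coordSet).eq_singleton_of_mem
    ⟨mem_lineThrough_left (coordSet_subset_pts hp) q, hp⟩

lemma lineThrough_inter_evenSet {p q : Fin 4 → ℂ} (hp : p ∈ coordSet) (hq : q ∈ evenSet) :
    lineThrough p q ∩ evenSet = {q} :=
  (subsingleton_lineThrough_inter hp hq pairwise_spansOrdinaryLine_evenSet).eq_singleton_of_mem
    ⟨mem_lineThrough_right p (evenSet_subset_pts hq), hq⟩

lemma Collinear'.exists_eq_lineThrough {T : Set (Fin 4 → ℂ)} (hT : Collinear' T)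
    (hsub : T ⊆ pts) (hcard : T.ncard = 3) :
    ∃ p ∈ coordSet, ∃ q ∈ evenSet, lineThrough p q = T := by
  obtain ⟨hcoord, heven, -⟩ := hT.ncard_inter_eq_one hsub hcard.ge
  obtain ⟨p, hpT, hp⟩ := Set.nonempty_of_ncard_ne_zero (hcoord.trans_ne one_ne_zero)
  obtain ⟨q, hqT, hq⟩ := Set.nonempty_of_ncard_ne_zero (heven.trans_ne one_ne_zero)
  have hind : LinearIndependent ℂ ![p, q] := by
    obtain ⟨i, rfl⟩ := hp
    obtain ⟨ε, rfl, -⟩ := hq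
    exact linearIndependent_single_signPt i ε
  have hle : T ⊆ lineThrough p q := fun z hz ↦
    ⟨hsub hz, mem_span_pair_of_finrank_span_le_two hT hpT hqT hz hind⟩
  refine ⟨p, hp, q, hq, (Set.eq_of_subset_of_ncard_le hle ?_ ?_).symm⟩
  · rw [ncard_lineThrough hp hq, hcard]
  · exact pts_finite.subset Set.inter_subset_left

lemma bijOn_lineThrough : Set.BijOn (fun pq ↦ lineThrough pq.1 pq.2) (coordSet ×ˢ evenSet)
    {T | T ⊆ pts ∧ T.ncard = 3 ∧ Collinear' T} := by
  refine ⟨?_, ?_, ?_⟩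
  · rintro ⟨p, q⟩ ⟨hp, hq⟩
    exact ⟨Set.inter_subset_left, ncard_lineThrough hp hq, collinear'_lineThrough p q⟩
  · rintro ⟨p, q⟩ ⟨hp, hq⟩ ⟨p', q'⟩ ⟨hp', hq'⟩ (heq : lineThrough p q = lineThrough p' q')
    have hpp' : ({p} : Set _) = {p'} := by
      rw [← lineThrough_inter_coordSet hp hq, heq, lineThrough_inter_coordSet hp' hq']
    have hqq' : ({q} : Set _) = {q'} := by
      rw [← lineThrough_inter_evenSet hp hq, heq, lineThrough_inter_evenSet hp' hq']
    exact Prod.ext (Set.singleton_injective hpp') (Set.singleton_injective hqq')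
  · rintro T ⟨hsub, hcard, hT⟩
    obtain ⟨p, hp, q, hq, rfl⟩ := hT.exists_eq_lineThrough hsub hcard
    exact ⟨(p, q), ⟨hp, hq⟩, rfl⟩

theorem statement4 :
    Set.ncard {T : Set (Fin 4 → ℂ) | T ⊆ pts ∧ T.ncard = 3 ∧ Collinear' T} = 16 ∧
    (∀ T : Set (Fin 4 → ℂ), T ⊆ pts → T.ncard = 4 → ¬ Collinear' T) ∧
    (∀ T : Set (Fin 4 → ℂ), T ⊆ pts → T.ncard = 3 → Collinear' T →
      (T ∩ coordSet).ncard = 1 ∧ (T ∩ evenSet).ncard = 1 ∧ (T ∩ oddSet).ncard = 1) := by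
  refine ⟨?_, ?_, ?_⟩
  · rw [← bijOn_lineThrough.image_eq, bijOn_lineThrough.injOn.ncard_image, Set.ncard_prod,
      ncard_coordSet, ncard_evenSet]
  · intro T hsub hcard hT
    have hle := hT.ncard_le_three hsub
    omega
  · intro T hsub hcard hT
    exact hT.ncard_inter_eq_one hsub hcard.ge

end Stmt4
end
end

section
/- Let t₁ ≠ t₂ be two tritangent sets having a line class in common (t₁ ∩ t₂ ≠ ∅). Then there are exactly two reflections mapping t₁ onto t₂ and their roots are perpendicular: there exist roots α and β with α·β = 0 and α ∉ {β, −β}, such that the set of roots γ for which the reflection s_γ maps the set t₁ onto t₂ is exactly {α, −α, β, −β}. -/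
/-!
Statement 5: if two distinct tritangent sets share a line class, then there
are exactly two reflections mapping one onto the other, and the corresponding
roots are perpendicular.
-/

noncomputable section

namespace Stmt5

/-- The bilinear form `x·y = x₀y₀ − x₁y₁ − ⋯ − x₆y₆` on `Λ = ℤ⁷`. -/
def dot (x y : Fin 7 → ℤ) : ℤ := x 0 * y 0 - ∑ i : Fin 6, x i.succ * y i.succ

/-- The canonical class `K = (−3,1,1,1,1,1,1)`. -/
def K : Fin 7 → ℤ := ![-3, 1, 1, 1, 1, 1, 1]

/-- A line class: `e·e = −1` and `e·K = −1`. -/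
def IsLine (e : Fin 7 → ℤ) : Prop := dot e e = -1 ∧ dot e K = -1

/-- A root: `α·α = −2` and `α·K = 0`. -/
def IsRoot (α : Fin 7 → ℤ) : Prop := dot α α = -2 ∧ dot α K = 0

/-- A tritangent set: three line classes summing to `−K`. -/
def IsTritangent (t : Finset (Fin 7 → ℤ)) : Prop :=
  t.card = 3 ∧ (∀ e ∈ t, IsLine e) ∧ ∑ e ∈ t, e = -K

/-- The reflection in the root `α`: `s_α(x) = x + (x·α)α`. -/
def refl (α : Fin 7 → ℤ) (x : Fin 7 → ℤ) : Fin 7 → ℤ := x + dot x α • α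

/-!
If two tritangent sets `{a, b, c}` and `{a, d, e}` share the line `a`, then `b + c = d + e`, so
`b·d + b·e = b·(b + c) = 0`. Since the form is negative definite on `K^⊥`, distinct lines have
nonnegative product, whence `b·d = b·e = 0`. Moreover `b·s_γ(b) = -1 + (b·γ)²`, so `s_γ` cannot
send `b` to `a`, as `b·a = 1` would force `(b·γ)² = 2`; it sends `b` to `d` only for
`γ = ±(b - d)`, and to `e` only for `γ = ±(b - e)`.
-/

theorem dot_comm (x y : Fin 7 → ℤ) : dot x y = dot y x := by
  simp only [dot, mul_comm]

theorem dot_add_left (x y z : Fin 7 → ℤ) : dot (x + y) z = dot x z + dot y z := by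
  simp only [dot, Pi.add_apply, add_mul, Finset.sum_add_distrib]
  ring

theorem dot_smul_left (n : ℤ) (x z : Fin 7 → ℤ) : dot (n • x) z = n * dot x z := by
  simp only [dot, Pi.smul_apply, smul_eq_mul, mul_assoc, ← Finset.mul_sum, mul_sub]

theorem dot_add_right (x y z : Fin 7 → ℤ) : dot x (y + z) = dot x y + dot x z := by
  simp only [dot_comm x, dot_add_left]

theorem dot_smul_right (n : ℤ) (x y : Fin 7 → ℤ) : dot x (n • y) = n * dot x y := by
  simp only [dot_comm x, dot_smul_left]

/-- The intersection form `dot` as a bilinear map, which gives access to the general lemmas on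
linear maps. -/
def dotForm : LinearMap.BilinForm ℤ (Fin 7 → ℤ) :=
  LinearMap.mk₂ ℤ dot dot_add_left dot_smul_left dot_add_right dot_smul_right

theorem dot_neg_left (x y : Fin 7 → ℤ) : dot (-x) y = -dot x y :=
  dotForm.map_neg₂ x y

theorem dot_neg_right (x y : Fin 7 → ℤ) : dot x (-y) = -dot x y :=
  map_neg (dotForm x) y

theorem dot_sub_left (x y z : Fin 7 → ℤ) : dot (x - y) z = dot x z - dot y z :=
  dotForm.map_sub₂ x y z

theorem dot_sub_right (x y z : Fin 7 → ℤ) : dot x (y - z) = dot x y - dot x z :=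
  map_sub (dotForm x) y z

theorem dot_sub_self (x y : Fin 7 → ℤ) :
    dot (x - y) (x - y) = dot x x - 2 * dot x y + dot y y := by
  rw [dot_sub_left, dot_sub_right, dot_sub_right, dot_comm y x]
  ring

theorem notMem_pair_neg_of_dot_eq_zero {x y : Fin 7 → ℤ} (hy : dot y y ≠ 0) (hxy : dot x y = 0) :
    x ∉ ({y, -y} : Set (Fin 7 → ℤ)) := by
  rintro (rfl | rfl)
  · exact hy hxy
  · exact hy (by rwa [dot_neg_left, neg_eq_zero] at hxy)

theorem dot_K_right (x : Fin 7 → ℤ) : dot x K = -3 * x 0 - ∑ i : Fin 6, x i.succ := by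
  simp [dot, K, Fin.sum_univ_succ, mul_comm]

theorem three_mul_dot_self_le {v : Fin 7 → ℤ} (hv : dot v K = 0) :
    3 * dot v v ≤ -∑ i : Fin 6, v i.succ ^ 2 := by
  have sum_eq : ∑ i : Fin 6, v i.succ = -3 * v 0 := by linarith [dot_K_right v]
  have cauchy_schwarz : (∑ i : Fin 6, v i.succ) ^ 2 ≤ 6 * ∑ i : Fin 6, v i.succ ^ 2 := by
    simpa using sq_sum_le_card_mul_sum_sq (s := Finset.univ) (f := fun i : Fin 6 ↦ v i.succ)
  rw [sum_eq] at cauchy_schwarz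
  simp only [dot, ← pow_two]
  linarith

theorem dot_self_neg {v : Fin 7 → ℤ} (hvK : dot v K = 0) (hv : v ≠ 0) : dot v v < 0 := by
  by_contra! hnonneg
  have hsum : ∑ i : Fin 6, v i.succ ^ 2 = 0 :=
    le_antisymm (by linarith [three_mul_dot_self_le hvK])
      (Finset.sum_nonneg fun i _ ↦ sq_nonneg (v i.succ))
  have hsucc (i : Fin 6) : v i.succ = 0 :=
    sq_eq_zero_iff.1 <| (Finset.sum_eq_zero_iff_of_nonneg fun i _ ↦ sq_nonneg (v i.succ)).1 hsum i
      (Finset.mem_univ i)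
  have hzero : v 0 = 0 := by
    simpa [dot_K_right, hsucc] using hvK
  exact hv (funext (Fin.cases hzero hsucc))

theorem refl_neg (γ : Fin 7 → ℤ) : refl (-γ) = refl γ := by
  ext1 x
  rw [refl, refl, dot_neg_right, neg_smul_neg]

theorem refl_eq_self {γ x : Fin 7 → ℤ} (h : dot x γ = 0) : refl γ x = x := by
  rw [refl, h, zero_smul, add_zero]

theorem dot_refl_right (γ x : Fin 7 → ℤ) : dot x (refl γ x) = dot x x + dot x γ ^ 2 := by
  rw [refl, dot_add_right, dot_smul_right, sq]

theorem refl_ne_of_dot_eq_one {b d : Fin 7 → ℤ} (hb : dot b b = -1) (hbd : dot b d = 1)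
    (γ : Fin 7 → ℤ) : refl γ b ≠ d := by
  rintro rfl
  rw [dot_refl_right, hb] at hbd
  have hsq : IsSquare (2 : ℤ) := ⟨dot b γ, by linarith⟩
  exact Int.prime_two.not_isSquare hsq

theorem refl_eq_iff_of_dot_eq_zero {b d : Fin 7 → ℤ} (hb : dot b b = -1) (hbd : dot b d = 0)
    {γ : Fin 7 → ℤ} : refl γ b = d ↔ γ = b - d ∨ γ = -(b - d) := by
  have hsub : refl (b - d) b = d := by
    rw [refl, dot_sub_right, hb, hbd]
    module
  constructor
  · rintro rfl
    rw [dot_refl_right, hb] at hbd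
    have hsq : dot b γ ^ 2 = 1 := by linarith
    rcases sq_eq_one_iff.1 hsq with hγ | hγ
    · right
      rw [refl, hγ]
      module
    · left
      rw [refl, hγ]
      module
  · rintro (rfl | rfl)
    · exact hsub
    · rw [refl_neg, hsub]

theorem IsRoot.neg {γ : Fin 7 → ℤ} (hγ : IsRoot γ) : IsRoot (-γ) :=
  ⟨by rw [dot_neg_left, dot_neg_right, neg_neg, hγ.1], by rw [dot_neg_left, hγ.2, neg_zero]⟩

namespace IsLine

variable {b d : Fin 7 → ℤ}

theorem dot_sub_K_eq_zero (hb : IsLine b) (hd : IsLine d) : dot (b - d) K = 0 := by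
  rw [dot_sub_left, hb.2, hd.2, sub_self]

theorem dot_nonneg (hb : IsLine b) (hd : IsLine d) (hne : b ≠ d) : 0 ≤ dot b d := by
  have hneg := dot_self_neg (hb.dot_sub_K_eq_zero hd) (sub_ne_zero.2 hne)
  rw [dot_sub_self, hb.1, hd.1] at hneg
  linarith

theorem isRoot_sub (hb : IsLine b) (hd : IsLine d) (hbd : dot b d = 0) : IsRoot (b - d) :=
  ⟨by rw [dot_sub_self, hb.1, hd.1, hbd]; norm_num, hb.dot_sub_K_eq_zero hd⟩

end IsLine

/-- A tritangent set with an ordering of its lines, so that they can be named. Distinctness of the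
three lines is not a field because it follows from their products being `1`. -/
structure IsTritangentTriple (a b c : Fin 7 → ℤ) : Prop where
  left : IsLine a
  mid : IsLine b
  right : IsLine c
  sum_eq : a + b + c = -K

theorem IsTritangent.exists_triple {t : Finset (Fin 7 → ℤ)} (ht : IsTritangent t)
    {a : Fin 7 → ℤ} (ha : a ∈ t) : ∃ b c, t = {a, b, c} ∧ IsTritangentTriple a b c := by
  obtain ⟨hcard, hline, hsum⟩ := ht
  obtain ⟨b, c, hbc, herase⟩ : ∃ b c, b ≠ c ∧ t.erase a = {b, c} :=
    Finset.card_eq_two.1 (by rw [Finset.card_erase_of_mem ha, hcard])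
  have ht : t = {a, b, c} := by rw [← herase, Finset.insert_erase ha]
  refine ⟨b, c, ht, hline a ha, hline b (by simp [ht]), hline c (by simp [ht]), ?_⟩
  rw [← hsum, ← Finset.add_sum_erase t _ ha, herase, Finset.sum_pair hbc, add_assoc]

namespace IsTritangentTriple

variable {a b c d e : Fin 7 → ℤ}

theorem swap_right (h : IsTritangentTriple a b c) : IsTritangentTriple a c b :=
  ⟨h.left, h.right, h.mid, by rw [add_right_comm, h.sum_eq]⟩

theorem rotate (h : IsTritangentTriple a b c) : IsTritangentTriple b c a :=
  ⟨h.mid, h.right, h.left, by rw [← h.sum_eq]; abel⟩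

theorem dot_left_mid_add_dot_left_right (h : IsTritangentTriple a b c) : dot a b + dot a c = 2 := by
  have := congrArg (dot a) h.sum_eq
  rw [dot_add_right, dot_add_right, dot_neg_right, h.left.1, h.left.2] at this
  linarith

theorem dot_left_mid_eq_one (h : IsTritangentTriple a b c) : dot a b = 1 := by
  linarith [h.dot_left_mid_add_dot_left_right, h.rotate.dot_left_mid_add_dot_left_right,
    h.rotate.rotate.dot_left_mid_add_dot_left_right, dot_comm a b, dot_comm a c, dot_comm b c]

theorem dot_mid_right_eq_one (h : IsTritangentTriple a b c) : dot b c = 1 :=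
  h.rotate.dot_left_mid_eq_one

theorem add_eq_add (h₁ : IsTritangentTriple a b c) (h₂ : IsTritangentTriple a d e) :
    b + c = d + e := by
  have := h₁.sum_eq.trans h₂.sum_eq.symm
  rwa [add_assoc, add_assoc, add_right_inj] at this

theorem mid_ne_mid (h₁ : IsTritangentTriple a b c) (h₂ : IsTritangentTriple a d e)
    (hne : ({a, b, c} : Finset (Fin 7 → ℤ)) ≠ {a, d, e}) : b ≠ d := by
  rintro rfl
  exact hne (by rw [add_left_cancel (h₁.add_eq_add h₂)])

theorem dot_mid_mid_eq_zero (h₁ : IsTritangentTriple a b c) (h₂ : IsTritangentTriple a d e)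
    (hne : ({a, b, c} : Finset (Fin 7 → ℤ)) ≠ {a, d, e}) : dot b d = 0 := by
  have hbd : 0 ≤ dot b d := h₁.mid.dot_nonneg h₂.mid (h₁.mid_ne_mid h₂ hne)
  have hbe : 0 ≤ dot b e :=
    h₁.mid.dot_nonneg h₂.right (h₁.mid_ne_mid h₂.swap_right (by rwa [Finset.pair_comm e d]))
  have hsum : dot b d + dot b e = 0 := by
    rw [← dot_add_right, ← h₁.add_eq_add h₂, dot_add_right, h₁.mid.1, h₁.dot_mid_right_eq_one]
    norm_num
  linarith

theorem dot_mid_right_eq_zero (h₁ : IsTritangentTriple a b c) (h₂ : IsTritangentTriple a d e)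
    (hne : ({a, b, c} : Finset (Fin 7 → ℤ)) ≠ {a, d, e}) : dot b e = 0 :=
  h₁.dot_mid_mid_eq_zero h₂.swap_right (by rwa [Finset.pair_comm e d])

theorem dot_right_right_eq_zero (h₁ : IsTritangentTriple a b c) (h₂ : IsTritangentTriple a d e)
    (hne : ({a, b, c} : Finset (Fin 7 → ℤ)) ≠ {a, d, e}) : dot c e = 0 :=
  h₁.swap_right.dot_mid_right_eq_zero h₂ (by rwa [Finset.pair_comm c b])

theorem dot_sub_sub_eq_zero (h₁ : IsTritangentTriple a b c) (h₂ : IsTritangentTriple a d e)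
    (hne : ({a, b, c} : Finset (Fin 7 → ℤ)) ≠ {a, d, e}) : dot (b - d) (b - e) = 0 := by
  rw [dot_sub_left, dot_sub_right, dot_sub_right, dot_comm d b, h₁.mid.1, h₂.dot_mid_right_eq_one,
    h₁.dot_mid_mid_eq_zero h₂ hne, h₁.dot_mid_right_eq_zero h₂ hne]
  norm_num

theorem image_refl_sub (h₁ : IsTritangentTriple a b c) (h₂ : IsTritangentTriple a d e)
    (hne : ({a, b, c} : Finset (Fin 7 → ℤ)) ≠ {a, d, e}) :
    ({a, b, c} : Finset (Fin 7 → ℤ)).image (refl (b - d)) = {a, d, e} := by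
  have ha : refl (b - d) a = a :=
    refl_eq_self (by rw [dot_sub_right, h₁.dot_left_mid_eq_one, h₂.dot_left_mid_eq_one, sub_self])
  have hb : refl (b - d) b = d :=
    (refl_eq_iff_of_dot_eq_zero h₁.mid.1 (h₁.dot_mid_mid_eq_zero h₂ hne)).2 (.inl rfl)
  have hc : refl (b - d) c = e := by
    refine (refl_eq_iff_of_dot_eq_zero h₁.right.1 (h₁.dot_right_right_eq_zero h₂ hne)).2 (.inr ?_)
    rw [neg_sub, sub_eq_sub_iff_add_eq_add, h₁.add_eq_add h₂, add_comm]
  rw [Finset.image_insert, Finset.image_insert, Finset.image_singleton, ha, hb, hc]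

theorem image_refl_eq_iff (h₁ : IsTritangentTriple a b c) (h₂ : IsTritangentTriple a d e)
    (hne : ({a, b, c} : Finset (Fin 7 → ℤ)) ≠ {a, d, e}) {γ : Fin 7 → ℤ} :
    ({a, b, c} : Finset (Fin 7 → ℤ)).image (refl γ) = {a, d, e} ↔
      γ ∈ ({b - d, -(b - d), b - e, -(b - e)} : Set (Fin 7 → ℤ)) := by
  have image_sub_mid := h₁.image_refl_sub h₂ hne
  have image_sub_right : ({a, b, c} : Finset (Fin 7 → ℤ)).image (refl (b - e)) = {a, d, e} := by
    rw [Finset.pair_comm d e] at hne ⊢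
    exact h₁.image_refl_sub h₂.swap_right hne
  constructor
  · intro himage
    have hb : refl γ b ∈ ({a, d, e} : Finset (Fin 7 → ℤ)) :=
      himage ▸ Finset.mem_image_of_mem _ (by simp)
    simp only [Finset.mem_insert, Finset.mem_singleton] at hb
    rcases hb with hba | hbd | hbe
    · exact absurd hba (refl_ne_of_dot_eq_one h₁.mid.1 (dot_comm b a ▸ h₁.dot_left_mid_eq_one) γ)
    · have hbd_zero := h₁.dot_mid_mid_eq_zero h₂ hne
      rcases (refl_eq_iff_of_dot_eq_zero h₁.mid.1 hbd_zero).1 hbd with rfl | rfl <;> simp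
    · have hbe_zero := h₁.dot_mid_right_eq_zero h₂ hne
      rcases (refl_eq_iff_of_dot_eq_zero h₁.mid.1 hbe_zero).1 hbe with rfl | rfl <;> simp
  · rintro (rfl | rfl | rfl | rfl)
    · exact image_sub_mid
    · rwa [refl_neg]
    · exact image_sub_right
    · rwa [refl_neg]

end IsTritangentTriple

theorem statement5 (t₁ t₂ : Finset (Fin 7 → ℤ))
    (h₁ : IsTritangent t₁) (h₂ : IsTritangent t₂) (hne : t₁ ≠ t₂)
    (hcommon : (t₁ ∩ t₂).Nonempty) :
    ∃ α β : Fin 7 → ℤ, IsRoot α ∧ IsRoot β ∧ dot α β = 0 ∧ α ∉ ({β, -β} : Set (Fin 7 → ℤ)) ∧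
      {γ : Fin 7 → ℤ | IsRoot γ ∧ t₁.image (refl γ) = t₂} = {α, -α, β, -β} := by
  obtain ⟨a, ha⟩ := hcommon
  obtain ⟨ha₁, ha₂⟩ := Finset.mem_inter.1 ha
  obtain ⟨b, c, rfl, habc⟩ := h₁.exists_triple ha₁
  obtain ⟨d, e, rfl, hade⟩ := h₂.exists_triple ha₂
  have hα : IsRoot (b - d) := habc.mid.isRoot_sub hade.mid (habc.dot_mid_mid_eq_zero hade hne)
  have hβ : IsRoot (b - e) := habc.mid.isRoot_sub hade.right (habc.dot_mid_right_eq_zero hade hne)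
  have horth : dot (b - d) (b - e) = 0 := habc.dot_sub_sub_eq_zero hade hne
  have hβ_ne : dot (b - e) (b - e) ≠ 0 := by simp [hβ.1]
  refine ⟨b - d, b - e, hα, hβ, horth, notMem_pair_neg_of_dot_eq_zero hβ_ne horth, ?_⟩
  ext γ
  rw [Set.mem_ofPred_eq, habc.image_refl_eq_iff hade hne, and_iff_right_iff_imp]
  rintro (rfl | rfl | rfl | rfl)
  exacts [hα, hα.neg, hβ, hβ.neg]

end Stmt5
end
end

section
/- Let t₁, t₂, t₃ be pairwise distinct tritangent sets all containing a common line class. Then there exist four pairwise orthogonal roots α, β, γ, δ, each orthogonal to all three line classes of t₁, such that the reflections s_α and s_β each map the set t₂ onto t₃, and γ and δ are orthogonal to every line class in t₁ ∪ t₂ ∪ t₃ (so that the tritangent t₁ together with the four orthogonal roots α, β, γ, δ in its orthogonal complement determines a cross). -/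
/-!
Statement 6: for three pairwise distinct tritangent sets through a common
line class, there are four pairwise orthogonal roots α, β, γ, δ orthogonal to
all line classes of t₁, with s_α and s_β mapping t₂ onto t₃ and γ, δ
orthogonal to every line class of t₁ ∪ t₂ ∪ t₃ (the cross determined by t₁).
-/

noncomputable section

namespace Stmt6

/-- The bilinear form `x·y = x₀y₀ − x₁y₁ − ⋯ − x₆y₆` on `Λ = ℤ⁷`. -/
def dot (x y : Fin 7 → ℤ) : ℤ := x 0 * y 0 - ∑ i : Fin 6, x i.succ * y i.succ

/-- The canonical class `K = (−3,1,1,1,1,1,1)`. -/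
def K : Fin 7 → ℤ := ![-3, 1, 1, 1, 1, 1, 1]

/-- A line class: `e·e = −1` and `e·K = −1`. -/
def IsLine (e : Fin 7 → ℤ) : Prop := dot e e = -1 ∧ dot e K = -1

/-- A root: `α·α = −2` and `α·K = 0`. -/
def IsRoot (α : Fin 7 → ℤ) : Prop := dot α α = -2 ∧ dot α K = 0

/-- A tritangent set: three line classes summing to `−K`. -/
def IsTritangent (t : Finset (Fin 7 → ℤ)) : Prop :=
  t.card = 3 ∧ (∀ e ∈ t, IsLine e) ∧ ∑ e ∈ t, e = -K

/-- The reflection in the root `α`: `s_α(x) = x + (x·α)α`. -/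
def refl (α : Fin 7 → ℤ) (x : Fin 7 → ℤ) : Fin 7 → ℤ := x + dot x α • α

/-!
The class of a tritangent set meets every line class in `1`, and distinct line classes have
nonnegative product because the form is negative definite on `K^⊥`. Hence, for distinct tritangent
sets `s`, `t` through `l`, a line of `s` other than `l` is orthogonal to the lines of `t` other
than `l`. So the difference of such lines is a root whose reflection exchanges `s` and `t`, and
which is orthogonal to every other tritangent set through `l`. Each line class meets ten others,
paired into five tritangent sets: `α`, `β` come from `t₂`, `t₃`, and `γ`, `δ` from the two
tritangent sets through `l` other than `t₁`, `t₂`, `t₃`.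
-/

section Form

theorem dot_comm (x y : Fin 7 → ℤ) : dot x y = dot y x := by
  simp only [dot, mul_comm]

theorem dot_add_left (x y z : Fin 7 → ℤ) : dot (x + y) z = dot x z + dot y z := by
  simp only [dot, Pi.add_apply, add_mul, Finset.sum_add_distrib]
  ring

theorem dot_neg_left (x z : Fin 7 → ℤ) : dot (-x) z = -dot x z := by
  simp only [dot, Pi.neg_apply, neg_mul, Finset.sum_neg_distrib]
  ring

theorem dot_sub_left (x y z : Fin 7 → ℤ) : dot (x - y) z = dot x z - dot y z := by
  rw [sub_eq_add_neg, dot_add_left, dot_neg_left, ← sub_eq_add_neg]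

theorem dot_neg_right (x z : Fin 7 → ℤ) : dot x (-z) = -dot x z := by
  rw [dot_comm, dot_neg_left, dot_comm]

theorem dot_sub_right (x y z : Fin 7 → ℤ) : dot x (y - z) = dot x y - dot x z := by
  rw [dot_comm, dot_sub_left, dot_comm y, dot_comm z]

theorem dot_sum_right (x : Fin 7 → ℤ) (t : Finset (Fin 7 → ℤ)) :
    dot x (∑ e ∈ t, e) = ∑ e ∈ t, dot x e := by
  simp only [dot, Finset.sum_apply, Finset.mul_sum, Finset.sum_sub_distrib]
  rw [Finset.sum_comm]

theorem dot_K_K : dot K K = 3 := by decide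

theorem dot_K (x : Fin 7 → ℤ) : dot x K = -3 * x 0 - ∑ i : Fin 6, x i.succ := by
  have succ_coord (i : Fin 6) : K i.succ = 1 := by fin_cases i <;> rfl
  simp only [dot, succ_coord, mul_one, show K 0 = -3 from rfl]
  ring

theorem dot_self (x : Fin 7 → ℤ) : dot x x = x 0 ^ 2 - ∑ i : Fin 6, x i.succ ^ 2 := by
  simp only [dot, sq]

theorem sq_sum_succ_le (x : Fin 7 → ℤ) :
    (∑ i : Fin 6, x i.succ) ^ 2 ≤ 6 * ∑ i : Fin 6, x i.succ ^ 2 := by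
  simpa using sq_sum_le_card_mul_sum_sq (s := Finset.univ) (f := fun i : Fin 6 ↦ x i.succ)

theorem eq_zero_of_dot_K_eq_zero_of_dot_self_nonneg {u : Fin 7 → ℤ} (hK : dot u K = 0)
    (hu : 0 ≤ dot u u) : u = 0 := by
  rw [dot_K] at hK
  rw [dot_self] at hu
  have cauchy := sq_sum_succ_le u
  have squares_nonneg : 0 ≤ ∑ i : Fin 6, u i.succ ^ 2 := by positivity
  have sum_eq : ∑ i : Fin 6, u i.succ = -3 * u 0 := by linarith
  rw [sum_eq] at cauchy
  have zeroth : u 0 = 0 := by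
    rw [← sq_eq_zero_iff]
    exact le_antisymm (by linarith) (sq_nonneg _)
  have squares_zero : ∑ i : Fin 6, u i.succ ^ 2 = 0 := by
    rw [zeroth] at hu
    linarith
  have succ_zero (i : Fin 6) : u i.succ = 0 := by
    have := (Finset.sum_eq_zero_iff_of_nonneg fun i _ ↦ sq_nonneg (u (Fin.succ i))).mp
      squares_zero i (Finset.mem_univ i)
    exact sq_eq_zero_iff.mp this
  exact funext (Fin.cases zeroth succ_zero)

theorem IsLine.dot_nonneg {e f : Fin 7 → ℤ} (he : IsLine e) (hf : IsLine f) (hne : e ≠ f) :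
    0 ≤ dot e f := by
  by_contra! hneg
  refine hne (sub_eq_zero.mp (eq_zero_of_dot_K_eq_zero_of_dot_self_nonneg ?_ ?_))
  · rw [dot_sub_left, he.2, hf.2, sub_self]
  · rw [dot_sub_left, dot_sub_right, dot_sub_right, he.1, hf.1, dot_comm f e]
    omega

end Form

section Classification

/-- The class with degree `d`, coordinate `m` at the points of `S` and `0` at the others. For
`m = -1` it is that of a plane curve of degree `d` passing simply through the points of `S`. -/
def curveClass (d m : ℤ) (S : Finset (Fin 6)) : Fin 7 → ℤ :=
  Fin.cons d fun i ↦ if i ∈ S then m else 0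

/-- The 27 lines: exceptional curves, lines through two of the six points, and conics through
five of them. -/
def lines : Finset (Fin 7 → ℤ) :=
  (Finset.powersetCard 1 Finset.univ).image (curveClass 0 1) ∪
    (Finset.powersetCard 2 Finset.univ).image (curveClass 1 (-1)) ∪
      (Finset.powersetCard 5 Finset.univ).image (curveClass 2 (-1))

theorem dot_curveClass_self (d m : ℤ) (S : Finset (Fin 6)) :
    dot (curveClass d m S) (curveClass d m S) = d ^ 2 - S.card * m ^ 2 := by
  simp [dot_self, curveClass, ite_pow]

theorem dot_curveClass_K (d m : ℤ) (S : Finset (Fin 6)) :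
    dot (curveClass d m S) K = -3 * d - S.card * m := by
  simp [dot_K, curveClass]

theorem isLine_of_mem_lines {e : Fin 7 → ℤ} (he : e ∈ lines) : IsLine e := by
  simp only [lines, Finset.mem_union, Finset.mem_image, Finset.mem_powersetCard_univ] at he
  rcases he with (⟨S, hS, rfl⟩ | ⟨S, hS, rfl⟩) | ⟨S, hS, rfl⟩ <;>
    exact ⟨by rw [dot_curveClass_self, hS]; norm_num, by rw [dot_curveClass_K, hS]; norm_num⟩

theorem exists_eq_curveClass_of_sum_sq_eq {x : Fin 7 → ℤ} {m : ℤ} (hm : m ^ 2 = 1)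
    (hx : ∑ i : Fin 6, x i.succ ^ 2 = m * ∑ i : Fin 6, x i.succ) :
    ∃ S : Finset (Fin 6), x = curveClass (x 0) m S := by
  have term_nonneg (i : Fin 6) : 0 ≤ x i.succ ^ 2 - m * x i.succ := by
    have : 0 ≤ m * x i.succ * (m * x i.succ - 1) := by
      rcases le_or_gt (m * x i.succ) 0 with h | h
      · exact mul_nonneg_of_nonpos_of_nonpos h (by omega)
      · exact mul_nonneg h.le (by omega)
    linear_combination this + x i.succ ^ 2 * hm
  have sum_zero : ∑ i : Fin 6, (x i.succ ^ 2 - m * x i.succ) = 0 := by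
    rw [Finset.sum_sub_distrib, ← Finset.mul_sum, hx, sub_self]
  have terms_zero := (Finset.sum_eq_zero_iff_of_nonneg fun i _ ↦ term_nonneg i).mp sum_zero
  have zero_or_m (i : Fin 6) : x i.succ = 0 ∨ x i.succ = m := by
    have : x i.succ * (x i.succ - m) = 0 := by
      linear_combination terms_zero i (Finset.mem_univ i)
    exact (mul_eq_zero.mp this).imp_right sub_eq_zero.mp
  refine ⟨Finset.univ.filter fun i ↦ x i.succ = m, funext (Fin.cases rfl fun i ↦ ?_)⟩
  rcases zero_or_m i with h | h <;> simp [curveClass, h]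

theorem IsLine.degree_eq_zero_or_one_or_two {x : Fin 7 → ℤ} (hx : IsLine x) :
    x 0 = 0 ∨ x 0 = 1 ∨ x 0 = 2 := by
  obtain ⟨hself, hK⟩ := hx
  rw [dot_self] at hself
  rw [dot_K] at hK
  have cauchy := sq_sum_succ_le x
  have sum_eq : ∑ i : Fin 6, x i.succ = 1 - 3 * x 0 := by linarith
  have squares_eq : ∑ i : Fin 6, x i.succ ^ 2 = x 0 ^ 2 + 1 := by linarith
  rw [sum_eq, squares_eq] at cauchy
  have lower : 0 ≤ x 0 := by nlinarith
  have upper : x 0 ≤ 2 := by nlinarith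
  omega

theorem IsLine.exists_eq_curveClass {x : Fin 7 → ℤ} (hx : IsLine x) {d m : ℤ} (hd : x 0 = d)
    (hm : m ^ 2 = 1) (hdm : d ^ 2 + 1 = m * (1 - 3 * d)) :
    ∃ S : Finset (Fin 6), S.card * m = 1 - 3 * d ∧ curveClass d m S = x := by
  subst hd
  have hself := hx.1
  have hK := hx.2
  rw [dot_self] at hself
  rw [dot_K] at hK
  have sum_eq : ∑ i : Fin 6, x i.succ = 1 - 3 * x 0 := by linarith
  obtain ⟨S, hS⟩ := exists_eq_curveClass_of_sum_sq_eq (x := x) hm (by rw [sum_eq]; linarith)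
  have hcard := hx.2
  rw [hS, dot_curveClass_K] at hcard
  exact ⟨S, by linarith, hS.symm⟩

theorem IsLine.mem_lines {x : Fin 7 → ℤ} (hx : IsLine x) : x ∈ lines := by
  simp only [lines, Finset.mem_union, Finset.mem_image, Finset.mem_powersetCard_univ]
  rcases hx.degree_eq_zero_or_one_or_two with hd | hd | hd
  · obtain ⟨S, hcard, hS⟩ := hx.exists_eq_curveClass hd (m := 1) (by norm_num) (by norm_num)
    exact .inl (.inl ⟨S, by omega, hS⟩)
  · obtain ⟨S, hcard, hS⟩ := hx.exists_eq_curveClass hd (m := -1) (by norm_num) (by norm_num)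
    exact .inl (.inr ⟨S, by omega, hS⟩)
  · obtain ⟨S, hcard, hS⟩ := hx.exists_eq_curveClass hd (m := -1) (by norm_num) (by norm_num)
    exact .inr ⟨S, by omega, hS⟩

theorem card_filter_lines_dot_eq_one :
    ∀ l ∈ lines, (lines.filter fun e ↦ dot l e = 1).card = 10 := by
  decide +kernel

end Classification

section Tritangent

/-- The class completing two meeting lines to a tritangent set. -/
def third (x y : Fin 7 → ℤ) : Fin 7 → ℤ := -K - x - y

theorem isLine_third_iff {x y : Fin 7 → ℤ} (hx : IsLine x) (hy : IsLine y) :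
    IsLine (third x y) ↔ dot x y = 1 := by
  obtain ⟨hxx, hxK⟩ := hx
  obtain ⟨hyy, hyK⟩ := hy
  have dot_third_K : dot (third x y) K = -1 := by
    simp only [third, dot_sub_left, dot_neg_left, dot_K_K, hxK, hyK]
    norm_num
  have dot_self_third : dot (third x y) (third x y) = -3 + 2 * dot x y := by
    simp only [third, dot_sub_left, dot_sub_right, dot_neg_left, dot_neg_right, dot_K_K,
      dot_comm K, dot_comm y x, hxx, hxK, hyy, hyK]
    ring
  rw [IsLine, dot_third_K, dot_self_third]
  omega

theorem IsLine.ne_of_dot_eq_one {x y : Fin 7 → ℤ} (hx : IsLine x) (hxy : dot x y = 1) :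
    x ≠ y := by
  rintro rfl
  have := hx.1
  omega

theorem isTritangent_insert_third {x y : Fin 7 → ℤ} (hx : IsLine x) (hy : IsLine y)
    (hxy : dot x y = 1) : IsTritangent {x, y, third x y} := by
  have dot_third_right {z w : Fin 7 → ℤ} (hz : IsLine z) (hzw : dot z w = 1) :
      dot z (third z w) = 1 := by
    simp only [third, dot_sub_right, dot_neg_right, hz.1, hz.2, hzw]
    norm_num
  have third_comm : third x y = third y x := sub_right_comm _ _ _
  have ne_xy : x ≠ y := hx.ne_of_dot_eq_one hxy
  have ne_x_third : x ≠ third x y := hx.ne_of_dot_eq_one (dot_third_right hx hxy)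
  have ne_y_third : y ≠ third x y :=
    third_comm ▸ hy.ne_of_dot_eq_one (dot_third_right hy (dot_comm x y ▸ hxy))
  refine ⟨Finset.card_eq_three.mpr ⟨_, _, _, ne_xy, ne_x_third, ne_y_third, rfl⟩, ?_, ?_⟩
  · simpa using ⟨hx, hy, (isLine_third_iff hx hy).mpr hxy⟩
  · rw [Finset.sum_insert (by simp [ne_xy, ne_x_third]), Finset.sum_pair ne_y_third, third]
    abel

variable {s t : Finset (Fin 7 → ℤ)} {l x y : Fin 7 → ℤ}

theorem IsTritangent.eq_insert_third (ht : IsTritangent t) (hx : x ∈ t) (hy : y ∈ t)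
    (hxy : x ≠ y) : t = {x, y, third x y} := by
  obtain ⟨hcard, -, hsum⟩ := ht
  have hy' : y ∈ t.erase x := Finset.mem_erase.mpr ⟨hxy.symm, hy⟩
  obtain ⟨z, hz⟩ : ∃ z, (t.erase x).erase y = {z} := by
    rw [← Finset.card_eq_one, Finset.card_erase_of_mem hy', Finset.card_erase_of_mem hx, hcard]
  have z_eq : z = third x y := by
    rw [← Finset.add_sum_erase _ _ hx, ← Finset.add_sum_erase _ _ hy', hz,
      Finset.sum_singleton] at hsum
    rw [third, ← hsum]
    abel
  rw [← z_eq, ← hz, Finset.insert_erase hy', Finset.insert_erase hx]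

theorem IsTritangent.dot_eq_one (ht : IsTritangent t) (hx : x ∈ t) (hy : y ∈ t) (hxy : x ≠ y) :
    dot x y = 1 := by
  refine (isLine_third_iff (ht.2.1 x hx) (ht.2.1 y hy)).mp (ht.2.1 _ ?_)
  rw [ht.eq_insert_third hx hy hxy]
  simp

theorem IsTritangent.eq_of_two_mem (hs : IsTritangent s) (ht : IsTritangent t)
    (hxs : x ∈ s) (hys : y ∈ s) (hxt : x ∈ t) (hyt : y ∈ t) (hxy : x ≠ y) : s = t := by
  rw [hs.eq_insert_third hxs hys hxy, ht.eq_insert_third hxt hyt hxy]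

theorem IsTritangent.sum_dot_eq_one (ht : IsTritangent t) (hx : IsLine x) :
    ∑ e ∈ t, dot x e = 1 := by
  rw [← dot_sum_right, ht.2.2, dot_neg_right, hx.2, neg_neg]

/-- The tritangent sets containing `l`, i.e. the tritangent planes through a line. -/
def pencil (l : Fin 7 → ℤ) : Set (Finset (Fin 7 → ℤ)) := {t | IsTritangent t ∧ l ∈ t}

theorem isLine_of_mem_pencil (hs : s ∈ pencil l) (hx : x ∈ s.erase l) : IsLine x :=
  hs.1.2.1 x (Finset.mem_of_mem_erase hx)

theorem dot_eq_one_of_mem_pencil (hs : s ∈ pencil l) (hx : x ∈ s.erase l) : dot x l = 1 :=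
  hs.1.dot_eq_one (Finset.mem_of_mem_erase hx) hs.2 (Finset.ne_of_mem_erase hx)

theorem dot_eq_zero_of_mem_pencil (hs : s ∈ pencil l) (ht : t ∈ pencil l) (hst : s ≠ t)
    (hx : x ∈ s.erase l) (hy : y ∈ t.erase l) : dot x y = 0 := by
  have hxline : IsLine x := isLine_of_mem_pencil hs hx
  have hxt : x ∉ t := fun hxt ↦ hst <| hs.1.eq_of_two_mem ht.1 (Finset.mem_of_mem_erase hx) hs.2
    hxt ht.2 (Finset.ne_of_mem_erase hx)
  have rest_sum : ∑ e ∈ t.erase l, dot x e = 0 := by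
    have := ht.1.sum_dot_eq_one hxline
    rw [← Finset.add_sum_erase _ _ ht.2, dot_eq_one_of_mem_pencil hs hx] at this
    omega
  have rest_nonneg (e) (he : e ∈ t.erase l) : 0 ≤ dot x e :=
    hxline.dot_nonneg (isLine_of_mem_pencil ht he)
      (ne_of_mem_of_not_mem (Finset.mem_of_mem_erase he) hxt).symm
  exact (Finset.sum_eq_zero_iff_of_nonneg rest_nonneg).mp rest_sum y hy

theorem exists_mem_pencil_notMem (hl : IsLine l) {T : Finset (Finset (Fin 7 → ℤ))}
    (hT : ∀ t ∈ T, t ∈ pencil l) (hcard : T.card < 5) : ∃ t ∈ pencil l, t ∉ T := by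
  have card_used : (T.biUnion fun t ↦ t.erase l).card ≤ T.card * 2 :=
    Finset.card_biUnion_le_card_mul _ _ _ fun t ht ↦ by
      rw [Finset.card_erase_of_mem (hT t ht).2, (hT t ht).1.1]
  obtain ⟨e, he, hunused⟩ : ∃ e ∈ lines.filter (fun e ↦ dot l e = 1),
      e ∉ T.biUnion fun t ↦ t.erase l := by
    refine Finset.exists_mem_notMem_of_card_lt_card ?_
    rw [card_filter_lines_dot_eq_one l hl.mem_lines]
    omega
  rw [Finset.mem_filter] at he
  refine ⟨{l, e, third l e},
    ⟨isTritangent_insert_third hl (isLine_of_mem_lines he.1) he.2, by simp⟩, fun ht ↦ hunused ?_⟩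
  exact Finset.mem_biUnion.mpr ⟨_, ht, by simp [(hl.ne_of_dot_eq_one he.2).symm]⟩

theorem exists_two_mem_pencil_ne {t₁ t₂ t₃ : Finset (Fin 7 → ℤ)} (h₁ : t₁ ∈ pencil l)
    (h₂ : t₂ ∈ pencil l) (h₃ : t₃ ∈ pencil l) :
    ∃ t₄ t₅, t₄ ∈ pencil l ∧ t₅ ∈ pencil l ∧ (t₄ ≠ t₁ ∧ t₄ ≠ t₂ ∧ t₄ ≠ t₃) ∧
      (t₅ ≠ t₁ ∧ t₅ ≠ t₂ ∧ t₅ ≠ t₃) ∧ t₄ ≠ t₅ := by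
  have hl : IsLine l := h₁.1.2.1 l h₁.2
  obtain ⟨t₄, h₄, hnew₄⟩ := exists_mem_pencil_notMem hl (T := {t₁, t₂, t₃})
    (by simp [h₁, h₂, h₃]) (Finset.card_le_three.trans_lt (by norm_num))
  obtain ⟨t₅, h₅, hnew₅⟩ := exists_mem_pencil_notMem hl (T := {t₄, t₁, t₂, t₃})
    (by simp [h₁, h₂, h₃, h₄]) (Finset.card_le_four.trans_lt (by norm_num))
  simp only [Finset.mem_insert, Finset.mem_singleton, not_or] at hnew₄ hnew₅
  exact ⟨t₄, t₅, h₄, h₅, hnew₄, hnew₅.2, Ne.symm hnew₅.1⟩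

end Tritangent

section SwapRoot

variable {s t u : Finset (Fin 7 → ℤ)} {l α γ : Fin 7 → ℤ}

/-- The roots whose reflections exchange the members `s` and `t` of the pencil through `l`,
given as differences of a line of `t` and a line of `s`. -/
def IsSwapRoot (l : Fin 7 → ℤ) (s t : Finset (Fin 7 → ℤ)) (α : Fin 7 → ℤ) : Prop :=
  ∃ x ∈ s.erase l, ∃ y ∈ t.erase l, α = y - x

theorem IsSwapRoot.isRoot (hα : IsSwapRoot l s t α) (hs : s ∈ pencil l) (ht : t ∈ pencil l)
    (hst : s ≠ t) : IsRoot α := by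
  obtain ⟨x, hx, y, hy, rfl⟩ := hα
  have hxline := isLine_of_mem_pencil hs hx
  have hyline := isLine_of_mem_pencil ht hy
  have hxy : dot x y = 0 := dot_eq_zero_of_mem_pencil hs ht hst hx hy
  constructor
  · simp only [dot_sub_left, dot_sub_right, dot_comm y x, hxy, hxline.1, hyline.1]
    norm_num
  · rw [dot_sub_left, hxline.2, hyline.2, sub_self]

theorem refl_eq_self {x : Fin 7 → ℤ} (hx : dot x α = 0) : refl α x = x := by
  rw [refl, hx, zero_smul, add_zero]

theorem refl_third (hα : dot α K = 0) (x y : Fin 7 → ℤ) :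
    refl α (third x y) = third (refl α x) (refl α y) := by
  simp only [refl, third, dot_sub_left, dot_neg_left, dot_comm K, hα]
  module

theorem IsSwapRoot.image_refl (hα : IsSwapRoot l s t α) (hs : s ∈ pencil l) (ht : t ∈ pencil l)
    (hst : s ≠ t) : s.image (refl α) = t := by
  have hroot : IsRoot α := hα.isRoot hs ht hst
  obtain ⟨x, hx, y, hy, rfl⟩ := hα
  have refl_l : refl (y - x) l = l := refl_eq_self <| by
    rw [dot_comm, dot_sub_left, dot_eq_one_of_mem_pencil ht hy, dot_eq_one_of_mem_pencil hs hx,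
      sub_self]
  have refl_x : refl (y - x) x = y := by
    rw [refl, dot_sub_right, dot_eq_zero_of_mem_pencil hs ht hst hx hy,
      (isLine_of_mem_pencil hs hx).1]
    module
  rw [Finset.mem_erase] at hx hy
  rw [hs.1.eq_insert_third hs.2 hx.2 hx.1.symm, ht.1.eq_insert_third ht.2 hy.2 hy.1.symm,
    Finset.image_insert, Finset.image_insert, Finset.image_singleton, refl_third hroot.2,
    refl_l, refl_x]

theorem IsSwapRoot.dot_eq_zero_of_mem (hα : IsSwapRoot l s t α) (hs : s ∈ pencil l)
    (ht : t ∈ pencil l) (hu : u ∈ pencil l) (hsu : s ≠ u) (htu : t ≠ u) :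
    ∀ e ∈ u, dot α e = 0 := by
  obtain ⟨x, hx, y, hy, rfl⟩ := hα
  intro e he
  rw [dot_sub_left]
  rcases eq_or_ne e l with rfl | hel
  · rw [dot_eq_one_of_mem_pencil hs hx, dot_eq_one_of_mem_pencil ht hy, sub_self]
  · have he' := Finset.mem_erase.mpr ⟨hel, he⟩
    rw [dot_eq_zero_of_mem_pencil hs hu hsu hx he', dot_eq_zero_of_mem_pencil ht hu htu hy he',
      sub_self]

theorem IsSwapRoot.dot_eq_zero (hα : IsSwapRoot l s t α)
    (hs : ∀ e ∈ s, dot γ e = 0) (ht : ∀ e ∈ t, dot γ e = 0) : dot α γ = 0 := by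
  obtain ⟨x, hx, y, hy, rfl⟩ := hα
  rw [dot_comm, dot_sub_right, hs x (Finset.mem_of_mem_erase hx),
    ht y (Finset.mem_of_mem_erase hy), sub_self]

theorem exists_orthogonal_isSwapRoot (hs : s ∈ pencil l) (ht : t ∈ pencil l) (hst : s ≠ t) :
    ∃ α β, IsSwapRoot l s t α ∧ IsSwapRoot l s t β ∧ dot α β = 0 := by
  have card_two {r : Finset (Fin 7 → ℤ)} (hr : r ∈ pencil l) : (r.erase l).card = 2 := by
    rw [Finset.card_erase_of_mem hr.2, hr.1.1]
  obtain ⟨x, hx⟩ : (s.erase l).Nonempty := Finset.card_pos.mp (by rw [card_two hs]; norm_num)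
  obtain ⟨y, hy, y', hy', hyy'⟩ :=
    Finset.one_lt_card.mp (show 1 < (t.erase l).card by rw [card_two ht]; norm_num)
  refine ⟨y - x, y' - x, ⟨x, hx, y, hy, rfl⟩, ⟨x, hx, y', hy', rfl⟩, ?_⟩
  have dot_yy' : dot y y' = 1 :=
    ht.1.dot_eq_one (Finset.mem_of_mem_erase hy) (Finset.mem_of_mem_erase hy') hyy'
  simp only [dot_sub_left, dot_sub_right, dot_yy', dot_comm y x,
    dot_eq_zero_of_mem_pencil hs ht hst hx hy, dot_eq_zero_of_mem_pencil hs ht hst hx hy',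
    (isLine_of_mem_pencil hs hx).1]
  norm_num

end SwapRoot

theorem statement6 (t₁ t₂ t₃ : Finset (Fin 7 → ℤ))
    (h₁ : IsTritangent t₁) (h₂ : IsTritangent t₂) (h₃ : IsTritangent t₃)
    (h12 : t₁ ≠ t₂) (h13 : t₁ ≠ t₃) (h23 : t₂ ≠ t₃)
    (hcommon : ∃ l, l ∈ t₁ ∧ l ∈ t₂ ∧ l ∈ t₃) :
    ∃ α β γ δ : Fin 7 → ℤ,
      IsRoot α ∧ IsRoot β ∧ IsRoot γ ∧ IsRoot δ ∧
      dot α β = 0 ∧ dot α γ = 0 ∧ dot α δ = 0 ∧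
      dot β γ = 0 ∧ dot β δ = 0 ∧ dot γ δ = 0 ∧
      (∀ e ∈ t₁, dot α e = 0 ∧ dot β e = 0 ∧ dot γ e = 0 ∧ dot δ e = 0) ∧
      t₂.image (refl α) = t₃ ∧ t₂.image (refl β) = t₃ ∧
      (∀ e ∈ t₁ ∪ t₂ ∪ t₃, dot γ e = 0 ∧ dot δ e = 0) := by
  obtain ⟨l, hl₁, hl₂, hl₃⟩ := hcommon
  have hp₁ : t₁ ∈ pencil l := ⟨h₁, hl₁⟩
  have hp₂ : t₂ ∈ pencil l := ⟨h₂, hl₂⟩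
  have hp₃ : t₃ ∈ pencil l := ⟨h₃, hl₃⟩
  obtain ⟨t₄, t₅, hp₄, hp₅, ⟨h41, h42, h43⟩, ⟨h51, h52, h53⟩, h45⟩ :=
    exists_two_mem_pencil_ne hp₁ hp₂ hp₃
  obtain ⟨α, β, hα, hβ, hαβ⟩ := exists_orthogonal_isSwapRoot hp₂ hp₃ h23
  obtain ⟨γ, δ, hγ, hδ, hγδ⟩ := exists_orthogonal_isSwapRoot hp₄ hp₅ h45
  have hα₁ := hα.dot_eq_zero_of_mem hp₂ hp₃ hp₁ h12.symm h13.symm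
  have hβ₁ := hβ.dot_eq_zero_of_mem hp₂ hp₃ hp₁ h12.symm h13.symm
  have hγ₁ := hγ.dot_eq_zero_of_mem hp₄ hp₅ hp₁ h41 h51
  have hγ₂ := hγ.dot_eq_zero_of_mem hp₄ hp₅ hp₂ h42 h52
  have hγ₃ := hγ.dot_eq_zero_of_mem hp₄ hp₅ hp₃ h43 h53
  have hδ₁ := hδ.dot_eq_zero_of_mem hp₄ hp₅ hp₁ h41 h51
  have hδ₂ := hδ.dot_eq_zero_of_mem hp₄ hp₅ hp₂ h42 h52
  have hδ₃ := hδ.dot_eq_zero_of_mem hp₄ hp₅ hp₃ h43 h53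
  refine ⟨α, β, γ, δ, hα.isRoot hp₂ hp₃ h23, hβ.isRoot hp₂ hp₃ h23, hγ.isRoot hp₄ hp₅ h45,
    hδ.isRoot hp₄ hp₅ h45, hαβ, hα.dot_eq_zero hγ₂ hγ₃, hα.dot_eq_zero hδ₂ hδ₃,
    hβ.dot_eq_zero hγ₂ hγ₃, hβ.dot_eq_zero hδ₂ hδ₃, hγδ,
    fun e he ↦ ⟨hα₁ e he, hβ₁ e he, hγ₁ e he, hδ₁ e he⟩,
    hα.image_refl hp₂ hp₃ h23, hβ.image_refl hp₂ hp₃ h23, fun e he ↦ ?_⟩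
  simp only [Finset.mem_union] at he
  rcases he with (he | he) | he
  exacts [⟨hγ₁ e he, hδ₁ e he⟩, ⟨hγ₂ e he, hδ₂ e he⟩, ⟨hγ₃ e he, hδ₃ e he⟩]

end Stmt6
end
end

section
/- For every root α of Λ, the number of indices i ∈ {1,…,6} with α·a_i = 0 equals the number of indices i ∈ {1,…,6} with α·b_i = 0 (this common number is 4 when α is of type ±(a_j−a_i), 3 when α is of type ±(l−a_p−a_q−a_r), and 0 when α = ±(2l−a₁−⋯−a₆)). Consequently, in the sextic relation ∏_{l∈A} F_l = ∏_{l∈B} F_l for the double six A = {a₁,…,a₆}, B = {b₁,…,b₆}, the boundary divisors on both sides agree. -/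
/-!
Statement 7: for every root α, the number of indices i with α·a_i = 0 equals
the number of indices i with α·b_i = 0; the common number is 4 for roots of
type ±(a_j − a_i), 3 for roots of type ±(l − a_p − a_q − a_r), and 0 for
α = ±(2l − a₁ − ⋯ − a₆).
-/

noncomputable section

namespace Stmt7

/-- The bilinear form `x·y = x₀y₀ − x₁y₁ − ⋯ − x₆y₆` on `Λ = ℤ⁷`. -/
def dot (x y : Fin 7 → ℤ) : ℤ := x 0 * y 0 - ∑ i : Fin 6, x i.succ * y i.succ

/-- The canonical class `K = (−3,1,1,1,1,1,1)`. -/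
def K : Fin 7 → ℤ := ![-3, 1, 1, 1, 1, 1, 1]

/-- A root: `α·α = −2` and `α·K = 0`. -/
def IsRoot (α : Fin 7 → ℤ) : Prop := dot α α = -2 ∧ dot α K = 0

/-- The class `l` of a line in the plane. -/
def lv : Fin 7 → ℤ := Pi.single 0 1

/-- The six line classes `a_i` (exceptional divisors). -/
def a (i : Fin 6) : Fin 7 → ℤ := Pi.single i.succ 1

/-- The six line classes `b_i = 2l − (a₁ + ⋯ + a₆) + a_i`. -/
def b (i : Fin 6) : Fin 7 → ℤ := 2 • lv - (∑ j : Fin 6, a j) + a i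

/-- The highest root `h = 2l − a₁ − ⋯ − a₆`. -/
def h : Fin 7 → ℤ := 2 • lv - ∑ j : Fin 6, a j

/-!
Since `b i = h + a i`, for a root `α` the integers `z i = α·a i + α·b i` are congruent modulo `2` to
`c = α·h`, and `α·a i = 0` (resp. `α·b i = 0`) means `z i = c` (resp. `z i = -c`). The two root
equations become `∑ z i = 0` and `∑ (z i)² = 8 - 2 c²`, so `|c| ≤ 2`. If `c = 0` the two conditions
coincide; if `|c| = 1` six odd squares add up to `6`, so every `z i` is `±c`; if `|c| = 2` every
`z i` vanishes. In the last two cases `z` takes values in `{0, c, -c}` and has sum zero, hence takes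
the values `c` and `-c` equally often.
-/

section Counting

variable {ι : Type*}

theorem card_filter_eq_card_filter_eq_neg {R : Type*} [Ring R] [CharZero R] [NoZeroDivisors R]
    [DecidableEq R] {s : Finset ι} {z : ι → R} {c : R} (hsum : ∑ i ∈ s, z i = 0)
    (hz : ∀ i ∈ s, z i = 0 ∨ z i = c ∨ z i = -c) :
    (s.filter fun i => z i = c).card = (s.filter fun i => z i = -c).card := by
  obtain rfl | hc := eq_or_ne c 0
  · simp only [neg_zero]
  have hc_neg : c ≠ -c := fun hcc => hc (self_eq_neg.mp hcc)
  have z_eq : ∀ i ∈ s, z i =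
      c * ((if z i = c then 1 else 0) - (if z i = -c then 1 else 0)) := by
    intro i hi
    rcases hz i hi with hzi | hzi | hzi <;> simp [hzi, hc, hc.symm, hc_neg, hc_neg.symm]
  have sum_eq : ∑ i ∈ s, z i =
      c * ((s.filter fun i => z i = c).card - (s.filter fun i => z i = -c).card) := by
    rw [Finset.sum_congr rfl z_eq, ← Finset.mul_sum, Finset.sum_sub_distrib, Finset.sum_boole,
      Finset.sum_boole]
  have card_sub_card := (mul_eq_zero.mp (sum_eq.symm.trans hsum)).resolve_left hc
  exact_mod_cast sub_eq_zero.mp card_sub_card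

theorem sq_eq_one_of_odd_of_sum_sq_le_card {s : Finset ι} {z : ι → ℤ}
    (hodd : ∀ i ∈ s, Odd (z i)) (hsum : ∑ i ∈ s, z i ^ 2 ≤ s.card) {i : ι} (hi : i ∈ s) :
    z i ^ 2 = 1 := by
  have ne_zero : ∀ j ∈ s, z j ≠ 0 := fun j hj hzj =>
    Int.not_odd_zero (hzj ▸ hodd j hj)
  have one_le_sq : ∀ j ∈ s, 1 ≤ z j ^ 2 := fun j hj =>
    one_le_sq_iff_one_le_abs _ |>.mpr (Int.one_le_abs (ne_zero j hj))
  have sum_one_eq : ∑ _ ∈ s, (1 : ℤ) = ∑ j ∈ s, z j ^ 2 :=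
    le_antisymm (Finset.sum_le_sum one_le_sq) (by simpa using hsum)
  exact ((Finset.sum_eq_sum_iff_of_le one_le_sq).mp sum_one_eq i hi).symm

end Counting

section Coordinates

theorem a_zero (i : Fin 6) : a i 0 = 0 := by
  simp [a, (Fin.succ_ne_zero i).symm]

theorem a_succ (i k : Fin 6) : a i k.succ = if k = i then 1 else 0 := by
  simp [a, Pi.single_apply]

theorem lv_succ (k : Fin 6) : lv k.succ = 0 := by
  simp [lv]

theorem K_zero : K 0 = -3 := rfl

theorem K_succ (k : Fin 6) : K k.succ = 1 := by
  revert k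
  decide

theorem h_zero : h 0 = 2 := by
  simp [h, lv, a_zero]

theorem h_succ (k : Fin 6) : h k.succ = -1 := by
  simp [h, lv_succ, a_succ]

theorem b_eq_h_add_a (i : Fin 6) : b i = h + a i := rfl

end Coordinates

section Dot

variable (x y z : Fin 7 → ℤ) (i : Fin 6)

theorem dot_add_right : dot x (y + z) = dot x y + dot x z := by
  simp only [dot, Pi.add_apply, mul_add, Finset.sum_add_distrib]
  ring

theorem dot_neg_left : dot (-x) y = -dot x y := by
  simp only [dot, Pi.neg_apply, neg_mul, Finset.sum_neg_distrib]
  ring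

theorem dot_K : dot x K = -3 * x 0 - ∑ i : Fin 6, x i.succ := by
  simp only [dot, K_zero, K_succ, mul_one, mul_comm (x 0)]

theorem dot_a : dot x (a i) = -x i.succ := by
  simp [dot, a_zero, a_succ]

theorem dot_h : dot x h = 2 * x 0 + ∑ i : Fin 6, x i.succ := by
  simp [dot, h_zero, h_succ, mul_comm]

theorem dot_b : dot x (b i) = dot x h + dot x (a i) := by
  rw [b_eq_h_add_a, dot_add_right]

theorem dot_a_add_dot_b : dot x (a i) + dot x (b i) = 2 * dot x (a i) + dot x h := by
  rw [dot_b]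
  ring

end Dot

section OrthogonalToK

variable {x : Fin 7 → ℤ}

theorem dot_h_eq_neg_apply_zero (hK : dot x K = 0) : dot x h = -x 0 := by
  linarith [dot_h x, dot_K x]

theorem sum_dot_a (hK : dot x K = 0) : ∑ i, dot x (a i) = -3 * dot x h := by
  simp only [dot_a, Finset.sum_neg_distrib]
  linarith [dot_K x, dot_h_eq_neg_apply_zero hK]

theorem sum_dot_a_sq (hK : dot x K = 0) : ∑ i, dot x (a i) ^ 2 = dot x h ^ 2 - dot x x := by
  simp only [dot_a, neg_sq, dot_h_eq_neg_apply_zero hK]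
  simp only [dot, sq, sub_sub_cancel]

theorem sum_dot_a_add_dot_b (hK : dot x K = 0) : ∑ i, (dot x (a i) + dot x (b i)) = 0 := by
  simp only [dot_a_add_dot_b, Finset.sum_add_distrib, ← Finset.mul_sum, sum_dot_a hK,
    Finset.sum_const, Finset.card_univ, Fintype.card_fin]
  ring

theorem sum_dot_a_add_dot_b_sq (hK : dot x K = 0) :
    ∑ i, (dot x (a i) + dot x (b i)) ^ 2 = -4 * dot x x - 2 * dot x h ^ 2 := by
  calc ∑ i, (dot x (a i) + dot x (b i)) ^ 2
      = ∑ i, (4 * dot x (a i) ^ 2 + 4 * dot x h * dot x (a i) + dot x h ^ 2) :=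
        Finset.sum_congr rfl fun i _ => by rw [dot_a_add_dot_b]; ring
    _ = 4 * ∑ i, dot x (a i) ^ 2 + 4 * dot x h * ∑ i, dot x (a i) + 6 * dot x h ^ 2 := by
        simp [Finset.sum_add_distrib, Finset.mul_sum]
    _ = -4 * dot x x - 2 * dot x h ^ 2 := by
        rw [sum_dot_a_sq hK, sum_dot_a hK]
        ring

end OrthogonalToK

namespace IsRoot

variable {α : Fin 7 → ℤ}

theorem sum_dot_a_add_dot_b_sq (hα : IsRoot α) :
    ∑ i, (dot α (a i) + dot α (b i)) ^ 2 = 8 - 2 * dot α h ^ 2 := by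
  rw [Stmt7.sum_dot_a_add_dot_b_sq hα.2, hα.1]
  norm_num

theorem abs_dot_h_le_two (hα : IsRoot α) : |dot α h| ≤ 2 := by
  have sum_nonneg : 0 ≤ ∑ i, (dot α (a i) + dot α (b i)) ^ 2 :=
    Finset.sum_nonneg fun i _ => sq_nonneg _
  rw [hα.sum_dot_a_add_dot_b_sq] at sum_nonneg
  exact abs_le_of_sq_le_sq (by linarith) (by norm_num)

theorem dot_a_add_dot_b_eq_or_eq_neg_of_abs_dot_h_eq_one (hα : IsRoot α)
    (hh : |dot α h| = 1) (i : Fin 6) :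
    dot α (a i) + dot α (b i) = dot α h ∨ dot α (a i) + dot α (b i) = -dot α h := by
  have sq_one : dot α h ^ 2 = 1 := by rw [← sq_abs, hh, one_pow]
  have odd_dot_h : Odd (dot α h) := (Int.odd_pow' two_ne_zero).mp (sq_one ▸ odd_one)
  have odd_add : ∀ j ∈ Finset.univ, Odd (dot α (a j) + dot α (b j)) := by
    intro j _
    rw [dot_a_add_dot_b]
    exact (even_two_mul _).add_odd odd_dot_h
  have sum_le_card : ∑ j, (dot α (a j) + dot α (b j)) ^ 2 ≤
      (Finset.univ : Finset (Fin 6)).card := by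
    simp [hα.sum_dot_a_add_dot_b_sq, sq_one]
  rw [← sq_eq_sq_iff_eq_or_eq_neg, sq_one]
  exact sq_eq_one_of_odd_of_sum_sq_le_card odd_add sum_le_card (Finset.mem_univ i)

theorem dot_a_add_dot_b_eq_zero_of_abs_dot_h_eq_two (hα : IsRoot α)
    (hh : |dot α h| = 2) (i : Fin 6) :
    dot α (a i) + dot α (b i) = 0 := by
  have sum_sq_eq_zero : ∑ j, (dot α (a j) + dot α (b j)) ^ 2 = 0 := by
    rw [hα.sum_dot_a_add_dot_b_sq, ← sq_abs, hh]
    norm_num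
  have sq_eq_zero := (Finset.sum_eq_zero_iff_of_nonneg fun j _ => sq_nonneg _).mp sum_sq_eq_zero
  exact pow_eq_zero_iff two_ne_zero |>.mp (sq_eq_zero i (Finset.mem_univ i))

theorem dot_a_add_dot_b_eq_zero_or_eq_or_eq_neg (hα : IsRoot α)
    (hh : dot α h ≠ 0) (i : Fin 6) :
    dot α (a i) + dot α (b i) = 0 ∨ dot α (a i) + dot α (b i) = dot α h ∨
      dot α (a i) + dot α (b i) = -dot α h := by
  have abs_eq : |dot α h| = 1 ∨ |dot α h| = 2 := by
    have abs_pos : 0 < |dot α h| := abs_pos.mpr hh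
    have abs_le := hα.abs_dot_h_le_two
    omega
  rcases abs_eq with abs_eq_one | abs_eq_two
  · exact Or.inr (hα.dot_a_add_dot_b_eq_or_eq_neg_of_abs_dot_h_eq_one abs_eq_one i)
  · exact Or.inl (hα.dot_a_add_dot_b_eq_zero_of_abs_dot_h_eq_two abs_eq_two i)

theorem card_dot_a_eq_zero_eq_card_dot_b_eq_zero (hα : IsRoot α) :
    (Finset.univ.filter fun i : Fin 6 => dot α (a i) = 0).card =
      (Finset.univ.filter fun i : Fin 6 => dot α (b i) = 0).card := by
  obtain hh | hh := eq_or_ne (dot α h) 0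
  · simp only [dot_b, hh, zero_add]
  have dot_a_iff : ∀ i, dot α (a i) = 0 ↔ dot α (a i) + dot α (b i) = dot α h := by
    intro i
    rw [dot_b]
    omega
  have dot_b_iff : ∀ i, dot α (b i) = 0 ↔ dot α (a i) + dot α (b i) = -dot α h := by
    intro i
    rw [dot_b]
    omega
  simp only [dot_b_iff, dot_a_iff]
  exact card_filter_eq_card_filter_eq_neg (sum_dot_a_add_dot_b hα.2)
    fun i _ => hα.dot_a_add_dot_b_eq_zero_or_eq_or_eq_neg hh i

end IsRoot

section RootTypes

theorem filter_dot_a_sub_a_eq_zero {i j : Fin 6} (hij : i ≠ j) :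
    (Finset.univ.filter fun k : Fin 6 => dot (a j - a i) (a k) = 0) = {i, j}ᶜ := by
  ext k
  by_cases hki : k = i <;> by_cases hkj : k = j <;> simp_all [dot_a, a_succ]

theorem filter_dot_lv_sub_a_eq_zero (p q r : Fin 6) :
    (Finset.univ.filter fun k : Fin 6 => dot (lv - a p - a q - a r) (a k) = 0) = {p, q, r}ᶜ := by
  ext k
  simp only [dot_a, Pi.sub_apply, lv_succ, a_succ, Finset.mem_filter, Finset.mem_univ, true_and,
    Finset.mem_compl, Finset.mem_insert, Finset.mem_singleton]
  split_ifs <;> simp_all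

theorem dot_h_a (k : Fin 6) : dot h (a k) = 1 := by
  rw [dot_a, h_succ, neg_neg]

end RootTypes

theorem statement7 (α : Fin 7 → ℤ) (hα : IsRoot α) :
    (Finset.univ.filter fun i : Fin 6 => dot α (a i) = 0).card =
      (Finset.univ.filter fun i : Fin 6 => dot α (b i) = 0).card ∧
    ((∃ i j : Fin 6, i ≠ j ∧ α = a j - a i) →
      (Finset.univ.filter fun i : Fin 6 => dot α (a i) = 0).card = 4) ∧
    ((∃ p q r : Fin 6, p ≠ q ∧ p ≠ r ∧ q ≠ r ∧
        (α = lv - a p - a q - a r ∨ α = -(lv - a p - a q - a r))) →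
      (Finset.univ.filter fun i : Fin 6 => dot α (a i) = 0).card = 3) ∧
    ((α = h ∨ α = -h) →
      (Finset.univ.filter fun i : Fin 6 => dot α (a i) = 0).card = 0) := by
  refine ⟨hα.card_dot_a_eq_zero_eq_card_dot_b_eq_zero, ?_, ?_, ?_⟩
  · rintro ⟨i, j, hij, rfl⟩
    rw [filter_dot_a_sub_a_eq_zero hij, Finset.card_compl, Finset.card_pair hij, Fintype.card_fin]
  · rintro ⟨p, q, r, hpq, hpr, hqr, rfl | rfl⟩ <;>
      simp only [dot_neg_left, neg_eq_zero, filter_dot_lv_sub_a_eq_zero, Finset.card_compl,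
        Finset.card_eq_three.mpr ⟨p, q, r, hpq, hpr, hqr, rfl⟩, Fintype.card_fin]
  · rintro (rfl | rfl) <;> simp [dot_neg_left, dot_h_a]

end Stmt7
end
end
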